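/- Let D ⊂ ℙ²(ℂ) be a plane projective curve such that π₁(ℙ²(ℂ) ∖ D) ≅ 𝔽_r * (ℤ/pℤ) * (ℤ/qℤ) with r ≥ 0, p, q ≥ 1 and gcd(p,q) = 1. Then there exists a connected covering space E → ℙ²(ℂ) ∖ D of degree pq such that π₁(E) is a free group of rank pqr + (p−1)(q−1) and the topological Euler characteristic of E equals pq·(3 − χ(D)). Consequently, π_i(ℙ²(ℂ) ∖ D) ≅ π_i(E) for all i ≥ 2. -/

import Mathlib

/-!
The theorem has three independent ingredients.

*Group theory.* The covering space is the one belonging to the kernel of the projection `toProd` of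
`𝔽_r * ℤ/pℤ * ℤ/qℤ` onto `ℤ/pℤ × ℤ/qℤ`. This kernel is free on the conjugates of the `r` free
generators by the `pq` elements `ab` of a transversal, together with the commutators of the
nontrivial elements of the two cyclic groups, which gives the rank `pqr + (p − 1)(q − 1)`
(`nonempty_ker_mulEquiv`). An inverse of the map from the abstract free group to the kernel is
provided by Reidemeister–Schreier rewriting, which is a homomorphism `coc` from the free product to
a wreath product.

*Covering spaces.* A surjection from the fundamental group of a path connected, locally simply
connected space to a group `G` extends to the fundamental groupoid, and its values along short paths
are the transition functions of a covering space with fibre `G` whose fundamental group is the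
kernel (`exists_covering_of_hom`). The complement of the curve satisfies the assumptions: two of its
points lie on a line that meets the curve in finitely many points (`pathConnectedSpace_compl`), and
balls in affine charts are simply connected (`exists_small_subset`). The higher homotopy groups do
not change because spheres and their homotopies lift (`nonempty_homotopyGroup_mulEquiv`).

*Euler characteristics.* It remains to show `χ(E) + m χ(D) = 3m` for a covering `E` of degree `m` of
the complement of `D` (`eulerChar_covering`). No triangulation is used: the pair of the part of `E`
over `W` and the part of `D` in `W`, for `W` open in `ℙ²(ℂ)`, is said to be `Good` with value `c` if
their Euler characteristics `a` and `b` are defined and satisfy `a + m b = m c`. By the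
Mayer–Vietoris principle (`Cplx.HasChi.sup` and small simplices), `c` is additive in `W`, and `c = 1`
if `W` is a convex subset of a chart that avoids `D`, since a contraction of `W` lifts to the
covering (`Wdr.hasChi`). Projection from a point off the curve makes `D` the set of zeros of a family
of monic polynomials `G t` of degree `d`, and all but finitely many `G t` have `d` different zeros
(`zfam_finite`).

* Where `G t` has `d` different zeros, the complement of `D` is a family of planes without `d`
  points. Such a plane is a union of two parts, points that can go up and points that can go down
  without meeting an obstacle, which intersect in `d + 1` strips. All these are contractible, so the
  covering has Euler characteristic `2m − (d + 1)m = m(1 − d)` (`Obst.hasChi`). The curve itself is a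
  covering with `d` sheets, and `c = m(1 − d)/m + d = 1`. These computations are local in the
  parameter `t`; a local-to-global principle (`Inv.of_local_aux`) extends them to convex
  sets of parameters, and by cutting the plane one finds `c = 0` for a punctured set of parameters.
* Around a parameter `b` where zeros collide, the curve retracts onto its points over `b`
  (`relAcyclic_cur_branch`), and the covering is compared with the covering of the complement of
  small discs around these points; again `c = 1` (`good_branch`).

Hence `c = 1` for the plane of a chart, `c = 0` for the intersection of two such planes and `c = 2`
for their union, which is `ℙ²(ℂ)` without the centre of projection. A ball around the centre
contributes `1` and intersects this union in a punctured ball, which contributes `0`; the total is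
`3` (`good_univ`).
-/

/-!
Statement 7: If `D ⊂ ℙ²(ℂ)` is a plane projective curve with
`π₁(ℙ²(ℂ) ∖ D) ≅ 𝔽_r * ℤ/pℤ * ℤ/qℤ` (`gcd(p,q) = 1`), then the complement has a connected
degree-`pq` covering space with free fundamental group of rank `pqr + (p−1)(q−1)` and Euler
characteristic `pq(3 − χ(D))`, whose higher homotopy groups agree with those of the
complement.
-/

open CategoryTheory

noncomputable section

/-- The complex projective plane `ℙ²(ℂ)`. -/
abbrev ProjPlane : Type := Projectivization ℂ (Fin 3 → ℂ)

instance : TopologicalSpace ProjPlane :=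
  inferInstanceAs (TopologicalSpace (Quotient _))

/-- The zero locus in `ℙ²(ℂ)` of a homogeneous polynomial `f ∈ ℂ[x,y,z]`. -/
def curveSet (f : MvPolynomial (Fin 3) ℂ) : Set ProjPlane :=
  {p | ∀ v : Fin 3 → ℂ, ∀ hv : v ≠ 0, Projectivization.mk ℂ v hv = p → MvPolynomial.eval v f = 0}

/-- The singular chain complex of a topological space with integer coefficients: the
alternating face map complex of the levelwise free `ℤ`-module on the singular simplicial
set of the space. -/
def singularChainComplex (X : Type) [TopologicalSpace X] :
    ChainComplex (ModuleCat ℤ) ℕ :=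
  (AlgebraicTopology.alternatingFaceMapComplex (ModuleCat ℤ)).obj
    (((SimplicialObject.whiskering _ _).obj (ModuleCat.free ℤ)).obj
      (TopCat.toSSet.obj (TopCat.of X)))

/-- The `i`-th singular homology group of a topological space, with integer coefficients. -/
def singularHomology (X : Type) [TopologicalSpace X] (i : ℕ) : ModuleCat ℤ :=
  (singularChainComplex X).homology i

/-- The topological Euler characteristic: the alternating sum of the ranks of the singular
homology groups with integer coefficients. -/
def eulerChar (X : Type) [TopologicalSpace X] : ℤ :=
  ∑ᶠ i : ℕ, (-1 : ℤ) ^ i * (Module.finrank ℤ (singularHomology X i))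

/-- The Euler characteristic of a subset of a topological space (with the subspace
topology). -/
def eulerCharSet {X : Type} [TopologicalSpace X] (A : Set X) : ℤ :=
  eulerChar A

/-- The free product `𝔽_r * ℤ/pℤ * ℤ/qℤ` of the free group of rank `r` and the cyclic groups
of orders `p` and `q`. -/
abbrev FreeProdFreeCyclicCyclic (r p q : ℕ) : Type :=
  Monoid.Coprod (Monoid.Coprod (FreeGroup (Fin r)) (Multiplicative (ZMod p)))
    (Multiplicative (ZMod q))

namespace PlaneCurve

section

/-! ### Relative ranks and Euler characteristics of subcomplexes -/

section RelRank

variable {M N : Type} [AddCommGroup M] [AddCommGroup N]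

lemma mem_submoduleOf_iff {P Q : Submodule ℤ M} {x : Q} : x ∈ P.submoduleOf Q ↔ (x : M) ∈ P :=
  Iff.rfl

/-- The rank of `Q / P` for submodules `P ≤ Q` of an abelian group (meaningful for `P ≤ Q`). -/
def relRank (P Q : Submodule ℤ M) : Cardinal :=
  Module.rank ℤ (Q ⧸ P.submoduleOf Q)

lemma relRank_eq_of_surjective {P Q : Submodule ℤ M} {P' Q' : Submodule ℤ N}
    (f : Q →ₗ[ℤ] (Q' ⧸ P'.submoduleOf Q')) (hf : Function.Surjective f)
    (hk : LinearMap.ker f = P.submoduleOf Q) : relRank P Q = relRank P' Q' := by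
  unfold relRank
  rw [← hk]
  exact (f.quotKerEquivOfSurjective hf).rank_eq

/-- The rank of a quotient is preserved by a linear map whose kernel, inside the larger submodule, lies in
the smaller one. -/
lemma relRank_map (f : M →ₗ[ℤ] N) {P Q : Submodule ℤ M} (hPQ : P ≤ Q)
    (hk : LinearMap.ker f ⊓ Q ≤ P) : relRank P Q = relRank (P.map f) (Q.map f) := by
  refine relRank_eq_of_surjective
    ((Submodule.mkQ _).comp ((f.domRestrict Q).codRestrict (Q.map f)
      (fun x => Submodule.mem_map_of_mem x.2))) ?_ ?_
  · refine (Submodule.mkQ_surjective _).comp ?_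
    rintro ⟨y, x, hx, rfl⟩
    exact ⟨⟨x, hx⟩, rfl⟩
  · ext ⟨x, hx⟩
    simp only [LinearMap.mem_ker, LinearMap.comp_apply, Submodule.mkQ_apply,
      Submodule.Quotient.mk_eq_zero, mem_submoduleOf_iff]
    constructor
    · rintro ⟨p, hp, hpx⟩
      have h1 : x - p ∈ P := hk ⟨by
        have hpx' : f p = f x := hpx
        simp [LinearMap.mem_ker, hpx'], Q.sub_mem hx (hPQ hp)⟩
      simpa using P.add_mem h1 hp
    · intro h
      exact ⟨x, h, rfl⟩

lemma relRank_inf_sup (P Q : Submodule ℤ M) : relRank (P ⊓ Q) Q = relRank P (P ⊔ Q) := by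
  refine relRank_eq_of_surjective
    ((Submodule.mkQ _).comp (Submodule.inclusion (le_sup_right : Q ≤ P ⊔ Q))) ?_ ?_
  · intro y
    obtain ⟨⟨y, hy⟩, rfl⟩ := Submodule.mkQ_surjective _ y
    obtain ⟨p, hp, q, hq, rfl⟩ := Submodule.mem_sup.1 hy
    refine ⟨⟨q, hq⟩, ?_⟩
    rw [LinearMap.comp_apply, Submodule.mkQ_apply, Submodule.mkQ_apply, Submodule.Quotient.eq]
    simp [mem_submoduleOf_iff, hp]
  · ext ⟨x, hx⟩
    simp [mem_submoduleOf_iff, hx]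

/-- Ranks of successive quotients add up. -/
lemma relRank_add {P Q R : Submodule ℤ M} (hPQ : P ≤ Q) (hQR : Q ≤ R) :
    relRank P R = relRank P Q + relRank Q R := by
  let g : (R ⧸ P.submoduleOf R) →ₗ[ℤ] (R ⧸ Q.submoduleOf R) :=
    Submodule.factor (Submodule.comap_mono hPQ)
  have hg : Function.Surjective g := Submodule.factor_surjective _
  have h := rank_quotient_add_rank_of_isDomain (R := ℤ) (LinearMap.ker g)
  have h1 : Module.rank ℤ ((R ⧸ P.submoduleOf R) ⧸ LinearMap.ker g) = relRank Q R :=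
    (g.quotKerEquivOfSurjective hg).rank_eq
  have h2 : relRank P Q = Module.rank ℤ (LinearMap.ker g) := by
    let f : Q →ₗ[ℤ] LinearMap.ker g :=
      ((Submodule.mkQ _).comp (Submodule.inclusion hQR)).codRestrict _ (by
        rintro ⟨x, hx⟩
        change (Submodule.Quotient.mk (⟨x, hQR hx⟩ : R) : R ⧸ Q.submoduleOf R) = 0
        exact (Submodule.Quotient.mk_eq_zero _).2 hx)
    have hf : Function.Surjective f := by
      rintro ⟨y, hy⟩
      obtain ⟨⟨y, hyR⟩, rfl⟩ := Submodule.mkQ_surjective _ y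
      change (Submodule.Quotient.mk (⟨y, hyR⟩ : R) : R ⧸ Q.submoduleOf R) = 0 at hy
      exact ⟨⟨y, (Submodule.Quotient.mk_eq_zero (Q.submoduleOf R)).1 hy⟩, rfl⟩
    have hk : LinearMap.ker f = P.submoduleOf Q := by
      ext ⟨x, hx⟩
      rw [LinearMap.mem_ker, Subtype.ext_iff]
      simp [f, mem_submoduleOf_iff]
    unfold relRank
    rw [← hk]
    exact (f.quotKerEquivOfSurjective hf).rank_eq
  rw [h2, ← h1, add_comm, h]
  rfl

lemma relRank_self (P : Submodule ℤ M) : relRank P P = 0 := by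
  unfold relRank
  have : Subsingleton (P ⧸ P.submoduleOf P) := by
    rw [Submodule.submoduleOf_self]
    infer_instance
  exact rank_subsingleton' ℤ _

lemma relRank_prod (P Q : Submodule ℤ M) (P' Q' : Submodule ℤ N) (h : P ≤ Q) (h' : P' ≤ Q') :
    relRank (P.prod P') (Q.prod Q') = relRank P Q + relRank P' Q' := by
  rw [relRank_add (Q := Q.prod P')
    (Submodule.prod_mono h le_rfl) (Submodule.prod_mono le_rfl h')]
  have aux : ∀ x : M × N, x ∈ Q.prod P' → x.1 ∈ Q := fun x hx => (Submodule.mem_prod.1 hx).1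
  have aux' : ∀ x : M × N, x ∈ Q.prod Q' → x.2 ∈ Q' := fun x hx => (Submodule.mem_prod.1 hx).2
  congr 1
  · refine relRank_eq_of_surjective ((Submodule.mkQ _).comp
      (((LinearMap.fst ℤ M N).domRestrict _).codRestrict Q (fun x => aux x x.2))) ?_ ?_
    · refine (Submodule.mkQ_surjective _).comp ?_
      rintro ⟨y, hy⟩
      exact ⟨⟨(y, 0), Submodule.mem_prod.2 ⟨hy, P'.zero_mem⟩⟩, rfl⟩
    · ext ⟨⟨x, y⟩, hx⟩
      have := (Submodule.mem_prod.1 hx).2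
      simp only at this
      simp only [LinearMap.mem_ker, LinearMap.comp_apply, Submodule.mkQ_apply,
        Submodule.Quotient.mk_eq_zero, mem_submoduleOf_iff, Submodule.mem_prod, this, and_true]
      rfl
  · refine relRank_eq_of_surjective ((Submodule.mkQ _).comp
      (((LinearMap.snd ℤ M N).domRestrict _).codRestrict Q' (fun x => aux' x x.2))) ?_ ?_
    · refine (Submodule.mkQ_surjective _).comp ?_
      rintro ⟨y, hy⟩
      exact ⟨⟨(0, y), Submodule.mem_prod.2 ⟨Q.zero_mem, hy⟩⟩, rfl⟩
    · ext ⟨⟨x, y⟩, hx⟩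
      have := (Submodule.mem_prod.1 hx).1
      simp only at this
      simp only [LinearMap.mem_ker, LinearMap.comp_apply, Submodule.mkQ_apply,
        Submodule.Quotient.mk_eq_zero, mem_submoduleOf_iff, Submodule.mem_prod, this, true_and]
      rfl

end RelRank

/-- A nonnegatively graded chain complex of abelian groups. -/
structure Cplx where
  /-- The group of chains in each degree. -/
  C : ℕ → Type
  [grp : ∀ n, AddCommGroup (C n)]
  /-- The differential. -/
  d : ∀ n, C (n + 1) →ₗ[ℤ] C n
  dd : ∀ n x, d n (d (n + 1) x) = 0

attribute [instance] Cplx.grp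

namespace Cplx

variable {K : Cplx}

/-- A subcomplex: a submodule in each degree, stable under the differential. -/
@[ext] structure Sub (K : Cplx) where
  /-- The submodule in each degree. -/
  s : ∀ n, Submodule ℤ (K.C n)
  d_mem : ∀ n, ∀ x ∈ s (n + 1), K.d n x ∈ s n

/-- The sum of two subcomplexes. -/
instance : Max (Sub K) := ⟨fun S T => ⟨fun n => S.s n ⊔ T.s n, by
  intro n x hx
  obtain ⟨a, ha, b, hb, rfl⟩ := Submodule.mem_sup.1 hx
  rw [map_add]
  exact Submodule.add_mem_sup (S.d_mem n a ha) (T.d_mem n b hb)⟩⟩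

/-- The intersection of two subcomplexes. -/
instance : Min (Sub K) := ⟨fun S T => ⟨fun n => S.s n ⊓ T.s n, fun n x hx =>
  ⟨S.d_mem n x hx.1, T.d_mem n x hx.2⟩⟩⟩

instance : LE (Sub K) := ⟨fun S T => ∀ n, S.s n ≤ T.s n⟩

lemma sup_s (S T : Sub K) (n : ℕ) : (S ⊔ T).s n = S.s n ⊔ T.s n := rfl
lemma inf_s (S T : Sub K) (n : ℕ) : (S ⊓ T).s n = S.s n ⊓ T.s n := rfl

/-- The chains whose boundary lies in `S`; in degree `0` the boundary is zero. -/
def dpre (S : ∀ n, Submodule ℤ (K.C n)) : ∀ n, Submodule ℤ (K.C n)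
  | 0 => ⊤
  | n + 1 => (S n).comap (K.d n)

/-- The inclusion `S ≤ S'` of subcomplexes induces isomorphisms on homology, stated as the vanishing
of the homology of `S' / S`. -/
def RelAcyclic (S S' : Sub K) : Prop :=
  ∀ n, S'.s n ⊓ dpre S.s n ≤ S.s n ⊔ (S'.s (n + 1)).map (K.d n)

lemma dpre_mono {S S' : ∀ n, Submodule ℤ (K.C n)} (h : ∀ n, S n ≤ S' n) (n : ℕ) :
    dpre S n ≤ dpre S' n := by
  cases n with
  | zero => exact le_rfl
  | succ n => exact Submodule.comap_mono (h n)

lemma le_dpre (S : Sub K) (n : ℕ) : S.s n ≤ dpre S.s n := by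
  cases n with
  | zero => exact le_top
  | succ n => exact fun x hx => S.d_mem n x hx

lemma d_mem_dpre (S : ∀ n, Submodule ℤ (K.C n)) (n : ℕ) (x : K.C (n + 1)) :
    K.d n x ∈ dpre S n := by
  cases n with
  | zero => trivial
  | succ n =>
    change K.d n (K.d (n + 1) x) ∈ S n
    rw [K.dd]; exact Submodule.zero_mem _

lemma relAcyclic_iff {S S' : Sub K} : RelAcyclic S S' ↔ ∀ n, ∀ x ∈ S'.s n, x ∈ dpre S.s n →
    ∃ y ∈ S'.s (n + 1), x - K.d n y ∈ S.s n := by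
  constructor
  · intro h n x hx hd
    obtain ⟨a, ha, b, ⟨y, hy, rfl⟩, rfl⟩ := Submodule.mem_sup.1 (h n ⟨hx, hd⟩)
    exact ⟨y, hy, by simpa using ha⟩
  · rintro h n x ⟨hx, hd⟩
    obtain ⟨y, hy, h⟩ := h n x hx hd
    exact Submodule.mem_sup.2 ⟨_, h, _, Submodule.mem_map_of_mem hy, by simp⟩

lemma RelAcyclic.refl (S : Sub K) : RelAcyclic S S := fun _ =>
  le_trans inf_le_left le_sup_left

lemma RelAcyclic.trans {S S' S'' : Sub K} (h' : S' ≤ S'') (h₁ : RelAcyclic S S')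
    (h₂ : RelAcyclic S' S'') (h : S ≤ S') : RelAcyclic S S'' := by
  rw [relAcyclic_iff] at *
  intro n x hx hd
  obtain ⟨y, hy, hxy⟩ := h₂ n x hx (dpre_mono h n hd)
  obtain ⟨z, hz, hxz⟩ := h₁ n _ hxy (Submodule.sub_mem _ hd (d_mem_dpre _ _ _))
  exact ⟨y + z, Submodule.add_mem _ hy (h' _ hz), by rw [map_add, ← sub_sub]; exact hxz⟩

/-- Two out of three: if `S → S'` and `S → S''` are homology isomorphisms, so is `S' → S''`. -/
lemma RelAcyclic.of_comp {S S' S'' : Sub K} (h₁ : RelAcyclic S S')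
    (h₂ : RelAcyclic S S'') (h : S ≤ S') (h' : S' ≤ S'') : RelAcyclic S' S'' := by
  rw [relAcyclic_iff] at *
  have key : ∀ n, ∀ x ∈ S''.s n, x ∈ dpre S'.s n → ∃ y' ∈ S'.s n, x - y' ∈ dpre S.s n := by
    intro n x hx hd
    cases n with
    | zero => exact ⟨0, Submodule.zero_mem _, trivial⟩
    | succ n =>
      obtain ⟨y, hy, h3⟩ := h₁ n (K.d n x) hd (d_mem_dpre _ _ _)
      exact ⟨y, hy, by
        change K.d n (x - y) ∈ S.s n; rw [map_sub]; exact h3⟩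
  intro n x hx hd
  obtain ⟨y', hy', h3⟩ := key n x hx hd
  obtain ⟨z, hz, h4⟩ := h₂ n _ (Submodule.sub_mem _ hx (h' _ hy')) h3
  refine ⟨z, hz, ?_⟩
  have := Submodule.add_mem _ hy' (h _ h4)
  convert this using 1
  abel

/-- The Mayer–Vietoris principle for homology isomorphisms. -/
lemma RelAcyclic.sup {S₁ S₁' S₂ S₂' : Sub K} (l₁ : S₁ ≤ S₁') (l₂ : S₂ ≤ S₂')
    (h₁ : RelAcyclic S₁ S₁') (h₂ : RelAcyclic S₂ S₂') (h₁₂ : RelAcyclic (S₁ ⊓ S₂) (S₁' ⊓ S₂')) :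
    RelAcyclic (S₁ ⊔ S₂) (S₁' ⊔ S₂') := by
  rw [relAcyclic_iff] at *
  -- a decomposition of the chain into two parts whose boundaries lie in `S₁`, resp. `S₂`
  have key : ∀ n, ∀ x ∈ (S₁' ⊔ S₂').s n, x ∈ dpre (S₁ ⊔ S₂).s n →
      ∃ x₁ ∈ S₁'.s n, ∃ x₂ ∈ S₂'.s n, x = x₁ + x₂ ∧ x₁ ∈ dpre S₁.s n ∧ x₂ ∈ dpre S₂.s n := by
    intro n x hx hd
    obtain ⟨x₁, hx₁, x₂, hx₂, rfl⟩ := Submodule.mem_sup.1 hx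
    cases n with
    | zero => exact ⟨x₁, hx₁, x₂, hx₂, rfl, trivial, trivial⟩
    | succ n =>
      obtain ⟨s₁, hs₁, s₂, hs₂, hs⟩ := Submodule.mem_sup.1 (show K.d n (x₁ + x₂) ∈ _ from hd)
      rw [map_add] at hs
      set u := K.d n x₁ - s₁ with hu
      have hu2 : u = s₂ - K.d n x₂ := by
        rw [hu, sub_eq_sub_iff_add_eq_add, ← hs]; abel
      have hu1 : u ∈ (S₁' ⊓ S₂').s n := ⟨Submodule.sub_mem _ (S₁'.d_mem n _ hx₁) (l₁ n hs₁), by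
        rw [hu2]; exact Submodule.sub_mem _ (l₂ n hs₂) (S₂'.d_mem n _ hx₂)⟩
      have hdu : u ∈ dpre (S₁ ⊓ S₂).s n := by
        cases n with
        | zero => trivial
        | succ n =>
          constructor
          · change K.d n u ∈ S₁.s n
            rw [hu, map_sub, K.dd, zero_sub]
            exact Submodule.neg_mem _ (S₁.d_mem n _ hs₁)
          · change K.d n u ∈ S₂.s n
            rw [hu2, map_sub, K.dd, sub_zero]
            exact S₂.d_mem n _ hs₂
      obtain ⟨y, hy, hyu⟩ := h₁₂ n u hu1 hdu
      refine ⟨x₁ - y, Submodule.sub_mem _ hx₁ hy.1, x₂ + y, Submodule.add_mem _ hx₂ hy.2,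
        by abel, ?_, ?_⟩
      · change K.d n (x₁ - y) ∈ S₁.s n
        have : K.d n (x₁ - y) = s₁ + (u - K.d n y) := by rw [hu, map_sub]; abel
        rw [this]; exact Submodule.add_mem _ hs₁ hyu.1
      · change K.d n (x₂ + y) ∈ S₂.s n
        have : K.d n (x₂ + y) = s₂ - (u - K.d n y) := by rw [hu2, map_add]; abel
        rw [this]; exact Submodule.sub_mem _ hs₂ hyu.2
  intro n x hx hd
  obtain ⟨x₁, hx₁, x₂, hx₂, rfl, hd₁, hd₂⟩ := key n x hx hd
  obtain ⟨y₁, hy₁, e₁⟩ := h₁ n x₁ hx₁ hd₁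
  obtain ⟨y₂, hy₂, e₂⟩ := h₂ n x₂ hx₂ hd₂
  refine ⟨y₁ + y₂, Submodule.add_mem_sup hy₁ hy₂, ?_⟩
  have : x₁ + x₂ - K.d n (y₁ + y₂) = (x₁ - K.d n y₁) + (x₂ - K.d n y₂) := by rw [map_add]; abel
  rw [this]
  exact Submodule.add_mem_sup e₁ e₂

/-- Cycles of a subcomplex. -/
def Sub.Z (S : Sub K) (n : ℕ) : Submodule ℤ (K.C n) := S.s n ⊓ dpre (fun _ => ⊥) n

/-- Boundaries of a subcomplex. -/
def Sub.B (S : Sub K) (n : ℕ) : Submodule ℤ (K.C n) := (S.s (n + 1)).map (K.d n)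

lemma Sub.B_le_Z (S : Sub K) (n : ℕ) : S.B n ≤ S.Z n := by
  rintro _ ⟨x, hx, rfl⟩
  exact ⟨S.d_mem n x hx, d_mem_dpre _ _ _⟩

/-- The homology of the subcomplex `S` has finite total rank, and its Euler characteristic
is `c`. -/
def HasChi (S : Sub K) (c : ℤ) : Prop :=
  ∃ (b : ℕ → ℕ) (N : ℕ), (∀ n, relRank (S.B n) (S.Z n) = b n) ∧ (∀ n, N ≤ n → b n = 0) ∧
    c = ∑ n ∈ Finset.range N, (-1 : ℤ) ^ n * b n

lemma alt_sum_eq {b : ℕ → ℕ} {N N' : ℕ} (h : ∀ n, N ≤ n → b n = 0) (hN : N ≤ N') :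
    ∑ n ∈ Finset.range N', (-1 : ℤ) ^ n * b n = ∑ n ∈ Finset.range N, (-1 : ℤ) ^ n * b n := by
  symm
  apply Finset.sum_subset (Finset.range_mono hN)
  intro n _ hn
  rw [h n (by simpa using hn)]; simp

lemma HasChi.unique {S : Sub K} {c c' : ℤ} (h : HasChi S c) (h' : HasChi S c') : c = c' := by
  obtain ⟨b, N, hb, hN, rfl⟩ := h
  obtain ⟨b', N', hb', hN', rfl⟩ := h'
  have : b = b' := by
    funext n
    have := (hb n).symm.trans (hb' n)
    exact_mod_cast this
  subst this
  rw [← alt_sum_eq hN (le_max_left N N'), ← alt_sum_eq hN' (le_max_right N N')]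

lemma RelAcyclic.relRank_eq {S S' : Sub K} (h : S ≤ S') (ha : RelAcyclic S S') (n : ℕ) :
    relRank (S.B n) (S.Z n) = relRank (S'.B n) (S'.Z n) := by
  have hZ : S'.Z n = S'.B n ⊔ S.Z n := by
    apply le_antisymm
    · rintro x ⟨hx, hd⟩
      obtain ⟨y, hy, hxy⟩ := relAcyclic_iff.1 ha n x hx (dpre_mono (fun _ => bot_le) n hd)
      exact Submodule.mem_sup.2 ⟨_, Submodule.mem_map_of_mem hy, x - K.d n y,
        ⟨hxy, Submodule.sub_mem _ hd (d_mem_dpre _ _ _)⟩, by simp⟩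
    · exact sup_le (S'.B_le_Z n) (inf_le_inf_right _ (h n))
  have hB : S.B n = S'.B n ⊓ S.Z n := by
    apply le_antisymm
    · exact le_inf (Submodule.map_mono (h _)) (S.B_le_Z n)
    · rintro _ ⟨⟨y, hy, rfl⟩, hx, -⟩
      obtain ⟨z, hz, hyz⟩ := relAcyclic_iff.1 ha (n + 1) y hy hx
      exact ⟨_, hyz, by rw [map_sub, K.dd, sub_zero]⟩
  rw [hZ, ← relRank_inf_sup, ← hB]

lemma RelAcyclic.hasChi {S S' : Sub K} (h : S ≤ S') (ha : RelAcyclic S S') {c : ℤ}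
    (hc : HasChi S c) : HasChi S' c := by
  obtain ⟨b, N, hb, h1⟩ := hc
  exact ⟨b, N, fun n => by rw [← ha.relRank_eq h]; exact hb n, h1⟩

section MayerVietoris

variable (S₁ S₂ : Sub K)

/-- The antidiagonal embedding. -/
def antidiag (M : Type) [AddCommGroup M] : M →ₗ[ℤ] M × M :=
  LinearMap.prod LinearMap.id (-LinearMap.id)

lemma antidiag_apply {M : Type} [AddCommGroup M] (x : M) : antidiag M x = (x, -x) := rfl

lemma sub_Z_le (n : ℕ) : S₁.Z n ⊔ S₂.Z n ≤ (S₁ ⊔ S₂).Z n :=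
  sup_le (inf_le_inf_right _ le_sup_left) (inf_le_inf_right _ le_sup_right)

lemma sub_B_sup (n : ℕ) : (S₁ ⊔ S₂).B n = S₁.B n ⊔ S₂.B n := by
  simp only [Sub.B, sup_s, Submodule.map_sup]

/-- The antidiagonal copy of `Z(S₁ ⊓ S₂)` in `Z(S₁) × Z(S₂)` is the kernel of the addition map onto
`Z(S₁) ⊔ Z(S₂)`; counting the rank of `Z(S₁) × Z(S₂)` modulo boundaries in two steps gives the
exactness of the Mayer–Vietoris sequence at the direct sum. -/
lemma mv_prod (n : ℕ) :
    relRank (S₁.B n) (S₁.Z n) + relRank (S₂.B n) (S₂.Z n) =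
      relRank (S₁.B n ⊓ S₂.B n) ((S₁ ⊓ S₂).Z n) +
        relRank (S₁.B n ⊔ S₂.B n) (S₁.Z n ⊔ S₂.Z n) := by
  set Δ := antidiag (K.C n)
  set σ : K.C n × K.C n →ₗ[ℤ] K.C n := LinearMap.coprod LinearMap.id LinearMap.id
  have hBZ : S₁.B n ⊓ S₂.B n ≤ (S₁ ⊓ S₂).Z n := fun x hx =>
    ⟨⟨(S₁.B_le_Z n hx.1).1, (S₂.B_le_Z n hx.2).1⟩, (S₁.B_le_Z n hx.1).2⟩
  have hΔ : ((S₁ ⊓ S₂).Z n).map Δ ≤ (S₁.Z n).prod (S₂.Z n) := by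
    rintro _ ⟨x, hx, rfl⟩
    exact ⟨⟨hx.1.1, hx.2⟩, Submodule.neg_mem _ ⟨hx.1.2, hx.2⟩⟩
  have hBB : (S₁.B n).prod (S₂.B n) ≤ (S₁.Z n).prod (S₂.Z n) :=
    Submodule.prod_mono (S₁.B_le_Z n) (S₂.B_le_Z n)
  rw [← relRank_prod _ _ _ _ (S₁.B_le_Z n) (S₂.B_le_Z n),
    relRank_add (Q := (S₁.B n).prod (S₂.B n) ⊔ ((S₁ ⊓ S₂).Z n).map Δ) le_sup_left
      (sup_le hBB hΔ)]
  congr 1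
  · rw [← relRank_inf_sup]
    have : (S₁.B n).prod (S₂.B n) ⊓ ((S₁ ⊓ S₂).Z n).map Δ = (S₁.B n ⊓ S₂.B n).map Δ := by
      apply le_antisymm
      · rintro _ ⟨h, x, hx, rfl⟩
        exact ⟨x, ⟨h.1, (Submodule.neg_mem_iff (p := S₂.B n)).1 h.2⟩, rfl⟩
      · rintro _ ⟨x, hx, rfl⟩
        exact ⟨⟨hx.1, Submodule.neg_mem _ hx.2⟩, x, hBZ hx, rfl⟩
    rw [this, ← relRank_map Δ hBZ]
    rintro x ⟨hx, -⟩
    have : (x, -x) = ((0 : K.C n), (0 : K.C n)) := hx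
    have h0 : x = 0 := (Prod.ext_iff.1 this).1
    rw [h0]
    exact Submodule.zero_mem _
  · rw [relRank_map σ (sup_le hBB hΔ)]
    · rw [Submodule.map_sup, LinearMap.map_coprod_prod, LinearMap.map_coprod_prod]
      simp only [Submodule.map_id]
      congr 1
      rw [sup_eq_left]
      rintro _ ⟨_, ⟨x, hx, rfl⟩, rfl⟩
      have : σ (Δ x) = 0 := by simp [σ, Δ, antidiag_apply]
      rw [this]; exact Submodule.zero_mem _
    · rintro ⟨x, y⟩ ⟨h, hx⟩
      have hxy : x + y = 0 := h
      obtain rfl : y = -x := (neg_eq_of_add_eq_zero_right hxy).symm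
      exact Submodule.mem_sup_right ⟨x, ⟨⟨hx.1.1, by simpa using Submodule.neg_mem _ hx.2.1⟩,
        hx.1.2⟩, rfl⟩

lemma mv_inf (n : ℕ) :
    relRank ((S₁ ⊓ S₂).B n) ((S₁ ⊓ S₂).Z n) =
      relRank ((S₁ ⊓ S₂).B n) (S₁.B n ⊓ S₂.B n) +
        relRank (S₁.B n ⊓ S₂.B n) ((S₁ ⊓ S₂).Z n) := by
  refine relRank_add ?_ ?_
  · rintro _ ⟨x, hx, rfl⟩
    exact ⟨⟨x, hx.1, rfl⟩, ⟨x, hx.2, rfl⟩⟩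
  · exact fun x hx =>
      ⟨⟨(S₁.B_le_Z n hx.1).1, (S₂.B_le_Z n hx.2).1⟩, (S₁.B_le_Z n hx.1).2⟩

lemma mv_sup (n : ℕ) :
    relRank ((S₁ ⊔ S₂).B n) ((S₁ ⊔ S₂).Z n) =
      relRank (S₁.B n ⊔ S₂.B n) (S₁.Z n ⊔ S₂.Z n) +
        relRank (S₁.Z n ⊔ S₂.Z n) ((S₁ ⊔ S₂).Z n) := by
  rw [sub_B_sup]
  exact relRank_add (sup_le_sup (S₁.B_le_Z n) (S₂.B_le_Z n)) (sub_Z_le S₁ S₂ n)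

lemma mv_zero : relRank (S₁.Z 0 ⊔ S₂.Z 0) ((S₁ ⊔ S₂).Z 0) = 0 := by
  have : (S₁ ⊔ S₂).Z 0 = S₁.Z 0 ⊔ S₂.Z 0 := by
    simp [Sub.Z, dpre, sup_s]
  rw [this, relRank_self]

/-- The connecting map: `x₁ + x₂ ↦ d x₁` identifies `Z(S₁ ⊔ S₂) / (Z(S₁) ⊔ Z(S₂))` with
`(B(S₁) ⊓ B(S₂)) / B(S₁ ⊓ S₂)`. -/
lemma mv_succ (n : ℕ) : relRank (S₁.Z (n + 1) ⊔ S₂.Z (n + 1)) ((S₁ ⊔ S₂).Z (n + 1)) =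
    relRank ((S₁ ⊓ S₂).B n) (S₁.B n ⊓ S₂.B n) := by
  set Δ := antidiag (K.C (n + 1))
  set σ : K.C (n + 1) × K.C (n + 1) →ₗ[ℤ] K.C (n + 1) :=
    LinearMap.coprod LinearMap.id LinearMap.id
  set δ : K.C (n + 1) × K.C (n + 1) →ₗ[ℤ] K.C n := (K.d n).comp (LinearMap.fst ℤ _ _)
  set W : Submodule ℤ (K.C (n + 1) × K.C (n + 1)) :=
    (S₁.s (n + 1)).prod (S₂.s (n + 1)) ⊓ LinearMap.ker ((K.d n).comp σ)
  set P : Submodule ℤ (K.C (n + 1) × K.C (n + 1)) :=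
    (S₁.Z (n + 1)).prod (S₂.Z (n + 1)) ⊔ ((S₁ ⊓ S₂).s (n + 1)).map Δ with hP
  have hσΔ : ∀ x, σ (Δ x) = 0 := fun x => by simp [σ, Δ, antidiag_apply]
  have hPW : P ≤ W := by
    refine sup_le ?_ ?_
    · rintro ⟨x, y⟩ ⟨hx, hy⟩
      refine ⟨⟨hx.1, hy.1⟩, ?_⟩
      have h1 : K.d n x = 0 := hx.2
      have h2 : K.d n y = 0 := hy.2
      change K.d n (x + y) = 0
      rw [map_add, h1, h2, add_zero]
    · rintro _ ⟨x, hx, rfl⟩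
      refine ⟨⟨hx.1, Submodule.neg_mem _ hx.2⟩, ?_⟩
      change K.d n (σ (Δ x)) = 0
      rw [hσΔ, map_zero]
  have h1 : relRank P W = relRank (S₁.Z (n + 1) ⊔ S₂.Z (n + 1)) ((S₁ ⊔ S₂).Z (n + 1)) := by
    rw [relRank_map σ hPW]
    · congr 1
      · rw [hP, Submodule.map_sup, LinearMap.map_coprod_prod]
        simp only [Submodule.map_id]
        rw [sup_eq_left]
        rintro _ ⟨_, ⟨x, hx, rfl⟩, rfl⟩
        rw [hσΔ]; exact Submodule.zero_mem _
      · apply le_antisymm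
        · rintro _ ⟨⟨x, y⟩, ⟨hx, hy⟩, rfl⟩
          exact ⟨Submodule.add_mem_sup hx.1 hx.2, hy⟩
        · rintro _ ⟨h, hd⟩
          obtain ⟨x, hx, y, hy, rfl⟩ := Submodule.mem_sup.1 h
          exact ⟨(x, y), ⟨⟨hx, hy⟩, hd⟩, rfl⟩
    · rintro ⟨x, y⟩ ⟨h, hx⟩
      have hxy : x + y = 0 := h
      obtain rfl : y = -x := (neg_eq_of_add_eq_zero_right hxy).symm
      exact Submodule.mem_sup_right ⟨x, ⟨hx.1.1, by simpa using Submodule.neg_mem _ hx.1.2⟩, rfl⟩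
  have h2 : relRank P W = relRank ((S₁ ⊓ S₂).B n) (S₁.B n ⊓ S₂.B n) := by
    rw [relRank_map δ hPW]
    · congr 1
      · apply le_antisymm
        · rw [hP, Submodule.map_sup]
          refine sup_le ?_ ?_
          · rintro _ ⟨⟨x, y⟩, ⟨hx, -⟩, rfl⟩
            have h : δ (x, y) = 0 := hx.2
            rw [h]; exact Submodule.zero_mem _
          · rintro _ ⟨_, ⟨x, hx, rfl⟩, rfl⟩
            exact ⟨x, hx, rfl⟩
        · rintro _ ⟨x, hx, rfl⟩
          exact ⟨Δ x, Submodule.mem_sup_right ⟨x, hx, rfl⟩, rfl⟩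
      · apply le_antisymm
        · rintro _ ⟨⟨x, y⟩, ⟨hx, hy⟩, rfl⟩
          refine ⟨⟨x, hx.1, rfl⟩, ⟨-y, Submodule.neg_mem _ hx.2, ?_⟩⟩
          have hxy : K.d n (x + y) = 0 := hy
          rw [map_add] at hxy
          change K.d n (-y) = K.d n x
          rw [map_neg, neg_eq_of_add_eq_zero_left hxy]
        · rintro _ ⟨⟨x, hx, rfl⟩, ⟨y, hy, hxy⟩⟩
          refine ⟨(x, -y), ⟨⟨hx, Submodule.neg_mem _ hy⟩, ?_⟩, rfl⟩
          change K.d n (x + -y) = 0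
          rw [map_add, map_neg, hxy, add_neg_cancel]
    · rintro ⟨x, y⟩ ⟨h, hx, hy⟩
      have h : K.d n x = 0 := h
      have hxy : K.d n (x + y) = 0 := hy
      rw [map_add, h, zero_add] at hxy
      exact Submodule.mem_sup_left ⟨⟨hx.1, h⟩, ⟨hx.2, hxy⟩⟩
  rw [← h1, h2]

end MayerVietoris

lemma nat_of_add {a b : Cardinal.{0}} {n : ℕ} (h : a + b = n) : ∃ i j : ℕ, a = i ∧ b = j := by
  have h1 : a < Cardinal.aleph0 :=
    lt_of_le_of_lt (h ▸ self_le_add_right a b) (Cardinal.natCast_lt_aleph0)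
  have h2 : b < Cardinal.aleph0 :=
    lt_of_le_of_lt (h ▸ self_le_add_left b a) (Cardinal.natCast_lt_aleph0)
  obtain ⟨i, hi⟩ := Cardinal.lt_aleph0.1 h1
  obtain ⟨j, hj⟩ := Cardinal.lt_aleph0.1 h2
  exact ⟨i, j, hi, hj⟩

/-- Additivity of the Euler characteristic in a Mayer–Vietoris square. -/
lemma HasChi.sup {S₁ S₂ : Sub K} {c₁ c₂ c₁₂ : ℤ} (h₁ : HasChi S₁ c₁) (h₂ : HasChi S₂ c₂)
    (h₁₂ : HasChi (S₁ ⊓ S₂) c₁₂) : HasChi (S₁ ⊔ S₂) (c₁ + c₂ - c₁₂) := by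
  obtain ⟨b₁, N₁, e₁, z₁, rfl⟩ := h₁
  obtain ⟨b₂, N₂, e₂, z₂, rfl⟩ := h₂
  obtain ⟨b, N, e, z, rfl⟩ := h₁₂
  have hA : ∀ n, ∃ i j : ℕ, relRank ((S₁ ⊓ S₂).B n) (S₁.B n ⊓ S₂.B n) = i ∧
      relRank (S₁.B n ⊓ S₂.B n) ((S₁ ⊓ S₂).Z n) = j :=
    fun n => nat_of_add ((mv_inf S₁ S₂ n).symm.trans (e n))
  choose κ μ hκ hμ using hA
  have hB : ∀ n, ∃ i j : ℕ, relRank (S₁.B n ⊓ S₂.B n) ((S₁ ⊓ S₂).Z n) = i ∧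
      relRank (S₁.B n ⊔ S₂.B n) (S₁.Z n ⊔ S₂.Z n) = j := fun n =>
    nat_of_add (n := b₁ n + b₂ n) ((mv_prod S₁ S₂ n).symm.trans (by
      rw [e₁, e₂]; push_cast; rfl))
  choose μ' ν hμ' hν using hB
  have eμ : μ' = μ := by
    funext n
    exact_mod_cast (hμ' n).symm.trans (hμ n)
  subst eμ
  have E1 : ∀ n, b n = κ n + μ' n := fun n => by
    have := mv_inf S₁ S₂ n
    rw [e, hκ, hμ] at this
    exact_mod_cast this
  have E2 : ∀ n, b₁ n + b₂ n = μ' n + ν n := fun n => by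
    have := mv_prod S₁ S₂ n
    rw [e₁, e₂, hν, hμ] at this
    exact_mod_cast this
  set L := max N (max N₁ N₂)
  have hL : ∀ n, L ≤ n → b n = 0 ∧ b₁ n = 0 ∧ b₂ n = 0 := fun n hn =>
    ⟨z n (le_trans (le_max_left _ _) hn),
      z₁ n (le_trans (le_trans (le_max_left _ _) (le_max_right _ _)) hn),
      z₂ n (le_trans (le_trans (le_max_right _ _) (le_max_right _ _)) hn)⟩
  refine ⟨fun n => ν n + (match n with | 0 => 0 | n + 1 => κ n), L + 1, ?_, ?_, ?_⟩
  · intro n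
    rw [mv_sup, hν]
    cases n with
    | zero => rw [mv_zero]; simp
    | succ n => rw [mv_succ, hκ]; push_cast; rfl
  · intro n hn
    cases n with
    | zero => omega
    | succ n =>
      have h1 := hL n (by omega)
      have h2 := hL (n + 1) (by omega)
      have := E1 n
      have := E2 (n + 1)
      simp only
      omega
  · rw [← alt_sum_eq z (le_max_left _ _ : N ≤ L),
      ← alt_sum_eq z₁ (le_trans (le_max_left _ _) (le_max_right _ _) : N₁ ≤ L),
      ← alt_sum_eq z₂ (le_trans (le_max_right _ _) (le_max_right _ _) : N₂ ≤ L)]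
    rw [← Finset.sum_add_distrib, ← Finset.sum_sub_distrib]
    simp only [Nat.cast_add, mul_add, Finset.sum_add_distrib]
    rw [Finset.sum_range_succ, Finset.sum_range_succ' (fun x => (-1 : ℤ) ^ x * _)]
    have hνL : ν L = 0 := by
      have := E2 L; have := hL L le_rfl; omega
    simp only [hνL, Nat.cast_zero, mul_zero, add_zero]
    rw [← Finset.sum_add_distrib]
    refine Finset.sum_congr rfl fun n _ => ?_
    have h1 : (b n : ℤ) = κ n + μ' n := by exact_mod_cast E1 n
    have h2 : (b₁ n : ℤ) + b₂ n = μ' n + ν n := by exact_mod_cast E2 n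
    rw [pow_succ, h1, ← mul_add, h2]
    ring

/-- The empty subcomplex. -/
instance : Bot (Sub K) := ⟨⟨fun _ => ⊥, fun n x hx => by
  rw [Submodule.mem_bot] at hx; rw [hx, map_zero]; exact Submodule.zero_mem _⟩⟩

lemma HasChi.bot : HasChi (⊥ : Sub K) 0 := by
  refine ⟨fun _ => 0, 0, fun n => ?_, fun _ _ => rfl, rfl⟩
  have h1 : (⊥ : Sub K).Z n = ⊥ := by
    change (⊥ : Submodule ℤ (K.C n)) ⊓ _ = ⊥
    simp
  have h2 : (⊥ : Sub K).B n = ⊥ := by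
    change (⊥ : Submodule ℤ (K.C (n + 1))).map _ = ⊥
    simp
  rw [h1, h2, relRank_self]; simp

end Cplx

end

section

/-! ### Semisimplicial sets, singular chains and vertex lists -/

/-- A semisimplicial set: simplices in each degree and face maps satisfying the usual identities. -/
structure SemiSimp where
  /-- The simplices of each degree. -/
  X : ℕ → Type
  /-- The face maps. -/
  face : ∀ n, Fin (n + 2) → X (n + 1) → X n
  face_face : ∀ n (i j : Fin (n + 2)), i ≤ j → ∀ x,
    face n i (face (n + 1) j.succ x) = face n j (face (n + 1) i.castSucc x)

namespace SemiSimp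

variable (S : SemiSimp)

/-- The boundary of the free chain complex on a semisimplicial set. -/
def bd (n : ℕ) : (S.X (n + 1) →₀ ℤ) →ₗ[ℤ] (S.X n →₀ ℤ) :=
  Finsupp.linearCombination ℤ fun x => ∑ i : Fin (n + 2), (-1 : ℤ) ^ (i : ℕ) •
    Finsupp.single (S.face n i x) 1

lemma bd_single (n : ℕ) (x : S.X (n + 1)) : S.bd n (Finsupp.single x 1) =
    ∑ i : Fin (n + 2), (-1 : ℤ) ^ (i : ℕ) • Finsupp.single (S.face n i x) 1 := by
  simp [bd, Finsupp.linearCombination_single]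

/-- The terms with the faces `i` and `j` removed in either order cancel. -/
lemma bd_bd_single (n : ℕ) (x : S.X (n + 2)) : S.bd n (S.bd (n + 1) (Finsupp.single x 1)) = 0 := by
  rw [bd_single, map_sum]
  simp only [map_smul, bd_single, Finset.smul_sum, smul_smul]
  rw [Finset.sum_comm, ← Finset.sum_product']
  let P := Fin (n + 2) × Fin (n + 3)
  let A : Finset P := {ij : P | (ij.2 : ℕ) ≤ (ij.1 : ℕ)}
  rw [Finset.univ_product_univ, ← Finset.sum_add_sum_compl A, ← eq_neg_iff_add_eq_zero,
    ← Finset.sum_neg_distrib]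
  let φ : ∀ ij : P, ij ∈ A → P := fun ij hij =>
    (Fin.castLT ij.2 (lt_of_le_of_lt (Finset.mem_filter.mp hij).right (Fin.is_lt ij.1)), ij.1.succ)
  -- the terms cancel in pairs under `(i, j) ↦ (j, i + 1)`
  apply Finset.sum_bij φ
  · intro ij hij
    simp_rw [A, φ, Finset.compl_filter, Finset.mem_filter_univ, Fin.val_succ,
      Fin.val_castLT] at hij ⊢
    lia
  · rintro ⟨i, j⟩ hij ⟨i', j'⟩ hij' h
    rw [Prod.mk_inj]
    exact ⟨by simpa [φ] using! congr_arg Prod.snd h,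
      by simpa [φ, Fin.castSucc_castLT] using! congr_arg Fin.castSucc (congr_arg Prod.fst h)⟩
  · rintro ⟨i', j'⟩ hij'
    simp_rw [A, Finset.compl_filter, Finset.mem_filter_univ, not_le] at hij'
    refine ⟨(j'.pred <| ?_, Fin.castSucc i'), ?_, ?_⟩
    · rintro rfl
      simp only [Fin.val_zero, not_lt_zero] at hij'
    · simpa [A] using! Nat.le_sub_one_of_lt hij'
    · simp only [φ, Fin.castLT_castSucc, Fin.succ_pred]
  · rintro ⟨i, j⟩ hij
    have hij' : (j : ℕ) ≤ i := by simpa [A] using! hij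
    have hlt : (j : ℕ) < n + 2 := lt_of_le_of_lt hij' i.2
    have := S.face_face n (j.castLT hlt) i hij' x
    simp only [φ, Fin.val_succ, Fin.val_castLT]
    rw [this, Fin.castSucc_castLT, ← neg_smul]
    congr 1
    ring

/-- The free chain complex on a semisimplicial set. -/
def cplx : Cplx where
  C n := S.X n →₀ ℤ
  d := S.bd
  dd n x := by
    induction x using Finsupp.induction_linear with
    | zero => simp
    | add f g hf hg => rw [map_add, map_add, hf, hg, add_zero]
    | single a b =>
      have : Finsupp.single a b = b • Finsupp.single a (1 : ℤ) := by simp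
      rw [this, map_smul, map_smul, bd_bd_single, smul_zero]

end SemiSimp

/-- The standard topological simplex of dimension `n`. -/
abbrev Simplex (n : ℕ) : Type := stdSimplex ℝ (Fin (n + 1))

lemma succAbove_comm {n : ℕ} (i j : Fin (n + 2)) (h : i ≤ j) (x : Fin (n + 1)) :
    j.succ.succAbove (i.succAbove x) = i.castSucc.succAbove (j.succAbove x) := by
  have := congrArg (fun f => f.toOrderHom x) (SimplexCategory.δ_comp_δ h)
  exact this

/-- The inclusion of the `i`-th face of a standard simplex. -/
def faceMap (n : ℕ) (i : Fin (n + 2)) : C(Simplex n, Simplex (n + 1)) :=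
  ⟨stdSimplex.map i.succAbove, stdSimplex.continuous_map _⟩

/-- The semisimplicial set of singular simplices. -/
def singSet (Y : Type) [TopologicalSpace Y] : SemiSimp where
  X n := C(Simplex n, Y)
  face n i σ := σ.comp (faceMap n i)
  face_face n i j h σ := by
    ext x
    simp only [ContinuousMap.comp_apply, faceMap, ContinuousMap.coe_mk]
    rw [stdSimplex.map_comp_apply, stdSimplex.map_comp_apply]
    congr 2
    funext x
    exact succAbove_comm i j h x

/-- The semisimplicial set of finite lists of points (of length `n + 1` in degree `n`). -/
def listSet (K : Type) : SemiSimp where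
  X n := Fin (n + 1) → K
  face n i v := v ∘ i.succAbove
  face_face n i j h v := by
    funext x
    simp only [Function.comp_apply]
    rw [succAbove_comm i j h x]

/-- Singular chains. -/
abbrev Sing (Y : Type) [TopologicalSpace Y] : Cplx := (singSet Y).cplx

/-- Formal chains on lists of points. -/
abbrev Lists (K : Type) : Cplx := (listSet K).cplx

/-- The basis chain of a list. -/
def lst {K : Type} {n : ℕ} (v : Fin (n + 1) → K) : (Lists K).C n := Finsupp.single v (1 : ℤ)

/-- The basis chain of a singular simplex. -/
def sgl {Y : Type} [TopologicalSpace Y] {n : ℕ} (σ : C(Simplex n, Y)) : (Sing Y).C n :=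
  Finsupp.single σ (1 : ℤ)

/-- Extend a function on lists linearly to chains. -/
def listExt {K : Type} {M : Type} [AddCommGroup M] {n : ℕ} (g : (Fin (n + 1) → K) → M) :
    (Lists K).C n →ₗ[ℤ] M := Finsupp.linearCombination ℤ g

/-- Extend a function on singular simplices linearly to chains. -/
def singExt {Y : Type} [TopologicalSpace Y] {M : Type} [AddCommGroup M] {n : ℕ}
    (g : C(Simplex n, Y) → M) : (Sing Y).C n →ₗ[ℤ] M := Finsupp.linearCombination ℤ g

section Ext
variable {K Y M : Type} [TopologicalSpace Y] [AddCommGroup M] {n : ℕ}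

@[simp] lemma listExt_lst (g : (Fin (n + 1) → K) → M) (v : Fin (n + 1) → K) :
    listExt g (lst v) = g v := by
  exact (Finsupp.linearCombination_single ℤ (1 : ℤ) v).trans (one_smul ℤ _)

@[simp] lemma singExt_sgl (g : C(Simplex n, Y) → M) (σ : C(Simplex n, Y)) :
    singExt g (sgl σ) = g σ := by
  exact (Finsupp.linearCombination_single ℤ (1 : ℤ) σ).trans (one_smul ℤ _)

lemma list_hom_ext {f g : (Lists K).C n →ₗ[ℤ] M} (h : ∀ v, f (lst v) = g (lst v)) : f = g :=
  Finsupp.lhom_ext' fun v => LinearMap.ext_ring (h v)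

lemma sing_hom_ext {f g : (Sing Y).C n →ₗ[ℤ] M} (h : ∀ v, f (sgl v) = g (sgl v)) : f = g :=
  Finsupp.lhom_ext' fun v => LinearMap.ext_ring (h v)

lemma d_lst (v : Fin (n + 2) → K) : (Lists K).d n (lst v) =
    ∑ i : Fin (n + 2), (-1 : ℤ) ^ (i : ℕ) • lst (v ∘ i.succAbove) :=
  SemiSimp.bd_single _ _ _

lemma d_sgl (σ : C(Simplex (n + 1), Y)) : (Sing Y).d n (sgl σ) =
    ∑ i : Fin (n + 2), (-1 : ℤ) ^ (i : ℕ) • sgl (σ.comp (faceMap n i)) :=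
  SemiSimp.bd_single _ _ _

end Ext

section Cone
variable {K K' : Type}

/-- The cone with apex `b` over a chain of lists. -/
def lcone (b : K) (n : ℕ) : (Lists K).C n →ₗ[ℤ] (Lists K).C (n + 1) :=
  listExt fun v => lst (Fin.cons b v : Fin (n + 2) → K)

/-- The augmentation. -/
def aug : (Lists K).C 0 →ₗ[ℤ] ℤ := listExt fun _ => 1

/-- The map on lists induced by a map of sets. -/
def lmap (g : K → K') (n : ℕ) : (Lists K).C n →ₗ[ℤ] (Lists K').C n :=
  listExt fun v => lst (g ∘ v)

lemma lmap_lst (g : K → K') {n : ℕ} (v : Fin (n + 1) → K) : lmap g n (lst v) = lst (g ∘ v) := by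
  simp [lmap]

lemma d_lmap (g : K → K') (n : ℕ) (x : (Lists K).C (n + 1)) :
    (Lists K').d n (lmap g (n + 1) x) = lmap g n ((Lists K).d n x) := by
  suffices h : ((Lists K').d n).comp (lmap g (n + 1)) = (lmap g n).comp ((Lists K).d n) from
    LinearMap.congr_fun h x
  refine list_hom_ext fun v => ?_
  simp only [LinearMap.comp_apply, lmap_lst, d_lst, map_sum, map_smul]
  rfl

lemma cons_comp_succAbove_succ (b : K) {n : ℕ} (v : Fin (n + 2) → K) (i : Fin (n + 2)) :
    (Fin.cons b v : Fin (n + 3) → K) ∘ i.succ.succAbove =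
      (Fin.cons b (v ∘ i.succAbove) : Fin (n + 2) → K) := by
  funext x
  refine Fin.cases ?_ (fun x => ?_) x
  · simp
  · simp [Fin.succ_succAbove_succ]

lemma d_lcone_succ (b : K) (n : ℕ) (x : (Lists K).C (n + 1)) :
    (Lists K).d (n + 1) (lcone b (n + 1) x) = x - lcone b n ((Lists K).d n x) := by
  suffices h : ((Lists K).d (n + 1)).comp (lcone b (n + 1)) =
      LinearMap.id - (lcone b n).comp ((Lists K).d n) from LinearMap.congr_fun h x
  refine list_hom_ext fun v => ?_
  simp only [LinearMap.comp_apply, LinearMap.sub_apply, LinearMap.id_apply, lcone, listExt_lst,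
    d_lst, map_sum, map_smul]
  rw [Fin.sum_univ_succ, sub_eq_add_neg, ← Finset.sum_neg_distrib]
  congr 1
  · simp only [Fin.val_zero, pow_zero, one_smul]
    congr 1
  · refine Finset.sum_congr rfl fun i _ => ?_
    rw [cons_comp_succAbove_succ, Fin.val_succ, pow_succ, mul_neg_one, neg_smul]

/-- In degree zero the boundary of a cone involves the augmentation. -/
lemma d_lcone_zero (b : K) (x : (Lists K).C 0) :
    (Lists K).d 0 (lcone b 0 x) = x - aug x • lst (fun _ => b) := by
  suffices h : ((Lists K).d 0).comp (lcone b 0) =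
      LinearMap.id - (LinearMap.toSpanSingleton ℤ _ (lst (fun _ => b))).comp aug from
    LinearMap.congr_fun h x
  refine list_hom_ext fun v => ?_
  simp only [LinearMap.comp_apply, LinearMap.sub_apply, LinearMap.id_apply, lcone, listExt_lst,
    d_lst, LinearMap.toSpanSingleton_apply, aug, one_smul]
  rw [Fin.sum_univ_two]
  simp only [Fin.val_zero, pow_zero, one_smul, Fin.val_one, pow_one, neg_smul]
  have h0 : (Fin.cons b v : Fin 2 → K) ∘ (0 : Fin 2).succAbove = v := by
    funext i
    obtain rfl : i = 0 := Subsingleton.elim _ _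
    rfl
  have h1 : (Fin.cons b v : Fin 2 → K) ∘ (1 : Fin 2).succAbove = fun _ => b := by
    funext i
    obtain rfl : i = 0 := Subsingleton.elim _ _
    rfl
  rw [sub_eq_add_neg]
  exact congrArg₂ (· + -·) (congrArg lst h0) (congrArg lst h1)

lemma lmap_lcone (g : K → K') (b : K) (n : ℕ) (x : (Lists K).C n) :
    lmap g (n + 1) (lcone b n x) = lcone (g b) n (lmap g n x) := by
  suffices h : (lmap g (n + 1)).comp (lcone b n) = (lcone (g b) n).comp (lmap g n) from
    LinearMap.congr_fun h x
  refine list_hom_ext fun v => ?_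
  simp only [LinearMap.comp_apply, lcone, listExt_lst, lmap_lst]
  congr 1
  funext i
  refine Fin.cases ?_ (fun x => ?_) i <;> simp

lemma aug_lmap (g : K → K') (x : (Lists K).C 0) : aug (lmap g 0 x) = aug x := by
  suffices h : (aug).comp (lmap g 0) = aug from LinearMap.congr_fun h x
  refine list_hom_ext fun v => ?_
  simp [lmap_lst, aug]

lemma aug_d (x : (Lists K).C 1) : aug ((Lists K).d 0 x) = 0 := by
  suffices h : (aug).comp ((Lists K).d 0) = 0 from LinearMap.congr_fun h x
  refine list_hom_ext fun v => ?_
  simp only [LinearMap.comp_apply, d_lst, map_sum, map_smul, aug, listExt_lst]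
  rw [Fin.sum_univ_two]; simp

end Cone

/-! ### Chain homotopies constructed by coning -/

section Homotopy

variable {K K' : Type}

/-- An augmentation-preserving chain map of list complexes. -/
structure AugMap (f : ∀ n, (Lists K).C n →ₗ[ℤ] (Lists K').C n) : Prop where
  d_comm : ∀ n x, (Lists K').d n (f (n + 1) x) = f n ((Lists K).d n x)
  aug_comm : ∀ x, aug (f 0 x) = aug x

/-- The chain homotopy between `f` and `g` obtained by coning off with apices `b v`. -/
def coneHtpy (f g : ∀ n, (Lists K).C n →ₗ[ℤ] (Lists K').C n)
    (b : ∀ n, (Fin (n + 1) → K) → K') : ∀ n, (Lists K).C n →ₗ[ℤ] (Lists K').C (n + 1)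
  | 0 => listExt fun v => lcone (b 0 v) 0 (f 0 (lst v) - g 0 (lst v))
  | n + 1 => listExt fun v => lcone (b (n + 1) v) (n + 1)
      (f (n + 1) (lst v) - g (n + 1) (lst v) - coneHtpy f g b n ((Lists K).d n (lst v)))

variable {f g : ∀ n, (Lists K).C n →ₗ[ℤ] (Lists K').C n} {b : ∀ n, (Fin (n + 1) → K) → K'}

lemma coneHtpy_succ_lst (n : ℕ) (v : Fin (n + 2) → K) : coneHtpy f g b (n + 1) (lst v) =
    lcone (b (n + 1) v) (n + 1)
      (f (n + 1) (lst v) - g (n + 1) (lst v) - coneHtpy f g b n ((Lists K).d n (lst v))) :=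
  listExt_lst _ _

lemma d_coneHtpy_zero (hf : AugMap f) (hg : AugMap g) (x : (Lists K).C 0) :
    (Lists K').d 0 (coneHtpy f g b 0 x) = f 0 x - g 0 x := by
  suffices h : ((Lists K').d 0).comp (coneHtpy f g b 0) = f 0 - g 0 from LinearMap.congr_fun h x
  refine list_hom_ext fun v => ?_
  simp only [LinearMap.comp_apply, coneHtpy, listExt_lst, LinearMap.sub_apply, d_lcone_zero]
  rw [map_sub, hf.aug_comm, hg.aug_comm, sub_self, zero_smul, sub_zero]

/-- `coneHtpy` is a chain homotopy between augmentation preserving chain maps. -/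
lemma d_coneHtpy_succ (hf : AugMap f) (hg : AugMap g) (n : ℕ) (x : (Lists K).C (n + 1)) :
    (Lists K').d (n + 1) (coneHtpy f g b (n + 1) x) =
      f (n + 1) x - g (n + 1) x - coneHtpy f g b n ((Lists K).d n x) := by
  induction n with
  | zero =>
    suffices h : ((Lists K').d 1).comp (coneHtpy f g b 1) =
        f 1 - g 1 - (coneHtpy f g b 0).comp ((Lists K).d 0) from LinearMap.congr_fun h x
    refine list_hom_ext fun v => ?_
    rw [LinearMap.comp_apply, coneHtpy_succ_lst, d_lcone_succ, map_sub ((Lists K').d _),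
      map_sub ((Lists K').d _), hf.d_comm,
      hg.d_comm, d_coneHtpy_zero hf hg, sub_self, map_zero, sub_zero]
    rfl
  | succ n ih =>
    suffices h : ((Lists K').d (n + 2)).comp (coneHtpy f g b (n + 2)) =
        f (n + 2) - g (n + 2) - (coneHtpy f g b (n + 1)).comp ((Lists K).d (n + 1)) from
      LinearMap.congr_fun h x
    refine list_hom_ext fun v => ?_
    rw [LinearMap.comp_apply, coneHtpy_succ_lst, d_lcone_succ, map_sub ((Lists K').d _),
      map_sub ((Lists K').d _), hf.d_comm, hg.d_comm, ih, (Lists K).dd, map_zero, sub_zero,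
      sub_self, map_zero, sub_zero]
    rfl

/-- Naturality of the coning homotopy. -/
lemma lmap_coneHtpy {L L' : Type} {f' g' : ∀ n, (Lists L).C n →ₗ[ℤ] (Lists L').C n}
    {b' : ∀ n, (Fin (n + 1) → L) → L'} {e : K → L} {e' : K' → L'}
    (hf : ∀ n x, lmap e' n (f n x) = f' n (lmap e n x))
    (hg : ∀ n x, lmap e' n (g n x) = g' n (lmap e n x))
    (hb : ∀ n v, e' (b n v) = b' n (e ∘ v)) (n : ℕ) (x : (Lists K).C n) :
    lmap e' (n + 1) (coneHtpy f g b n x) = coneHtpy f' g' b' n (lmap e n x) := by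
  induction n with
  | zero =>
    suffices h : (lmap e' 1).comp (coneHtpy f g b 0) = (coneHtpy f' g' b' 0).comp (lmap e 0) from
      LinearMap.congr_fun h x
    refine list_hom_ext fun v => ?_
    simp only [LinearMap.comp_apply, coneHtpy, listExt_lst, lmap_lcone, map_sub, hf, hg,
      lmap_lst, hb]
  | succ n ih =>
    suffices h : (lmap e' (n + 2)).comp (coneHtpy f g b (n + 1)) =
        (coneHtpy f' g' b' (n + 1)).comp (lmap e (n + 1)) from LinearMap.congr_fun h x
    refine list_hom_ext fun v => ?_
    simp only [LinearMap.comp_apply, coneHtpy, listExt_lst, lmap_lcone, map_sub, hf, hg,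
      lmap_lst, hb, ih, d_lst, map_sum, map_smul]
    rfl

lemma augMap_id : AugMap (fun n => (LinearMap.id : (Lists K).C n →ₗ[ℤ] _)) :=
  ⟨fun _ _ => rfl, fun _ => rfl⟩

lemma augMap_lmap (e : K → K') : AugMap (lmap e) := ⟨d_lmap e, aug_lmap e⟩

end Homotopy

/-! ### Barycentric subdivision -/

section Subdivision

variable {K K' : Type}

/-- Subdivision of chains of lists, relative to a choice `b` of barycentres. -/
def subdiv (b : ∀ n, (Fin (n + 1) → K) → K) : ∀ n, (Lists K).C n →ₗ[ℤ] (Lists K).C n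
  | 0 => LinearMap.id
  | n + 1 => listExt fun v => lcone (b (n + 1) v) n (subdiv b n ((Lists K).d n (lst v)))

lemma augMap_subdiv (b : ∀ n, (Fin (n + 1) → K) → K) : AugMap (subdiv b) := by
  refine ⟨fun n => ?_, fun _ => rfl⟩
  induction n with
  | zero =>
    intro x
    suffices h : ((Lists K).d 0).comp (subdiv b 1) = (Lists K).d 0 from LinearMap.congr_fun h x
    refine list_hom_ext fun v => ?_
    rw [LinearMap.comp_apply, subdiv, listExt_lst, d_lcone_zero]
    simp only [subdiv, LinearMap.id_apply, aug_d, zero_smul, sub_zero]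
  | succ n ih =>
    intro x
    suffices h : ((Lists K).d (n + 1)).comp (subdiv b (n + 2)) =
      (subdiv b (n + 1)).comp ((Lists K).d (n + 1)) from LinearMap.congr_fun h x
    refine list_hom_ext fun v => ?_
    rw [LinearMap.comp_apply, subdiv, listExt_lst, d_lcone_succ, ih, (Lists K).dd, map_zero,
      map_zero, sub_zero]
    rfl

lemma lmap_subdiv {b : ∀ n, (Fin (n + 1) → K) → K} {b' : ∀ n, (Fin (n + 1) → K') → K'}
    {e : K → K'} (hb : ∀ n v, e (b n v) = b' n (e ∘ v)) (n : ℕ) (x : (Lists K).C n) :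
    lmap e n (subdiv b n x) = subdiv b' n (lmap e n x) := by
  induction n with
  | zero => rfl
  | succ n ih =>
    suffices h : (lmap e (n + 1)).comp (subdiv b (n + 1)) =
        (subdiv b' (n + 1)).comp (lmap e (n + 1)) from LinearMap.congr_fun h x
    refine list_hom_ext fun v => ?_
    simp only [LinearMap.comp_apply, subdiv, listExt_lst, lmap_lcone, lmap_lst, hb, ih]
    rw [← d_lmap, lmap_lst]

end Subdivision

end

section

/-! ### Affine simplices and operators on singular chains -/

/-- A convex subset of a real normed space. -/
structure CSet where
  /-- The ambient space. -/
  V : Type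
  [grp : NormedAddCommGroup V]
  [mod : NormedSpace ℝ V]
  /-- The underlying set. -/
  K : Set V
  conv : Convex ℝ K

attribute [instance] CSet.grp CSet.mod

/-- The points of a convex set. -/
abbrev CSet.P (K : CSet) : Type := ↥K.K

section Aff

variable {K L : CSet} {Y Y' : Type} [TopologicalSpace Y] [TopologicalSpace Y']

/-- The affine simplex with the given vertices. -/
def aff {n : ℕ} (v : Fin (n + 1) → K.P) : C(Simplex n, K.P) where
  toFun x := ⟨∑ i, x i • (v i : K.V), K.conv.sum_mem (fun i _ => x.2.1 i) x.2.2
    (fun i _ => (v i).2)⟩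
  continuous_toFun := by
    refine Continuous.subtype_mk ?_ _
    refine continuous_finsetSum _ fun i _ => ?_
    exact ((continuous_apply i).comp continuous_subtype_val).smul continuous_const

lemma aff_coe {n : ℕ} (v : Fin (n + 1) → K.P) (x : Simplex n) :
    (aff v x : K.V) = ∑ i, x i • (v i : K.V) := rfl

lemma sum_map_smul {m n : ℕ} (f : Fin (m + 1) → Fin (n + 1)) (x : Simplex m)
    {V : Type} [AddCommGroup V] [Module ℝ V] (v : Fin (n + 1) → V) :
    ∑ j, (stdSimplex.map f x : Simplex n) j • v j = ∑ i, x i • v (f i) := by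
  rw [stdSimplex.map_coe]
  simp only [FunOnFinite.linearMap_apply_apply, Finset.sum_smul]
  rw [← Finset.sum_fiberwise (s := Finset.univ) (g := f)]
  refine Finset.sum_congr rfl fun j _ => Finset.sum_congr (by ext; simp) fun i hi => ?_
  rw [(Finset.mem_filter.1 hi).2]

lemma aff_comp_faceMap {n : ℕ} (v : Fin (n + 2) → K.P) (i : Fin (n + 2)) :
    (aff v).comp (faceMap n i) = aff (v ∘ i.succAbove) := by
  ext x
  exact sum_map_smul i.succAbove x (fun j => (v j : K.V))

/-- A map between convex sets compatible with affine combinations. -/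
def IsAff (g : K.P → L.P) : Prop :=
  ∀ n (v : Fin (n + 1) → K.P) (x : Simplex n), g (aff v x) = aff (g ∘ v) x

/-- The realization of chains of lists as affine singular chains, followed by `h`. -/
def push (h : C(K.P, Y)) (n : ℕ) : (Lists K.P).C n →ₗ[ℤ] (Sing Y).C n :=
  listExt fun v => sgl (h.comp (aff v))

lemma push_lst (h : C(K.P, Y)) {n : ℕ} (v : Fin (n + 1) → K.P) :
    push h n (lst v) = sgl (h.comp (aff v)) := listExt_lst _ _

lemma d_push (h : C(K.P, Y)) (n : ℕ) (x : (Lists K.P).C (n + 1)) :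
    (Sing Y).d n (push h (n + 1) x) = push h n ((Lists K.P).d n x) := by
  suffices h : ((Sing Y).d n).comp (push h (n + 1)) = (push h n).comp ((Lists K.P).d n) from
    LinearMap.congr_fun h x
  refine list_hom_ext fun v => ?_
  simp only [LinearMap.comp_apply, push_lst, d_sgl, d_lst, map_sum, map_smul,
    ContinuousMap.comp_assoc, aff_comp_faceMap]

lemma push_lmap (h : C(L.P, Y)) (g : C(K.P, L.P)) (hg : IsAff g) (n : ℕ)
    (x : (Lists K.P).C n) : push h n (lmap g n x) = push (h.comp g) n x := by
  suffices h : (push h n).comp (lmap g n) = push (h.comp g) n from LinearMap.congr_fun h x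
  refine list_hom_ext fun v => ?_
  simp only [LinearMap.comp_apply, push_lst, lmap_lst]
  congr 1
  ext x
  exact congrArg h (hg n v x).symm

/-- The standard simplex as a convex set. -/
abbrev std (n : ℕ) : CSet := ⟨Fin (n + 1) → ℝ, stdSimplex ℝ (Fin (n + 1)), convex_stdSimplex _ _⟩

/-- The vertices of the standard simplex. -/
def vtx (n : ℕ) : Fin (n + 1) → (std n).P := fun i => (stdSimplex.vertex i : Simplex n)

/-- An affine simplex as a map of convex sets. -/
def affC {n : ℕ} (v : Fin (n + 1) → K.P) : C((std n).P, K.P) := aff v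

/-- A singular simplex as a map on the convex set `std n`. -/
def ofS {n : ℕ} (σ : C(Simplex n, Y)) : C((std n).P, Y) := σ

lemma aff_vtx (n : ℕ) (x : Simplex n) : aff (vtx n) x = x := by
  apply Subtype.ext
  funext j
  change (∑ i, x i • (Pi.single i (1 : ℝ) : Fin (n + 1) → ℝ)) j = x j
  simp [Finset.sum_apply, Pi.single_apply]

lemma isAff_affC {n : ℕ} (v : Fin (n + 1) → K.P) : IsAff (affC v) := by
  intro m w x
  apply Subtype.ext
  let w' : Fin (m + 1) → Fin (n + 1) → ℝ := fun j => (w j).1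
  change ∑ i, (∑ j, x j • w' j) i • (v i).1 = ∑ j, x j • ∑ i, w' j i • (v i).1
  simp only [Finset.sum_apply, Finset.sum_smul, Finset.smul_sum, Pi.smul_apply, smul_assoc]
  exact Finset.sum_comm

lemma affC_vtx {n : ℕ} (v : Fin (n + 1) → K.P) : affC v ∘ vtx n = v := by
  funext i
  apply Subtype.ext
  change ∑ j, (Pi.single i (1 : ℝ) : Fin (n + 1) → ℝ) j • (v j).1 = _
  simp [Pi.single_apply, ite_smul]

lemma push_vtx {n : ℕ} (σ : C(Simplex n, Y)) : push (ofS σ) n (lst (vtx n)) = sgl σ := by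
  rw [push_lst]
  congr 1
  ext x
  exact congrArg σ (aff_vtx n x)

lemma ofS_comp_aff {n : ℕ} (h : C(K.P, Y)) (v : Fin (n + 1) → K.P) :
    ofS (h.comp (aff v)) = h.comp (affC v) := rfl

/-- The barycentre of a list of points. -/
def bary (K : CSet) (n : ℕ) (v : Fin (n + 1) → K.P) : K.P := aff v stdSimplex.barycenter

lemma IsAff.bary {g : K.P → L.P} (hg : IsAff g) (n : ℕ) (v : Fin (n + 1) → K.P) :
    g (bary K n v) = bary L n (g ∘ v) := hg _ _ _

/-- Barycentric subdivision of lists. -/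
abbrev Sd (K : CSet) (n : ℕ) : (Lists K.P).C n →ₗ[ℤ] (Lists K.P).C n := subdiv (bary K) n

/-- The homotopy between the identity and barycentric subdivision on lists. -/
abbrev Tl (K : CSet) (n : ℕ) : (Lists K.P).C n →ₗ[ℤ] (Lists K.P).C (n + 1) :=
  coneHtpy (fun _ => LinearMap.id) (Sd K) (bary K) n

/-- Barycentric subdivision of singular chains. -/
def SdS (Y : Type) [TopologicalSpace Y] (n : ℕ) : (Sing Y).C n →ₗ[ℤ] (Sing Y).C n :=
  singExt fun σ => push (ofS σ) n (Sd (std n) n (lst (vtx n)))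

/-- The homotopy between the identity and barycentric subdivision. -/
def TS (Y : Type) [TopologicalSpace Y] (n : ℕ) : (Sing Y).C n →ₗ[ℤ] (Sing Y).C (n + 1) :=
  singExt fun σ => push (ofS σ) (n + 1) (Tl (std n) n (lst (vtx n)))

lemma push_Sd (h : C(K.P, Y)) (n : ℕ) (x : (Lists K.P).C n) :
    push h n (Sd K n x) = SdS Y n (push h n x) := by
  suffices h : (push h n).comp (Sd K n) = (SdS Y n).comp (push h n) from LinearMap.congr_fun h x
  refine list_hom_ext fun v => ?_
  rw [LinearMap.comp_apply, LinearMap.comp_apply, push_lst, SdS, singExt_sgl, ofS_comp_aff,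
    ← push_lmap h _ (isAff_affC v), lmap_subdiv (isAff_affC v).bary, lmap_lst, affC_vtx]

lemma push_Tl (h : C(K.P, Y)) (n : ℕ) (x : (Lists K.P).C n) :
    push h (n + 1) (Tl K n x) = TS Y n (push h n x) := by
  suffices h : (push h (n + 1)).comp (Tl K n) = (TS Y n).comp (push h n) from
    LinearMap.congr_fun h x
  refine list_hom_ext fun v => ?_
  rw [LinearMap.comp_apply, LinearMap.comp_apply, push_lst, TS, singExt_sgl, ofS_comp_aff,
    ← push_lmap h _ (isAff_affC v), lmap_coneHtpy (f' := fun _ => LinearMap.id) (g' := Sd K)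
      (b' := bary K) (e := affC v) (fun _ _ => rfl) (fun n x => lmap_subdiv (isAff_affC v).bary n x)
      (isAff_affC v).bary, lmap_lst, affC_vtx]

lemma d_SdS (n : ℕ) (x : (Sing Y).C (n + 1)) :
    (Sing Y).d n (SdS Y (n + 1) x) = SdS Y n ((Sing Y).d n x) := by
  suffices h : ((Sing Y).d n).comp (SdS Y (n + 1)) = (SdS Y n).comp ((Sing Y).d n) from
    LinearMap.congr_fun h x
  refine sing_hom_ext fun σ => ?_
  rw [LinearMap.comp_apply, LinearMap.comp_apply, ← push_vtx, ← push_Sd, d_push,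
    (augMap_subdiv _).d_comm, push_Sd, d_push]

lemma d_TS_zero (x : (Sing Y).C 0) : (Sing Y).d 0 (TS Y 0 x) = x - SdS Y 0 x := by
  suffices h : ((Sing Y).d 0).comp (TS Y 0) = LinearMap.id - SdS Y 0 from LinearMap.congr_fun h x
  refine sing_hom_ext fun σ => ?_
  rw [LinearMap.comp_apply, LinearMap.sub_apply, ← push_vtx, ← push_Tl, d_push,
    d_coneHtpy_zero augMap_id (augMap_subdiv _), map_sub, push_Sd]
  rfl

lemma d_TS_succ (n : ℕ) (x : (Sing Y).C (n + 1)) : (Sing Y).d (n + 1) (TS Y (n + 1) x) =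
    x - SdS Y (n + 1) x - TS Y n ((Sing Y).d n x) := by
  suffices h : ((Sing Y).d (n + 1)).comp (TS Y (n + 1)) =
    LinearMap.id - SdS Y (n + 1) - (TS Y n).comp ((Sing Y).d n) from LinearMap.congr_fun h x
  refine sing_hom_ext fun σ => ?_
  rw [LinearMap.comp_apply, LinearMap.sub_apply, LinearMap.sub_apply, LinearMap.comp_apply,
    ← push_vtx, ← push_Tl, d_push, d_coneHtpy_succ augMap_id (augMap_subdiv _), map_sub, map_sub,
    push_Sd, push_Tl, d_push]
  rfl

/-! ### The prism operator -/

/-- The product of a convex set with the unit interval. -/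
abbrev CSet.cyl (K : CSet) : CSet :=
  ⟨K.V × ℝ, K.K ×ˢ Set.Icc (0 : ℝ) 1, K.conv.prod (convex_Icc 0 1)⟩

/-- The slice inclusion `K → K × [0,1]` at height `t`. -/
def slice (K : CSet) (t : unitInterval) (x : K.P) : K.cyl.P := ⟨(x.1, t.1), x.2, t.2⟩

/-- The product of a map of convex sets with the identity of the interval. -/
def cylMap (g : C(K.P, L.P)) : C(K.cyl.P, L.cyl.P) where
  toFun z := ⟨((g ⟨z.1.1, z.2.1⟩).1, z.1.2), (g ⟨z.1.1, z.2.1⟩).2, z.2.2⟩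
  continuous_toFun := by
    refine Continuous.subtype_mk (Continuous.prodMk ?_ ?_) _
    · exact continuous_subtype_val.comp (g.continuous.comp
        (Continuous.subtype_mk (continuous_fst.comp continuous_subtype_val) _))
    · exact continuous_snd.comp continuous_subtype_val

lemma isAff_cylMap {g : C(K.P, L.P)} (hg : IsAff g) : IsAff (cylMap g) := by
  intro n v x
  have h1 := hg n (fun i => (⟨(v i).1.1, (v i).2.1⟩ : K.P)) x
  apply Subtype.ext
  refine Prod.ext ?_ ?_
  · rw [aff_coe, Prod.fst_sum]
    refine Eq.trans ?_ (congrArg Subtype.val h1)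
    refine congrArg (fun z => (g z).1) (Subtype.ext ?_)
    change (∑ i, x i • (v i).1).1 = _
    rw [Prod.fst_sum]; rfl
  · change (∑ i, x i • (v i).1).2 = (∑ i, x i • (cylMap g (v i)).1).2
    rw [Prod.snd_sum, Prod.snd_sum]; rfl

/-- The prism operator on lists. -/
abbrev Pl (K : CSet) (n : ℕ) : (Lists K.P).C n →ₗ[ℤ] (Lists K.cyl.P).C (n + 1) :=
  coneHtpy (lmap (slice K 1)) (lmap (slice K 0)) (fun n v => slice K 0 (bary K n v)) n

lemma lmap_lmap {A B C : Type} (f : A → B) (g : B → C) (n : ℕ) (x : (Lists A).C n) :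
    lmap g n (lmap f n x) = lmap (g ∘ f) n x := by
  suffices h : (lmap g n).comp (lmap f n) = lmap (g ∘ f) n from LinearMap.congr_fun h x
  refine list_hom_ext fun v => ?_
  rw [LinearMap.comp_apply, lmap_lst, lmap_lst, lmap_lst]; rfl

lemma lmap_Pl {g : C(K.P, L.P)} (hg : IsAff g) (n : ℕ) (x : (Lists K.P).C n) :
    lmap (cylMap g) (n + 1) (Pl K n x) = Pl L n (lmap g n x) := by
  refine lmap_coneHtpy (fun n x => ?_) (fun n x => ?_) (fun n v => ?_) n x
  · rw [lmap_lmap, lmap_lmap]; rfl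
  · rw [lmap_lmap, lmap_lmap]; rfl
  · exact congrArg (slice L 0) (hg.bary n v)

/-- A homotopy precomposed with a map from a convex set. -/
def cylHom (H : C(Y × unitInterval, Y')) (h : C(K.P, Y)) : C(K.cyl.P, Y') where
  toFun z := H (h ⟨z.1.1, z.2.1⟩, ⟨z.1.2, z.2.2⟩)
  continuous_toFun := by
    refine H.continuous.comp (Continuous.prodMk ?_ ?_)
    · exact h.continuous.comp
        (Continuous.subtype_mk (continuous_fst.comp continuous_subtype_val) _)
    · exact Continuous.subtype_mk (continuous_snd.comp continuous_subtype_val) _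

/-- The prism operator on singular chains. -/
def PS (H : C(Y × unitInterval, Y')) (n : ℕ) : (Sing Y).C n →ₗ[ℤ] (Sing Y').C (n + 1) :=
  singExt fun σ => push (cylHom H (ofS σ)) (n + 1) (Pl (std n) n (lst (vtx n)))

lemma push_Pl (H : C(Y × unitInterval, Y')) (h : C(K.P, Y)) (n : ℕ) (x : (Lists K.P).C n) :
    push (cylHom H h) (n + 1) (Pl K n x) = PS H n (push h n x) := by
  suffices h : (push (cylHom H h) (n + 1)).comp (Pl K n) = (PS H n).comp (push h n) from
    LinearMap.congr_fun h x
  refine list_hom_ext fun v => ?_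
  rw [LinearMap.comp_apply, LinearMap.comp_apply, push_lst, PS, singExt_sgl, ofS_comp_aff]
  have : cylHom H (h.comp (affC v)) = (cylHom H h).comp (cylMap (affC v)) := rfl
  rw [this, ← push_lmap _ _ (isAff_cylMap (isAff_affC v)), lmap_Pl (isAff_affC v), lmap_lst,
    affC_vtx]

/-- The map on singular chains induced by a continuous map. -/
def smap (f : C(Y, Y')) (n : ℕ) : (Sing Y).C n →ₗ[ℤ] (Sing Y').C n :=
  singExt fun σ => sgl (f.comp σ)

lemma smap_sgl (f : C(Y, Y')) {n : ℕ} (σ : C(Simplex n, Y)) :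
    smap f n (sgl σ) = sgl (f.comp σ) := singExt_sgl _ _

lemma smap_push (f : C(Y, Y')) (h : C(K.P, Y)) (n : ℕ) (x : (Lists K.P).C n) :
    smap f n (push h n x) = push (f.comp h) n x := by
  suffices h : (smap f n).comp (push h n) = push (f.comp h) n from LinearMap.congr_fun h x
  refine list_hom_ext fun v => ?_
  rw [LinearMap.comp_apply, push_lst, push_lst, smap_sgl]; rfl

lemma d_smap (f : C(Y, Y')) (n : ℕ) (x : (Sing Y).C (n + 1)) :
    (Sing Y').d n (smap f (n + 1) x) = smap f n ((Sing Y).d n x) := by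
  suffices h : ((Sing Y').d n).comp (smap f (n + 1)) = (smap f n).comp ((Sing Y).d n) from
    LinearMap.congr_fun h x
  refine sing_hom_ext fun v => ?_
  simp only [LinearMap.comp_apply, smap_sgl, d_sgl, map_sum, map_smul, ContinuousMap.comp_assoc]

/-- The end of a homotopy at time `t`. -/
def hEnd (H : C(Y × unitInterval, Y')) (t : unitInterval) : C(Y, Y') :=
  ⟨fun y => H (y, t), H.continuous.comp (Continuous.prodMk_left t)⟩

lemma push_slice (H : C(Y × unitInterval, Y')) (h : C(K.P, Y)) (t : unitInterval) (n : ℕ)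
    (x : (Lists K.P).C n) :
    push (cylHom H h) n (lmap (slice K t) n x) = smap (hEnd H t) n (push h n x) := by
  have hc : Continuous (slice K t) :=
    Continuous.subtype_mk (Continuous.prodMk continuous_subtype_val continuous_const) _
  have ha : IsAff (slice K t) := by
    intro n v x
    apply Subtype.ext
    refine Prod.ext ?_ ?_
    · rw [aff_coe, Prod.fst_sum]; rfl
    · rw [aff_coe, Prod.snd_sum]
      change t.1 = ∑ i, x i * t.1
      have hx : ∑ i, x i = 1 := x.2.2
      rw [← Finset.sum_mul, hx, one_mul]
  rw [smap_push]
  exact push_lmap (cylHom H h) ⟨_, hc⟩ ha n x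

lemma d_PS_zero (H : C(Y × unitInterval, Y')) (x : (Sing Y).C 0) :
    (Sing Y').d 0 (PS H 0 x) = smap (hEnd H 1) 0 x - smap (hEnd H 0) 0 x := by
  suffices h : ((Sing Y').d 0).comp (PS H 0) = smap (hEnd H 1) 0 - smap (hEnd H 0) 0 from
    LinearMap.congr_fun h x
  refine sing_hom_ext fun σ => ?_
  rw [LinearMap.comp_apply, LinearMap.sub_apply, ← push_vtx, ← push_Pl, d_push,
    d_coneHtpy_zero (augMap_lmap _) (augMap_lmap _), map_sub, push_slice, push_slice]

lemma d_PS_succ (H : C(Y × unitInterval, Y')) (n : ℕ) (x : (Sing Y).C (n + 1)) :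
    (Sing Y').d (n + 1) (PS H (n + 1) x) =
      smap (hEnd H 1) (n + 1) x - smap (hEnd H 0) (n + 1) x - PS H n ((Sing Y).d n x) := by
  suffices h : ((Sing Y').d (n + 1)).comp (PS H (n + 1)) =
    smap (hEnd H 1) (n + 1) - smap (hEnd H 0) (n + 1) - (PS H n).comp ((Sing Y).d n) from
      LinearMap.congr_fun h x
  refine sing_hom_ext fun σ => ?_
  rw [LinearMap.comp_apply, LinearMap.sub_apply, LinearMap.sub_apply, LinearMap.comp_apply,
    ← push_vtx, ← push_Pl, d_push,
    d_coneHtpy_succ (augMap_lmap _) (augMap_lmap _), map_sub, map_sub, push_slice, push_slice,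
    push_Pl, d_push]

end Aff

end

section

/-! ### Subcomplexes of singular chains lying in a subset -/

lemma supported_induct {α M : Type} [AddCommGroup M] {S : Set α} (f : (α →₀ ℤ) →ₗ[ℤ] M)
    (P : Submodule ℤ M) (h : ∀ a ∈ S, f (Finsupp.single a 1) ∈ P) {x : α →₀ ℤ}
    (hx : x ∈ Finsupp.supported ℤ ℤ S) : f x ∈ P := by
  rw [Finsupp.supported_eq_span_single] at hx
  have : Submodule.span ℤ ((fun i => Finsupp.single i (1 : ℤ)) '' S) ≤ P.comap f := by
    rw [Submodule.span_le]
    rintro _ ⟨a, ha, rfl⟩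
    exact h a ha
  exact this hx

section Sub
variable {Y Y' : Type} [TopologicalSpace Y] [TopologicalSpace Y'] {K : CSet}

/-- The singular chains of `Y` supported on simplices contained in `U`. -/
def sub (U : Set Y) : (Sing Y).Sub where
  s n := Finsupp.supported ℤ ℤ {σ : C(Simplex n, Y) | ∀ x, σ x ∈ U}
  d_mem n x hx := by
    refine supported_induct ((Sing Y).d n) _ (fun σ hσ => ?_) hx
    refine Set.mem_of_eq_of_mem (d_sgl σ) ?_
    refine Submodule.sum_mem _ fun i _ => Submodule.smul_mem _ _ ?_
    exact Finsupp.single_mem_supported _ _ fun x => hσ _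

lemma sub_s (U : Set Y) (n : ℕ) :
    (sub U).s n = Finsupp.supported ℤ ℤ {σ : C(Simplex n, Y) | ∀ x, σ x ∈ U} := rfl

lemma sgl_mem_sub {U : Set Y} {n : ℕ} {σ : C(Simplex n, Y)} (h : ∀ x, σ x ∈ U) :
    sgl σ ∈ (sub U).s n := Finsupp.single_mem_supported _ _ h

lemma sub_induct {M : Type} [AddCommGroup M] {U : Set Y} {n : ℕ} (f : (Sing Y).C n →ₗ[ℤ] M)
    (P : Submodule ℤ M) (h : ∀ σ : C(Simplex n, Y), (∀ x, σ x ∈ U) → f (sgl σ) ∈ P)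
    {x : (Sing Y).C n} (hx : x ∈ (sub U).s n) : f x ∈ P := supported_induct f P h hx

lemma lists_induct {A M : Type} [AddCommGroup M] {n : ℕ} {S : Set (Fin (n + 1) → A)}
    (f : (Lists A).C n →ₗ[ℤ] M) (P : Submodule ℤ M) (h : ∀ v ∈ S, f (lst v) ∈ P)
    {x : (Lists A).C n} (hx : x ∈ Finsupp.supported ℤ ℤ S) : f x ∈ P := supported_induct f P h hx

lemma sub_mono {U V : Set Y} (h : U ⊆ V) : sub U ≤ sub V := fun _ =>
  Finsupp.supported_mono fun _ hσ x => h (hσ x)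

lemma sub_inf (U V : Set Y) : sub U ⊓ sub V = sub (U ∩ V) := by
  apply Cplx.Sub.ext
  funext n
  refine (Finsupp.supported_inter (M := ℤ) (R := ℤ) {σ : C(Simplex n, Y) | ∀ x, σ x ∈ U}
    {σ : C(Simplex n, Y) | ∀ x, σ x ∈ V}).symm.trans ?_
  rw [sub_s]
  congr 1
  ext σ
  exact forall_and.symm

lemma sub_empty : sub (∅ : Set Y) = ⊥ := by
  apply Cplx.Sub.ext
  funext n
  rw [sub_s]
  have : {σ : C(Simplex n, Y) | ∀ x, σ x ∈ (∅ : Set Y)} = ∅ := by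
    ext σ
    exact ⟨fun h => h (stdSimplex.vertex 0), fun h => h.elim⟩
  rw [this, Finsupp.supported_empty]
  rfl

lemma push_mem {U : Set Y} {h : C(K.P, Y)} (hU : ∀ z, h z ∈ U) (n : ℕ) (x : (Lists K.P).C n) :
    push h n x ∈ (sub U).s n := by
  have hx : x ∈ Finsupp.supported ℤ ℤ (Set.univ : Set (Fin (n + 1) → K.P)) := by
    rw [Finsupp.supported_univ]; trivial
  refine lists_induct (push h n) _ (fun v _ => ?_) hx
  rw [push_lst]
  exact sgl_mem_sub fun x => hU _

lemma SdS_mem {U : Set Y} {n : ℕ} {x : (Sing Y).C n} (hx : x ∈ (sub U).s n) :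
    SdS Y n x ∈ (sub U).s n := by
  refine sub_induct (SdS Y n) _ (fun σ hσ => ?_) hx
  rw [SdS, singExt_sgl]
  exact push_mem hσ _ _

lemma TS_mem {U : Set Y} {n : ℕ} {x : (Sing Y).C n} (hx : x ∈ (sub U).s n) :
    TS Y n x ∈ (sub U).s (n + 1) := by
  refine sub_induct (TS Y n) _ (fun σ hσ => ?_) hx
  rw [TS, singExt_sgl]
  exact push_mem hσ _ _

lemma PS_mem {U : Set Y} {V : Set Y'} {H : C(Y × unitInterval, Y')}
    (hH : ∀ y ∈ U, ∀ t, H (y, t) ∈ V) {n : ℕ} {x : (Sing Y).C n} (hx : x ∈ (sub U).s n) :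
    PS H n x ∈ (sub V).s (n + 1) := by
  refine sub_induct (PS H n) _ (fun σ hσ => ?_) hx
  rw [PS, singExt_sgl]
  exact push_mem (fun z => hH _ (hσ _) _) _ _

lemma smap_mem {U : Set Y} {V : Set Y'} {f : C(Y, Y')} (hf : ∀ y ∈ U, f y ∈ V) {n : ℕ}
    {x : (Sing Y).C n} (hx : x ∈ (sub U).s n) : smap f n x ∈ (sub V).s n := by
  refine sub_induct (smap f n) _ (fun σ hσ => ?_) hx
  rw [smap_sgl]
  exact sgl_mem_sub fun x => hf _ (hσ x)

/-! ### Deformation retractions -/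

open Classical in
/-- Restriction of chains to a subspace, discarding the simplices not contained in it. -/
def srestr (W : Set Y) (n : ℕ) : (Sing Y).C n →ₗ[ℤ] (Sing W).C n :=
  singExt fun σ => if h : ∀ x, σ x ∈ W then
    sgl ⟨fun x => ⟨σ x, h x⟩, Continuous.subtype_mk σ.continuous h⟩ else 0

/-- The inclusion of a subspace. -/
def incl (W : Set Y) : C(W, Y) := ⟨Subtype.val, continuous_subtype_val⟩

lemma srestr_smap (W : Set Y) (n : ℕ) (x : (Sing W).C n) : srestr W n (smap (incl W) n x) = x := by
  suffices h : (srestr W n).comp (smap (incl W) n) = LinearMap.id from LinearMap.congr_fun h x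
  refine sing_hom_ext fun σ => ?_
  rw [LinearMap.comp_apply, smap_sgl, srestr, singExt_sgl, dif_pos (show ∀ x, ((incl W).comp σ) x ∈ W from fun x => (σ x).2)]
  rfl

lemma smap_srestr {W : Set Y} {n : ℕ} {x : (Sing Y).C n} (hx : x ∈ (sub W).s n) :
    smap (incl W) n (srestr W n x) = x := by
  have := sub_induct ((smap (incl W) n).comp (srestr W n) - LinearMap.id) ⊥ (fun σ hσ => ?_) hx
  · rw [Submodule.mem_bot, LinearMap.sub_apply, sub_eq_zero] at this
    exact this
  · rw [Submodule.mem_bot, LinearMap.sub_apply, sub_eq_zero, LinearMap.comp_apply, srestr,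
      singExt_sgl, dif_pos hσ, smap_sgl]
    rfl

lemma srestr_mem (W : Set Y) {U : Set Y} {n : ℕ} {x : (Sing Y).C n} (hx : x ∈ (sub U).s n) :
    srestr W n x ∈ (sub ((fun w : W => (w : Y)) ⁻¹' U)).s n := by
  refine sub_induct (srestr W n) _ (fun σ hσ => ?_) hx
  rw [srestr, singExt_sgl]
  split_ifs with h
  · exact sgl_mem_sub hσ
  · exact Submodule.zero_mem _

lemma d_srestr {W : Set Y} {n : ℕ} {x : (Sing Y).C (n + 1)} (hx : x ∈ (sub W).s (n + 1)) :
    (Sing W).d n (srestr W (n + 1) x) = srestr W n ((Sing Y).d n x) := by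
  rw [← srestr_smap W n ((Sing W).d n _), ← d_smap, smap_srestr hx]

/-- A weak deformation retraction of `W` onto `A` induces a homology isomorphism. -/
theorem relAcyclic_of_homotopy {A W : Set Y} (H : C(W × unitInterval, Y))
    (h0 : ∀ y, H (y, 0) = y) (hW : ∀ y t, H (y, t) ∈ W) (h1 : ∀ y, H (y, 1) ∈ A)
    (hA : ∀ y : W, (y : Y) ∈ A → ∀ t, H (y, t) ∈ A) : Cplx.RelAcyclic (sub A) (sub W) := by
  rw [Cplx.relAcyclic_iff]
  intro n x hx hd
  refine ⟨-PS H n (srestr W n x), Submodule.neg_mem _ (PS_mem (U := Set.univ)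
    (fun y _ t => hW y t) ?_), ?_⟩
  · refine (Finsupp.mem_supported _ _).2 fun σ _ x => trivial
  · have e0 : hEnd H 0 = incl W := by
      ext y; exact h0 y
    have m1 : smap (hEnd H 1) n (srestr W n x) ∈ (sub A).s n :=
      smap_mem (U := Set.univ) (fun y _ => h1 y)
        ((Finsupp.mem_supported _ _).2 fun σ _ x => trivial)
    cases n with
    | zero =>
      rw [map_neg, sub_neg_eq_add, d_PS_zero, e0, smap_srestr hx, add_sub_cancel]
      exact m1
    | succ n =>
      rw [map_neg, sub_neg_eq_add, d_PS_succ, e0, smap_srestr hx, d_srestr hx]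
      have m2 : PS H n (srestr W n ((Sing Y).d n x)) ∈ (sub A).s (n + 1) :=
        PS_mem (fun y hy t => hA y hy t) (srestr_mem W (show (Sing Y).d n x ∈ (sub A).s n from hd))
      have := Submodule.sub_mem _ m1 m2
      convert this using 1
      abel

/-! ### Small simplices -/

/-- Pairwise distances of the entries are at most `r`. -/
def Fine (K : CSet) (n : ℕ) (r : ℝ) : Set (Fin (n + 1) → K.P) :=
  {v | ∀ i j, dist (v i) (v j) ≤ r}

/-- The entries of `w` lie in the convex hull of the entries of `v`. -/
def Within {m n : ℕ} (v : Fin (n + 1) → K.P) : Set (Fin (m + 1) → K.P) :=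
  {w | ∀ i, ((w i : K.P) : K.V) ∈ convexHull ℝ (Set.range fun j => (v j : K.V))}

lemma aff_mem_hull {n : ℕ} (v : Fin (n + 1) → K.P) (x : Simplex n) :
    (aff v x : K.V) ∈ convexHull ℝ (Set.range fun j => (v j : K.V)) :=
  (convex_convexHull ℝ _).sum_mem (fun i _ => x.2.1 i) x.2.2
    (fun i _ => subset_convexHull ℝ _ ⟨i, rfl⟩)

/-- The barycentre of `n + 2` points with mutual distances at most `r` has distance at most
`(n + 1) / (n + 2) * r` from each of them. -/
lemma dist_bary_le {n : ℕ} {r : ℝ} {v : Fin (n + 2) → K.P} (hv : v ∈ Fine K (n + 1) r)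
    (i : Fin (n + 2)) : dist ((bary K (n + 1) v : K.P) : K.V) (v i) ≤ (n + 1) / (n + 2) * r := by
  have hb : ((bary K (n + 1) v : K.P) : K.V) = ∑ j, ((n : ℝ) + 2)⁻¹ • (v j : K.V) := by
    rw [bary, aff_coe]
    refine Finset.sum_congr rfl fun j _ => ?_
    congr 1
    change (((Fintype.card (Fin (n + 1 + 1)) : ℕ) : ℝ))⁻¹ = _
    rw [Fintype.card_fin]
    push_cast
    rw [add_assoc, one_add_one_eq_two]
  have hn : ((n : ℝ) + 2) ≠ 0 := by positivity
  have h1 : (v i : K.V) = ∑ _j : Fin (n + 2), ((n : ℝ) + 2)⁻¹ • (v i : K.V) := by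
    rw [Finset.sum_const, Finset.card_univ, Fintype.card_fin, ← Nat.cast_smul_eq_nsmul ℝ, smul_smul]
    push_cast
    rw [mul_inv_cancel₀ hn, one_smul]
  rw [dist_eq_norm, hb]
  conv_lhs => rw [h1]
  rw [← Finset.sum_sub_distrib]
  simp only [← smul_sub]
  rw [← Finset.smul_sum, norm_smul, Real.norm_of_nonneg (by positivity)]
  have h2 : ‖∑ j, ((v j : K.V) - (v i : K.V))‖ ≤ (n + 1) * r := by
    rw [← Finset.add_sum_erase _ _ (Finset.mem_univ i), sub_self, zero_add]
    refine (norm_sum_le_of_le _ (f := fun j => (v j : K.V) - (v i : K.V)) (n := fun _ => r)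
      fun j _ => ?_).trans (le_of_eq ?_)
    · rw [← dist_eq_norm]; exact hv j i
    · rw [Finset.sum_const, Finset.card_erase_of_mem (Finset.mem_univ i), Finset.card_univ,
        Fintype.card_fin, nsmul_eq_mul]
      push_cast; simp
  calc ((n : ℝ) + 2)⁻¹ * _ ≤ ((n : ℝ) + 2)⁻¹ * ((n + 1) * r) := by gcongr
    _ = _ := by field_simp

lemma dist_hull_le {n : ℕ} {b : K.V} {R : ℝ} {v : Fin (n + 1) → K.P}
    (h : ∀ i, dist b (v i) ≤ R) {z : K.V}
    (hz : z ∈ convexHull ℝ (Set.range fun j => (v j : K.V))) : dist b z ≤ R := by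
  have : convexHull ℝ (Set.range fun j => (v j : K.V)) ⊆ Metric.closedBall b R := by
    refine convexHull_min ?_ (convex_closedBall b R)
    rintro _ ⟨j, rfl⟩
    rw [Metric.mem_closedBall, dist_comm]; exact h j
  have := this hz
  rwa [Metric.mem_closedBall, dist_comm] at this

/-- Barycentric subdivision shrinks simplices of dimension `n` by the factor `n / (n + 1)`. -/
lemma sd_fine {n : ℕ} {r : ℝ} (v : Fin (n + 1) → K.P) (hv : v ∈ Fine K n r) :
    Sd K n (lst v) ∈ Finsupp.supported ℤ ℤ (Within v ∩ Fine K n (n / (n + 1) * r)) := by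
  have hr : 0 ≤ r := le_trans dist_nonneg (hv 0 0)
  induction n with
  | zero =>
    refine Finsupp.single_mem_supported _ _ ⟨fun i => subset_convexHull ℝ _ ⟨i, rfl⟩, fun i j => ?_⟩
    obtain rfl : i = j := Subsingleton.elim (α := Fin 1) _ _
    simp
  | succ n ih =>
    have e : Sd K (n + 1) (lst v) = ∑ i : Fin (n + 2), (-1 : ℤ) ^ (i : ℕ) •
        lcone (bary K (n + 1) v) n (Sd K n (lst (v ∘ i.succAbove))) := by
      rw [Sd, subdiv, listExt_lst, d_lst]
      simp only [map_sum, map_smul]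
    rw [e]
    refine Submodule.sum_mem _ fun i _ => Submodule.smul_mem _ _ ?_
    have hi := ih (v ∘ i.succAbove) (fun j k => hv _ _)
    refine lists_induct _ _ (fun w hw => ?_) hi
    rw [lcone, listExt_lst]
    have hw1 : ∀ j, ((w j : K.P) : K.V) ∈ convexHull ℝ (Set.range fun j => (v j : K.V)) := fun j =>
      convexHull_mono (by rintro _ ⟨k, rfl⟩; exact ⟨_, rfl⟩) (hw.1 j)
    have hc : (n : ℝ) / (n + 1) * r ≤ ((n + 1 : ℕ) : ℝ) / ((n + 1 : ℕ) + 1) * r := by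
      refine mul_le_mul_of_nonneg_right ?_ hr
      push_cast
      rw [div_le_div_iff₀ (by positivity) (by positivity)]
      nlinarith
    have hb : ∀ j, dist (bary K (n + 1) v) (w j) ≤ ((n + 1 : ℕ) : ℝ) / ((n + 1 : ℕ) + 1) * r := by
      intro j
      refine (dist_hull_le (fun k => dist_bary_le hv k) (hw1 j)).trans (le_of_eq ?_)
      push_cast
      ring
    refine Finsupp.single_mem_supported _ _ ⟨fun j => ?_, fun j k => ?_⟩
    · refine Fin.cases ?_ (fun j => ?_) j
      · exact aff_mem_hull _ _
      · exact hw1 j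
    · refine Fin.cases ?_ (fun j => ?_) j <;> refine Fin.cases ?_ (fun k => ?_) k
      · simp only [Fin.cons_zero, dist_self]; positivity
      · exact hb k
      · rw [dist_comm]; exact hb j
      · exact (hw.2 j k).trans hc

lemma sd_iter_fine {n : ℕ} {r : ℝ} (k : ℕ) {x : (Lists K.P).C n}
    (hx : x ∈ Finsupp.supported ℤ ℤ (Fine K n r)) :
    (Sd K n)^[k] x ∈ Finsupp.supported ℤ ℤ (Fine K n (((n : ℝ) / (n + 1)) ^ k * r)) := by
  induction k with
  | zero => simpa using hx
  | succ k ih =>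
    rw [Function.iterate_succ_apply']
    refine lists_induct (Sd K n) _ (fun v hv => ?_) ih
    have := sd_fine v hv
    rw [← mul_assoc, ← pow_succ'] at this
    exact Finsupp.supported_mono Set.inter_subset_right this

lemma SdS_iter_push (h : C(K.P, Y)) (n k : ℕ) (x : (Lists K.P).C n) :
    (SdS Y n)^[k] (push h n x) = push h n ((Sd K n)^[k] x) := by
  induction k with
  | zero => rfl
  | succ k ih => rw [Function.iterate_succ_apply', Function.iterate_succ_apply', ih, push_Sd]

/-- By the Lebesgue number lemma, the simplices of a sufficiently fine subdivision lie in `U` or in `V`. -/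
lemma exists_small {U V : Set Y} (hU : IsOpen U) (hV : IsOpen V) {n : ℕ} (σ : C(Simplex n, Y))
    (hσ : ∀ x, σ x ∈ U ∪ V) : ∃ k, (SdS Y n)^[k] (sgl σ) ∈ (sub U ⊔ sub V).s n := by
  obtain ⟨δ, hδ, hleb⟩ := lebesgue_number_lemma_of_metric (s := (Set.univ : Set (Simplex n)))
    (c := fun b : Bool => σ ⁻¹' (cond b U V)) isCompact_univ
    (fun b => by cases b; exacts [hV.preimage σ.continuous, hU.preimage σ.continuous])
    (fun x _ => by
      rcases hσ x with h | h
      · exact Set.mem_iUnion.2 ⟨true, h⟩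
      · exact Set.mem_iUnion.2 ⟨false, h⟩)
  obtain ⟨r, hr⟩ : ∃ r, vtx n ∈ Fine (std n) n r := by
    obtain ⟨C, hC⟩ := (Set.finite_range fun p : Fin (n + 1) × Fin (n + 1) =>
      dist (vtx n p.1) (vtx n p.2)).bddAbove
    exact ⟨C, fun i j => hC ⟨(i, j), rfl⟩⟩
  have hlim : Filter.Tendsto (fun k : ℕ => ((n : ℝ) / (n + 1)) ^ k * r) Filter.atTop
      (nhds (0 * r)) := by
    refine (tendsto_pow_atTop_nhds_zero_of_lt_one (by positivity) ?_).mul_const r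
    rw [div_lt_one (by positivity)]; linarith
  rw [zero_mul] at hlim
  obtain ⟨k, hk⟩ := (hlim.eventually (gt_mem_nhds hδ)).exists
  refine ⟨k, ?_⟩
  rw [← push_vtx, SdS_iter_push]
  have := sd_iter_fine k (Finsupp.single_mem_supported ℤ (1 : ℤ) hr)
  refine lists_induct (push (ofS σ) n) _ (fun w hw => ?_) this
  rw [push_lst]
  obtain ⟨b, hb⟩ := hleb (w 0) trivial
  have hin : ∀ x, σ (aff w x) ∈ cond b U V := by
    intro x
    refine hb ?_
    rw [Metric.mem_ball, dist_comm]
    refine lt_of_le_of_lt ?_ hk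
    exact dist_hull_le (b := ((w 0 : (std n).P) : (std n).V)) (fun i => hw 0 i) (aff_mem_hull w x)
  cases b with
  | true => exact Submodule.mem_sup_left (sgl_mem_sub hin)
  | false => exact Submodule.mem_sup_right (sgl_mem_sub hin)

lemma SdS_sup_mem {U V : Set Y} {n : ℕ} {x : (Sing Y).C n} (hx : x ∈ (sub U ⊔ sub V).s n) :
    SdS Y n x ∈ (sub U ⊔ sub V).s n := by
  obtain ⟨a, ha, b, hb, rfl⟩ := Submodule.mem_sup.1 hx
  rw [map_add]
  exact Submodule.add_mem_sup (SdS_mem ha) (SdS_mem hb)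

lemma SdS_iter_sup_mem {U V : Set Y} {n : ℕ} {x : (Sing Y).C n} {k l : ℕ} (hkl : k ≤ l)
    (hx : (SdS Y n)^[k] x ∈ (sub U ⊔ sub V).s n) : (SdS Y n)^[l] x ∈ (sub U ⊔ sub V).s n := by
  induction l, hkl using Nat.le_induction with
  | base => exact hx
  | succ l _ ih => rw [Function.iterate_succ_apply']; exact SdS_sup_mem ih

/-- The number of subdivisions can be chosen uniformly for the finitely many simplices of a chain. -/
lemma exists_small_chain {U V : Set Y} (hU : IsOpen U) (hV : IsOpen V) {n : ℕ} {x : (Sing Y).C n}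
    (hx : x ∈ (sub (U ∪ V)).s n) : ∃ k, (SdS Y n)^[k] x ∈ (sub U ⊔ sub V).s n := by
  have h : ∀ k, (SdS Y n)^[k] = ⇑((SdS Y n) ^ k) := fun k => (Module.End.coe_pow _ _).symm
  rw [sub_s, Finsupp.supported_eq_span_single] at hx
  induction hx using Submodule.span_induction with
  | mem x hx =>
    obtain ⟨σ, hσ, rfl⟩ := hx
    exact exists_small hU hV σ hσ
  | zero => exact ⟨0, Submodule.zero_mem _⟩
  | add x y _ _ hx hy =>
    obtain ⟨k, hk⟩ := hx
    obtain ⟨l, hl⟩ := hy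
    refine ⟨max k l, ?_⟩
    have h1 := SdS_iter_sup_mem (le_max_left k l) hk
    have h2 := SdS_iter_sup_mem (le_max_right k l) hl
    rw [h] at *
    rw [map_add]
    exact Submodule.add_mem _ h1 h2
  | smul a x _ hx =>
    obtain ⟨k, hk⟩ := hx
    refine ⟨k, ?_⟩
    rw [h] at *
    rw [map_smul]
    exact Submodule.smul_mem _ _ hk

/-- Excision: chains that are small with respect to an open cover compute homology. -/
theorem relAcyclic_sup {U V : Set Y} (hU : IsOpen U) (hV : IsOpen V) :
    Cplx.RelAcyclic (sub U ⊔ sub V) (sub (U ∪ V)) := by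
  rw [Cplx.relAcyclic_iff]
  intro n x hx hd
  obtain ⟨k, hk⟩ := exists_small_chain hU hV hx
  induction k generalizing x with
  | zero => exact ⟨0, Submodule.zero_mem _, by simpa using hk⟩
  | succ k ih =>
    rw [Function.iterate_succ_apply] at hk
    have hd' : SdS Y n x ∈ Cplx.dpre (sub U ⊔ sub V).s n := by
      cases n with
      | zero => trivial
      | succ n =>
        change (Sing Y).d n (SdS Y (n + 1) x) ∈ (sub U ⊔ sub V).s n
        rw [d_SdS]
        exact SdS_sup_mem hd
    obtain ⟨y, hy, hxy⟩ := ih _ (SdS_mem hx) hd' hk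
    refine ⟨y + TS Y n x, Submodule.add_mem _ hy (TS_mem hx), ?_⟩
    cases n with
    | zero =>
      rw [map_add, d_TS_zero]
      convert hxy using 1
      abel
    | succ n =>
      rw [map_add, d_TS_succ]
      have : TS Y n ((Sing Y).d n x) ∈ (sub U ⊔ sub V).s (n + 1) := by
        obtain ⟨a, ha, b, hb, hab⟩ := Submodule.mem_sup.1
          (show (Sing Y).d n x ∈ (sub U ⊔ sub V).s n from hd)
        rw [← hab, map_add]
        exact Submodule.add_mem_sup (TS_mem ha) (TS_mem hb)
      convert Submodule.add_mem _ hxy this using 1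
      abel

lemma sub_sup_le (U V : Set Y) : sub U ⊔ sub V ≤ sub (U ∪ V) := fun n =>
  sup_le (sub_mono Set.subset_union_left n) (sub_mono Set.subset_union_right n)

/-- Mayer–Vietoris for Euler characteristics. -/
theorem hasChi_union {U V : Set Y} (hU : IsOpen U) (hV : IsOpen V) {a b c : ℤ}
    (ha : Cplx.HasChi (sub U) a) (hb : Cplx.HasChi (sub V) b) (hc : Cplx.HasChi (sub (U ∩ V)) c) :
    Cplx.HasChi (sub (U ∪ V)) (a + b - c) := by
  rw [← sub_inf] at hc
  exact (relAcyclic_sup hU hV).hasChi (sub_sup_le U V) (ha.sup hb hc)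

/-- Mayer–Vietoris for homology isomorphisms. -/
theorem relAcyclic_union {U V U' V' : Set Y} (hU : IsOpen U) (hV : IsOpen V) (hU' : IsOpen U')
    (hV' : IsOpen V') (lU : U ⊆ U') (lV : V ⊆ V') (h₁ : Cplx.RelAcyclic (sub U) (sub U'))
    (h₂ : Cplx.RelAcyclic (sub V) (sub V')) (h₃ : Cplx.RelAcyclic (sub (U ∩ V)) (sub (U' ∩ V'))) :
    Cplx.RelAcyclic (sub (U ∪ V)) (sub (U' ∪ V')) := by
  rw [← sub_inf, ← sub_inf] at h₃
  have h := Cplx.RelAcyclic.sup (sub_mono lU) (sub_mono lV) h₁ h₂ h₃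
  refine Cplx.RelAcyclic.of_comp (relAcyclic_sup hU hV)
    (Cplx.RelAcyclic.trans (sub_sup_le _ _) h (relAcyclic_sup hU' hV') ?_) (sub_sup_le _ _)
    (sub_mono (Set.union_subset_union lU lV))
  exact fun n => sup_le_sup (sub_mono lU n) (sub_mono lV n)

/-- Homology commutes with increasing unions of open sets. -/
theorem relAcyclic_iUnion {A : Set Y} {U : ℕ → Set Y} (hU : ∀ k, IsOpen (U k)) (hm : Monotone U)
    (h : ∀ k, Cplx.RelAcyclic (sub A) (sub (U k))) : Cplx.RelAcyclic (sub A) (sub (⋃ k, U k)) := by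
  rw [Cplx.relAcyclic_iff]
  intro n x hx hd
  obtain ⟨k, hk⟩ : ∃ k, x ∈ (sub (U k)).s n := by
    clear hd
    rw [sub_s, Finsupp.supported_eq_span_single] at hx
    induction hx using Submodule.span_induction with
    | mem x hx =>
      obtain ⟨σ, hσ, rfl⟩ := hx
      obtain ⟨k, hk⟩ := (isCompact_range σ.continuous).elim_directed_cover U hU
        (by rintro _ ⟨x, rfl⟩; exact hσ x) hm.directed_le
      exact ⟨k, sgl_mem_sub fun x => hk ⟨x, rfl⟩⟩
    | zero => exact ⟨0, Submodule.zero_mem _⟩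
    | add x y _ _ hx hy =>
      obtain ⟨k, hk⟩ := hx
      obtain ⟨l, hl⟩ := hy
      exact ⟨max k l, Submodule.add_mem _ (sub_mono (hm (le_max_left k l)) _ hk)
        (sub_mono (hm (le_max_right k l)) _ hl)⟩
    | smul a x _ hx =>
      obtain ⟨k, hk⟩ := hx
      exact ⟨k, Submodule.smul_mem _ _ hk⟩
  obtain ⟨y, hy, hxy⟩ := Cplx.relAcyclic_iff.1 (h k) n x hk hd
  exact ⟨y, sub_mono (Set.subset_iUnion U k) _ hy, hxy⟩

end Sub

end

section

/-! ### Comparison with singular homology -/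

section Compare
variable (Y : Type) [TopologicalSpace Y]

/-- The identification of the two models of singular chains. -/
def cEquiv (n : ℕ) : ((singularChainComplex Y).X n) ≃ₗ[ℤ] (Sing Y).C n :=
  Finsupp.domLCongr (R := ℤ) (M := ℤ)
    (TopCat.toSSetObjEquiv (TopCat.of Y) (Opposite.op (SimplexCategory.mk n)))

lemma cEquiv_single (n : ℕ)
    (σ : (TopCat.toSSet.obj (TopCat.of Y)).obj (Opposite.op (SimplexCategory.mk n))) :
    cEquiv Y n (Finsupp.single σ (1 : ℤ)) = sgl (TopCat.toSSetObjEquiv (TopCat.of Y) _ σ) :=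
  Finsupp.domLCongr_single _ _ _

lemma objD_apply (T : SimplicialObject (ModuleCat ℤ)) (n : ℕ)
    (z : T.obj (Opposite.op (SimplexCategory.mk (n + 1)))) :
    (AlgebraicTopology.AlternatingFaceMapComplex.objD T n).hom z =
      ∑ i : Fin (n + 2), (-1 : ℤ) ^ (i : ℕ) • (T.δ i).hom z := by
  simp [AlgebraicTopology.AlternatingFaceMapComplex.objD, ModuleCat.hom_sum]

lemma cEquiv_d (n : ℕ) (x : (singularChainComplex Y).X (n + 1)) :
    cEquiv Y n ((singularChainComplex Y).d (n + 1) n x) = (Sing Y).d n (cEquiv Y (n + 1) x) := by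
  suffices h : (cEquiv Y n).toLinearMap.comp ((singularChainComplex Y).d (n + 1) n).hom =
    ((Sing Y).d n).comp (cEquiv Y (n + 1)).toLinearMap from LinearMap.congr_fun h x
  refine Finsupp.lhom_ext' fun σ => LinearMap.ext_ring ?_
  change cEquiv Y n (((singularChainComplex Y).d (n + 1) n).hom (Finsupp.single σ (1 : ℤ))) =
    (Sing Y).d n (cEquiv Y (n + 1) (Finsupp.single σ (1 : ℤ)))
  have hd : (singularChainComplex Y).d (n + 1) n = _ :=
    AlgebraicTopology.alternatingFaceMapComplex_obj_d _ _
  rw [cEquiv_single, d_sgl, hd]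
  refine (congrArg (cEquiv Y n) (objD_apply _ n _)).trans ((map_sum _ _ _).trans ?_)
  refine Finset.sum_congr rfl fun i _ => ?_
  refine (map_smul (cEquiv Y n) _ _).trans (congrArg _ ?_)
  refine Eq.trans (congrArg (cEquiv Y n) (ModuleCat.free_map_apply _ _)) ?_
  refine (cEquiv_single Y n _).trans ?_
  rfl

/-- Singular homology is cycles modulo boundaries of the complex `sub Set.univ`. -/
lemma finrank_singularHomology (i : ℕ) : Module.finrank ℤ (singularHomology Y i) =
    Cardinal.toNat (relRank ((sub (Set.univ : Set Y)).B i) ((sub (Set.univ : Set Y)).Z i)) := by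
  let K := singularChainComplex Y
  let S := K.sc' (i + 1) i ((ComplexShape.down ℕ).next i)
  have e := (K.homologyIsoSc' (i + 1) i _ (by simp) rfl ≪≫ S.moduleCatHomologyIso).toLinearEquiv
  rw [show Module.finrank ℤ (singularHomology Y i) = _ from e.finrank_eq]
  have hs : ∀ n (x : (Sing Y).C n), x ∈ (sub (Set.univ : Set Y)).s n := fun n x =>
    (Finsupp.mem_supported _ _).2 fun _ _ _ => trivial
  have hZ : ∀ x : K.X i, x ∈ LinearMap.ker S.g.hom ↔ cEquiv Y i x ∈ (sub (Set.univ : Set Y)).Z i := by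
    intro x
    have h1 : cEquiv Y i x ∈ (sub (Set.univ : Set Y)).Z i ↔
        cEquiv Y i x ∈ Cplx.dpre (fun n => (⊥ : Submodule ℤ ((Sing Y).C n))) i :=
      ⟨fun h => h.2, fun h => ⟨hs _ _, h⟩⟩
    rw [h1]
    cases i with
    | zero =>
      refine ⟨fun _ => trivial, fun _ => ?_⟩
      have : S.g = 0 := K.shape _ _ (by simp)
      rw [this]; exact rfl
    | succ n =>
      change K.d (n + 1) ((ComplexShape.down ℕ).next (n + 1)) x = 0 ↔
        (Sing Y).d n (cEquiv Y (n + 1) x) = 0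
      rw [← cEquiv_d, ChainComplex.next_nat_succ]
      exact (LinearEquiv.map_eq_zero_iff _).symm
  let Φ : LinearMap.ker S.g.hom →ₗ[ℤ] (sub (Set.univ : Set Y)).Z i :=
    ((cEquiv Y i).toLinearMap.domRestrict _).codRestrict _ fun x => (hZ x.1).1 x.2
  let Ψ := (Submodule.mkQ (((sub (Set.univ : Set Y)).B i).submoduleOf
    ((sub (Set.univ : Set Y)).Z i))).comp Φ
  have hΨ : Function.Surjective Ψ := by
    refine (Submodule.mkQ_surjective (((sub (Set.univ : Set Y)).B i).submoduleOf
      ((sub (Set.univ : Set Y)).Z i))).comp (f := Φ) ?_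
    rintro ⟨y, hy⟩
    refine ⟨⟨(cEquiv Y i).symm y, (hZ _).2 (by simpa using hy)⟩, ?_⟩
    apply Subtype.ext
    exact (cEquiv Y i).apply_symm_apply y
  have hk : LinearMap.ker Ψ = LinearMap.range S.moduleCatToCycles := by
    ext ⟨x, hx⟩
    have h1 : (⟨x, hx⟩ : LinearMap.ker S.g.hom) ∈ LinearMap.ker Ψ ↔
        cEquiv Y i x ∈ (sub (Set.univ : Set Y)).B i := by
      rw [LinearMap.mem_ker, LinearMap.comp_apply, Submodule.mkQ_apply,
        Submodule.Quotient.mk_eq_zero]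
      exact Iff.rfl
    rw [h1]
    constructor
    · rintro ⟨y, -, hy⟩
      refine ⟨(cEquiv Y (i + 1)).symm y, Subtype.ext ?_⟩
      apply (cEquiv Y i).injective
      refine (cEquiv_d Y i _).trans ?_
      rw [LinearEquiv.apply_symm_apply]; exact hy
    · rintro ⟨y, hy⟩
      refine ⟨cEquiv Y (i + 1) y, hs _ _, ?_⟩
      exact (cEquiv_d Y i y).symm.trans (congrArg (cEquiv Y i) (congrArg Subtype.val hy))
  have := (Ψ.quotKerEquivOfSurjective hΨ).finrank_eq
  rw [hk] at this
  exact this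

/-- The Euler characteristic computed by `HasChi` is the topological Euler characteristic. -/
theorem eulerChar_eq {c : ℤ} (h : Cplx.HasChi (sub (Set.univ : Set Y)) c) : eulerChar Y = c := by
  obtain ⟨b, N, hb, hN, rfl⟩ := h
  have h1 : ∀ i, Module.finrank ℤ (singularHomology Y i) = b i := fun i => by
    rw [finrank_singularHomology, hb, Cardinal.toNat_natCast]
  rw [eulerChar]
  simp only [h1]
  apply finsum_eq_finsetSum_of_support_subset
  intro i hi
  by_contra hn
  rw [Finset.mem_coe, Finset.mem_range, not_lt] at hn
  exact hi (by simp [hN i hn])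

end Compare

/-! ### Discrete sets -/

section Points
variable {Y : Type} [TopologicalSpace Y]

lemma sub_singleton_apply {a : Y} {n : ℕ} {x : (Sing Y).C n} (hx : x ∈ (sub {a}).s n) :
    ∃ k : ℤ, x = k • sgl (ContinuousMap.const _ a) := by
  rw [sub_s] at hx
  have h := sub_induct (LinearMap.id) (Submodule.span ℤ {sgl (ContinuousMap.const _ a)})
    (fun σ hσ => ?_) hx
  · obtain ⟨k, hk⟩ := Submodule.mem_span_singleton.1 h
    exact ⟨k, hk.symm⟩
  · have : σ = ContinuousMap.const _ a := ContinuousMap.ext hσ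
    rw [this]
    exact Submodule.mem_span_singleton_self _

lemma d_const (a : Y) (n : ℕ) : (Sing Y).d n (sgl (ContinuousMap.const _ a)) =
    (if Even n then (0 : ℤ) else 1) • sgl (ContinuousMap.const _ a) := by
  rw [d_sgl]
  have : ∀ i : Fin (n + 2), (-1 : ℤ) ^ (i : ℕ) •
      sgl ((ContinuousMap.const (Simplex (n + 1)) a).comp (faceMap n i)) =
      (-1 : ℤ) ^ (i : ℕ) • sgl (ContinuousMap.const (Simplex n) a) := fun i => rfl
  rw [Finset.sum_congr rfl fun i _ => this i, ← Finset.sum_smul]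
  congr 1
  rw [Fin.sum_neg_one_pow]
  simp [Nat.even_add]

/-- A point has one simplex in each degree, and the boundary maps are alternately zero and bijective. -/
lemma hasChi_singleton (a : Y) : Cplx.HasChi (sub {a}) 1 := by
  refine ⟨fun n => if n = 0 then 1 else 0, 1, fun n => ?_, fun n hn => if_neg (by omega), by simp⟩
  have hc : ∀ n, sgl (ContinuousMap.const (Simplex n) a) ∈ (sub {a}).s n := fun n =>
    sgl_mem_sub fun _ => rfl
  cases n with
  | zero =>
    let f : (Sing Y).C 0 →ₗ[ℤ] ℤ := singExt fun _ => 1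
    have hf : ∀ k : ℤ, f (k • sgl (ContinuousMap.const _ a)) = k := fun k => by
      rw [map_smul, singExt_sgl]; simp
    have h1 : Function.Surjective (f.domRestrict ((sub {a}).Z 0)) := fun k =>
      ⟨⟨k • sgl (ContinuousMap.const _ a), Submodule.smul_mem _ _ (hc 0), trivial⟩, hf k⟩
    have h2 : LinearMap.ker (f.domRestrict ((sub {a}).Z 0)) =
        ((sub {a}).B 0).submoduleOf ((sub {a}).Z 0) := by
      ext ⟨x, hx⟩
      obtain ⟨k, rfl⟩ := sub_singleton_apply hx.1
      rw [mem_submoduleOf_iff, LinearMap.mem_ker]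
      constructor
      · intro h
        have hk : k = 0 := (hf k).symm.trans h
        subst hk
        exact Set.mem_of_eq_of_mem (zero_smul ℤ _) (Submodule.zero_mem _)
      · rintro ⟨y, hy, hyx⟩
        obtain ⟨l, rfl⟩ := sub_singleton_apply hy
        rw [map_smul, d_const, if_pos (by decide), zero_smul, smul_zero] at hyx
        refine (hf k).trans ?_
        have := congrArg f hyx
        rw [map_zero] at this
        exact (this.trans (hf k)).symm
    have h3 := (LinearMap.quotKerEquivOfSurjective _ h1).rank_eq
    rw [h2, Module.rank_self] at h3
    simpa [relRank] using h3
  | succ n =>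
    have : (sub {a}).B (n + 1) = (sub {a}).Z (n + 1) := by
      refine le_antisymm (Cplx.Sub.B_le_Z _ _) ?_
      rintro x ⟨hx, hd⟩
      obtain ⟨k, rfl⟩ := sub_singleton_apply hx
      by_cases hn : Even n
      · refine ⟨k • sgl (ContinuousMap.const _ a), Submodule.smul_mem _ _ (hc _), ?_⟩
        rw [map_smul, d_const, if_neg (by simpa [Nat.even_add_one] using hn), one_smul]
      · have hd' : (Sing Y).d n (k • sgl (ContinuousMap.const _ a)) = 0 := hd
        rw [map_smul, d_const, if_neg hn, one_smul] at hd'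
        have h3 := congrArg (singExt (fun _ => (1 : ℤ)) : (Sing Y).C n →ₗ[ℤ] ℤ) hd'
        rw [map_smul, singExt_sgl, map_zero, smul_eq_mul, mul_one] at h3
        rw [h3]
        exact Set.mem_of_eq_of_mem (zero_smul ℤ _) (Submodule.zero_mem _)
    rw [this, relRank_self]
    simp

/-- A finite discrete subset has Euler characteristic its number of points. -/
lemma hasChi_finite {F : Set Y} (hF : F.Finite) [DiscreteTopology F] :
    Cplx.HasChi (sub F) F.ncard := by
  suffices h : ∀ G : Set Y, G.Finite → G ⊆ F → Cplx.HasChi (sub G) G.ncard from h F hF le_rfl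
  intro G hG
  induction G, hG using Set.Finite.induction_on with
  | empty =>
    intro _
    rw [sub_empty, Set.ncard_empty]
    exact Cplx.HasChi.bot
  | @insert a G ha hG ih =>
    intro hGF
    have h1 := ih ((Set.subset_insert _ _).trans hGF)
    have h2 : sub (insert a G) = sub G ⊔ sub {a} := by
      apply Cplx.Sub.ext
      funext n
      refine le_antisymm ?_ ?_
      · intro x hx
        refine sub_induct LinearMap.id _ (fun σ hσ => ?_) hx
        let τ : C(Simplex n, F) :=
          ⟨fun x => ⟨σ x, hGF (hσ x)⟩, Continuous.subtype_mk σ.continuous _⟩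
        have : PreconnectedSpace (Simplex n) :=
          Subtype.preconnectedSpace (convex_stdSimplex ℝ (Fin (n + 1))).isPreconnected
        have hc : ∀ x y, σ x = σ y := fun x y =>
          congrArg Subtype.val (PreconnectedSpace.constant ‹_› τ.continuous (x := x) (y := y))
        rcases hσ (stdSimplex.vertex 0) with h | h
        · exact Submodule.mem_sup_right (sgl_mem_sub fun x => (hc x _).trans h)
        · exact Submodule.mem_sup_left (sgl_mem_sub fun x => by rw [hc x]; exact h)
      · exact sup_le (sub_mono (Set.subset_insert _ _) n)
          (sub_mono (Set.singleton_subset_iff.2 (Set.mem_insert _ _)) n)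
    have h3 : sub G ⊓ sub {a} = ⊥ := by
      rw [sub_inf, Set.inter_singleton_eq_empty.2 ha, sub_empty]
    rw [h2, Set.ncard_insert_of_notMem ha hG]
    have := h1.sup (hasChi_singleton a) (by rw [h3]; exact Cplx.HasChi.bot)
    simpa using this

end Points

end

section

/-! ### Lifting deformations to coverings -/

section Cover

/-- A deformation of the base of a covering, lifted to the total space, gives a homology
isomorphism. -/
theorem relAcyclic_lift {Y E B : Type} [TopologicalSpace Y] [TopologicalSpace E]
    [TopologicalSpace B] {q : E → B} (hq : IsCoveringMap q) {ι : E → Y} (hι : Continuous ι)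
    {A W : Set Y} (g : C(unitInterval × W, B)) (l : C(W, E)) (hl : ∀ y, ι (l y) = y)
    (hg : ∀ y, g (0, y) = q (l y)) (hW : ∀ y t e, q e = g (t, y) → ι e ∈ W)
    (h1 : ∀ y e, q e = g (1, y) → ι e ∈ A)
    (hA : ∀ y : W, (y : Y) ∈ A → ∀ t e, q e = g (t, y) → ι e ∈ A) :
    Cplx.RelAcyclic (sub A) (sub W) := by
  have hL : ∀ z, q (hq.liftHomotopy g l hg z) = g z := fun z =>
    congrFun (hq.liftHomotopy_lifts g l hg) z
  refine relAcyclic_of_homotopy ⟨fun z => ι (hq.liftHomotopy g l hg (z.2, z.1)), ?_⟩ ?_ ?_ ?_ ?_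
  · exact hι.comp ((hq.liftHomotopy g l hg).continuous.comp continuous_swap)
  · intro y
    exact (congrArg ι (hq.liftHomotopy_zero g l hg y)).trans (hl y)
  · exact fun y t => hW y t _ (hL _)
  · exact fun y => h1 y _ (hL _)
  · exact fun y hy t => hA y hy t _ (hL _)

variable {P : Type} [TopologicalSpace P] {D : Set P} {E : Type} [TopologicalSpace E]

/-- The part of the total space lying over a set `W ⊆ P`. -/
def above (p : E → ↥Dᶜ) (W : Set P) : Set E := {e | (p e : P) ∈ W}

lemma above_mono {P E : Type} {D : Set P} {p : E → ↥Dᶜ} {W W' : Set P} (h : W ⊆ W') : above p W ⊆ above p W' := fun _ he => h he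

lemma above_isOpen {p : E → ↥Dᶜ} (hp : Continuous p) {W : Set P} (h : IsOpen W) :
    IsOpen (above p W) := h.preimage (continuous_subtype_val.comp hp)

variable {Q : Type} [TopologicalSpace Q]

/-- A weak deformation retraction of `W` to `A`. -/
structure Wdr (A W : Set Q) where
  /-- The deformation. -/
  h : ℝ → Q → Q
  sub : A ⊆ W
  cont : ContinuousOn (Function.uncurry h) (Set.Icc 0 1 ×ˢ W)
  zero : ∀ w ∈ W, h 0 w = w
  mem : ∀ s ∈ Set.Icc (0 : ℝ) 1, ∀ w ∈ W, h s w ∈ W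
  one : ∀ w ∈ W, h 1 w ∈ A
  memA : ∀ s ∈ Set.Icc (0 : ℝ) 1, ∀ w ∈ A, h s w ∈ A

/-- A deformation of `W` into `A` inside a chart lifts to the part of a covering lying over `W`. -/
theorem Wdr.relAcyclic {p : E → ↥Dᶜ} (hp : IsCoveringMap p) {j : Q → P}
    (hj : Topology.IsOpenEmbedding j) {A W : Set Q} (H : Wdr A W) (hW : ∀ w ∈ W, j w ∉ D) :
    Cplx.RelAcyclic (PlaneCurve.sub (above p (j '' A))) (PlaneCurve.sub (above p (j '' W))) := by
  choose k hkW hk using fun e : above p (j '' W) => e.2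
  have hkc : Continuous k := by
    rw [hj.isEmbedding.continuous_iff]
    have : j ∘ k = fun e : above p (j '' W) => (p e.1 : P) := funext hk
    rw [this]
    exact continuous_subtype_val.comp (hp.continuous.comp continuous_subtype_val)
  have hgm : ∀ z : unitInterval × above p (j '' W), H.h z.1 (k z.2) ∈ W := fun z =>
    H.mem _ z.1.2 _ (hkW _)
  have hinj : ∀ {A : Set Q} {w}, j w ∈ j '' A ↔ w ∈ A := fun {A w} =>
    hj.injective.mem_set_image
  refine relAcyclic_lift hp continuous_id
    ⟨fun z => ⟨j (H.h z.1 (k z.2)), hW _ (hgm z)⟩, ?_⟩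
    ⟨Subtype.val, continuous_subtype_val⟩ (fun _ => rfl) ?_ ?_ ?_ ?_
  · refine Continuous.subtype_mk (hj.continuous.comp ?_) _
    have hc : Continuous fun z : unitInterval × above p (j '' W) => ((z.1 : ℝ), k z.2) := by
      fun_prop
    exact H.cont.comp_continuous hc fun z => ⟨z.1.2, hkW _⟩
  · intro y
    apply Subtype.ext
    change j (H.h 0 (k y)) = (p y.1 : P)
    rw [H.zero _ (hkW y), hk]
  · intro y t e he
    have := congrArg Subtype.val he
    change (p e : P) ∈ j '' W
    rw [this]
    exact (hinj.2 (hgm (t, y)))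
  · intro y e he
    have := congrArg Subtype.val he
    change (p e : P) ∈ j '' A
    rw [this]
    exact (hinj.2 (H.one _ (hkW _)))
  · intro y hy t e he
    have := congrArg Subtype.val he
    change (p e : P) ∈ j '' A
    rw [this]
    refine hinj.2 (H.memA _ t.2 _ ?_)
    have hy' : (p y.1 : P) ∈ j '' A := hy
    rw [← hk y] at hy'
    exact hinj.1 hy'

/-- The Euler characteristic of a fibre. -/
lemma hasChi_fibre {p : E → ↥Dᶜ} (hp : IsCoveringMap p) {m : ℕ} (hm : 0 < m)
    (hc : ∀ b, Nat.card (p ⁻¹' {b}) = m) {x : P} (hx : x ∉ D) :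
    Cplx.HasChi (PlaneCurve.sub (above p {x})) m := by
  have h : above p {x} = p ⁻¹' {⟨x, hx⟩} := by
    ext e
    exact ⟨fun h => Subtype.ext h, fun h => congrArg Subtype.val h⟩
  rw [h]
  have := (hp ⟨x, hx⟩).discreteTopology_fiber
  have hf : (p ⁻¹' {⟨x, hx⟩}).Finite := by
    have : Finite (p ⁻¹' {⟨x, hx⟩}) := Nat.finite_of_card_ne_zero (by rw [hc]; omega)
    exact Set.toFinite _
  have h2 := hasChi_finite hf
  rwa [← Nat.card_coe_set_eq, hc] at h2

theorem Wdr.hasChi {p : E → ↥Dᶜ} (hp : IsCoveringMap p) {m : ℕ} (hm : 0 < m)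
    (hc : ∀ b, Nat.card (p ⁻¹' {b}) = m) {j : Q → P} (hj : Topology.IsOpenEmbedding j)
    {a : Q} {W : Set Q} (H : Wdr {a} W) (hW : ∀ w ∈ W, j w ∉ D) :
    Cplx.HasChi (PlaneCurve.sub (above p (j '' W))) m := by
  have h1 := H.relAcyclic hp hj hW
  rw [Set.image_singleton] at h1
  have h2 := hasChi_fibre hp hm hc (hW a (H.sub rfl))
  refine h1.hasChi (sub_mono (above_mono ?_)) h2
  rintro _ rfl
  exact ⟨a, H.sub rfl, rfl⟩

end Cover

/-! ### Finite disjoint unions -/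

section Disj
variable {Y : Type} [TopologicalSpace Y]

lemma hasChi_biUnion {ι : Type} [DecidableEq ι] (s : Finset ι) {U : ι → Set Y} {c : ι → ℤ}
    (hU : ∀ i ∈ s, IsOpen (U i)) (hd : ∀ i ∈ s, ∀ j ∈ s, i ≠ j → U i ∩ U j = ∅)
    (hc : ∀ i ∈ s, Cplx.HasChi (sub (U i)) (c i)) :
    Cplx.HasChi (sub (⋃ i ∈ s, U i)) (∑ i ∈ s, c i) := by
  induction s using Finset.induction_on with
  | empty => simpa [sub_empty] using Cplx.HasChi.bot
  | insert a s ha ih =>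
    have h1 := ih (fun i hi => hU i (Finset.mem_insert_of_mem hi))
      (fun i hi j hj => hd i (Finset.mem_insert_of_mem hi) j (Finset.mem_insert_of_mem hj))
      (fun i hi => hc i (Finset.mem_insert_of_mem hi))
    rw [Finset.set_biUnion_insert, Finset.sum_insert ha]
    have h2 := hasChi_union (hU a (Finset.mem_insert_self _ _))
      (isOpen_biUnion fun i hi => hU i (Finset.mem_insert_of_mem hi))
      (hc a (Finset.mem_insert_self _ _)) h1 (c := 0) ?_
    · simpa using h2
    · have : U a ∩ ⋃ i ∈ s, U i = ∅ := by
        rw [Set.inter_iUnion₂]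
        simp only [Set.iUnion_eq_empty]
        intro i hi
        exact hd a (Finset.mem_insert_self _ _) i (Finset.mem_insert_of_mem hi)
          (fun h => ha (h ▸ hi))
      change Cplx.HasChi (sub (U a ∩ ⋃ i ∈ s, U i)) 0
      rw [this, sub_empty]
      exact Cplx.HasChi.bot

/-- The homology of a finite disjoint union of open sets is a direct sum. -/
lemma relAcyclic_biUnion {ι : Type} [DecidableEq ι] (s : Finset ι) {U V : ι → Set Y}
    (hU : ∀ i ∈ s, IsOpen (U i)) (hV : ∀ i ∈ s, IsOpen (V i)) (hUV : ∀ i ∈ s, U i ⊆ V i)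
    (hd : ∀ i ∈ s, ∀ j ∈ s, i ≠ j → V i ∩ V j = ∅)
    (hc : ∀ i ∈ s, Cplx.RelAcyclic (sub (U i)) (sub (V i))) :
    Cplx.RelAcyclic (sub (⋃ i ∈ s, U i)) (sub (⋃ i ∈ s, V i)) := by
  induction s using Finset.induction_on with
  | empty => simpa using Cplx.RelAcyclic.refl _
  | insert a s ha ih =>
    have h1 := ih (fun i hi => hU i (Finset.mem_insert_of_mem hi))
      (fun i hi => hV i (Finset.mem_insert_of_mem hi))
      (fun i hi => hUV i (Finset.mem_insert_of_mem hi))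
      (fun i hi j hj => hd i (Finset.mem_insert_of_mem hi) j (Finset.mem_insert_of_mem hj))
      (fun i hi => hc i (Finset.mem_insert_of_mem hi))
    rw [Finset.set_biUnion_insert, Finset.set_biUnion_insert]
    have hl : (⋃ i ∈ s, U i) ⊆ ⋃ i ∈ s, V i :=
      Set.iUnion₂_mono fun i hi => hUV i (Finset.mem_insert_of_mem hi)
    refine relAcyclic_union (hU a (Finset.mem_insert_self _ _))
      (isOpen_biUnion fun i hi => hU i (Finset.mem_insert_of_mem hi))
      (hV a (Finset.mem_insert_self _ _))
      (isOpen_biUnion fun i hi => hV i (Finset.mem_insert_of_mem hi))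
      (hUV a (Finset.mem_insert_self _ _)) hl (hc a (Finset.mem_insert_self _ _)) h1 ?_
    have h0 : V a ∩ ⋃ i ∈ s, V i = ∅ := by
      rw [Set.inter_iUnion₂]
      simp only [Set.iUnion_eq_empty]
      intro i hi
      exact hd a (Finset.mem_insert_self _ _) i (Finset.mem_insert_of_mem hi)
        (fun h => ha (h ▸ hi))
    have h0' : U a ∩ ⋃ i ∈ s, U i = ∅ :=
      Set.subset_eq_empty (Set.inter_subset_inter (hUV a (Finset.mem_insert_self _ _)) hl) h0
    rw [h0, h0']
    exact Cplx.RelAcyclic.refl _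

end Disj

end

section

/-! ### Complements of moving discs -/

/-- Discs `{‖z - c j t‖ ≤ η t}`, `j < n`, moving with `t ∈ V`, whose real parts are separated by the
constants `x 0, …, x n` and whose imaginary parts are bounded by `y`. -/
structure Obst (n : ℕ) (c : ℕ → ℂ → ℂ) (η : ℂ → ℝ) (x : ℕ → ℝ) (y : ℝ) (V : Set ℂ) : Prop where
  isOpen : IsOpen V
  convex : Convex ℝ V
  cont : ∀ j < n, ContinuousOn (c j) V
  contη : ContinuousOn η V
  nonneg : ∀ t ∈ V, 0 ≤ η t
  left : ∀ t ∈ V, ∀ j < n, ∀ k ≤ j, x k < (c j t).re - η t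
  right : ∀ t ∈ V, ∀ j < n, ∀ k, j < k → k ≤ n → (c j t).re + η t < x k
  im : ∀ t ∈ V, ∀ j < n, |(c j t).im| + η t < y

namespace Obst

/-- The complement of the moving discs. -/
def compl (n : ℕ) (c : ℕ → ℂ → ℂ) (η : ℂ → ℝ) (V : Set ℂ) : Set (ℂ × ℂ) :=
  {q | q.1 ∈ V ∧ ∀ j < n, η q.1 < ‖q.2 - c j q.1‖}

/-- The points that avoid the discs when moving vertically in the direction `ε = ± 1`. -/
def half (ε : ℝ) (n : ℕ) (c : ℕ → ℂ → ℂ) (η : ℂ → ℝ) (V : Set ℂ) : Set (ℂ × ℂ) :=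
  {q | q.1 ∈ V ∧ ∀ j < n, η q.1 < |q.2.re - (c j q.1).re| ∨
    (ε * (c j q.1).im < ε * q.2.im ∧ η q.1 < ‖q.2 - c j q.1‖)}

/-- The vertical strip between the discs numbered `k - 1` and `k`. -/
def strip (k n : ℕ) (c : ℕ → ℂ → ℂ) (η : ℂ → ℝ) (V : Set ℂ) : Set (ℂ × ℂ) :=
  {q | q.1 ∈ V ∧ ∀ j < n, (j < k → (c j q.1).re + η q.1 < q.2.re) ∧
    (k ≤ j → q.2.re < (c j q.1).re - η q.1)}

variable {n : ℕ} {c : ℕ → ℂ → ℂ} {η : ℂ → ℝ} {x : ℕ → ℝ} {y : ℝ} {V V' : Set ℂ}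

lemma mono (o : Obst n c η x y V) (h : V' ⊆ V) (ho : IsOpen V') (hc : Convex ℝ V') :
    Obst n c η x y V' :=
  ⟨ho, hc, fun j hj => (o.cont j hj).mono h, o.contη.mono h, fun t ht => o.nonneg t (h ht),
    fun t ht => o.left t (h ht), fun t ht => o.right t (h ht), fun t ht => o.im t (h ht)⟩

lemma isOpen_forall {Q : Type} [TopologicalSpace Q] {A : Set Q} (hA : IsOpen A) (n : ℕ)
    {S : ℕ → Q → Prop} (h : ∀ j < n, IsOpen {q | q ∈ A ∧ S j q}) :
    IsOpen {q | q ∈ A ∧ ∀ j < n, S j q} := by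
  have : {q | q ∈ A ∧ ∀ j < n, S j q} = A ∩ ⋂ j ∈ Finset.range n, {q | q ∈ A ∧ S j q} := by
    ext q
    simp only [Set.mem_ofPred_eq, Set.mem_inter_iff, Set.mem_iInter, Finset.mem_range]
    exact ⟨fun h => ⟨h.1, fun j hj => ⟨h.1, h.2 j hj⟩⟩, fun h => ⟨h.1, fun j hj => (h.2 j hj).2⟩⟩
  rw [this]
  exact hA.inter (isOpen_biInter_finset fun j hj => h j (Finset.mem_range.1 hj))

lemma isOpen_lt_on {Q : Type} [TopologicalSpace Q] {A : Set Q} (hA : IsOpen A) {f g : Q → ℝ}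
    (hf : ContinuousOn f A) (hg : ContinuousOn g A) : IsOpen {q | q ∈ A ∧ f q < g q} := by
  have := (hg.sub hf).isOpen_inter_preimage hA (isOpen_Ioi (a := (0 : ℝ)))
  convert this using 1
  ext q
  simp [sub_pos]

/-- Points of `half ε` stay in `half ε` when they move in the direction `ε`. -/
lemma half_raise {ε : ℝ} (hε : ε = 1 ∨ ε = -1) {t z : ℂ} (hz : (t, z) ∈ half ε n c η V) {r : ℝ}
    (hr : 0 ≤ r) : (t, z + (ε * r : ℝ) * Complex.I) ∈ half ε n c η V := by
  refine ⟨hz.1, fun j hj => ?_⟩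
  have hεε : ε * ε = 1 := by rcases hε with rfl | rfl <;> norm_num
  rcases hz.2 j hj with h | ⟨h, h'⟩
  · left
    simpa using h
  · right
    dsimp only at h h' ⊢
    constructor
    · simp only [Complex.add_im, Complex.mul_im, Complex.ofReal_re, Complex.ofReal_im,
        Complex.I_re, Complex.I_im]
      nlinarith
    · refine h'.trans_le ?_
      rw [Complex.norm_def, Complex.norm_def]
      apply Real.sqrt_le_sqrt
      simp only [Complex.normSq_apply, Complex.sub_re, Complex.sub_im, Complex.add_re,
        Complex.add_im, Complex.mul_re, Complex.mul_im, Complex.ofReal_re, Complex.ofReal_im,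
        Complex.I_re, Complex.I_im, mul_zero, mul_one, sub_zero, add_zero]
      have : 0 ≤ ε * (z.im - (c j t).im) * r := mul_nonneg (by linarith) hr
      nlinarith [mul_nonneg hr hr]

section
variable (o : Obst n c η x y V)
include o

lemma prod_open : IsOpen (V ×ˢ (Set.univ : Set ℂ)) := o.isOpen.prod isOpen_univ

lemma cη : ContinuousOn (fun q : ℂ × ℂ => η q.1) (V ×ˢ (Set.univ : Set ℂ)) :=
  o.contη.comp continuousOn_fst fun _ h => h.1

lemma cc {j : ℕ} (hj : j < n) :
    ContinuousOn (fun q : ℂ × ℂ => c j q.1) (V ×ˢ (Set.univ : Set ℂ)) :=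
  (o.cont j hj).comp continuousOn_fst fun _ h => h.1

lemma isOpen_compl : IsOpen (compl n c η V) := by
  have := isOpen_forall o.prod_open n (S := fun j q => η q.1 < ‖q.2 - c j q.1‖) fun j hj =>
    isOpen_lt_on o.prod_open o.cη (continuousOn_snd.sub (o.cc hj)).norm
  convert this using 1
  ext q; simp [compl]

lemma isOpen_half (ε : ℝ) : IsOpen (half ε n c η V) := by
  have hre : ∀ j < n, ContinuousOn (fun q : ℂ × ℂ => (c j q.1).re) (V ×ˢ (Set.univ : Set ℂ)) :=
    fun j hj => Complex.continuous_re.comp_continuousOn (o.cc hj)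
  have him : ∀ j < n, ContinuousOn (fun q : ℂ × ℂ => ε * (c j q.1).im)
      (V ×ˢ (Set.univ : Set ℂ)) :=
    fun j hj => continuousOn_const.mul (Complex.continuous_im.comp_continuousOn (o.cc hj))
  have := isOpen_forall o.prod_open n (S := fun j q => η q.1 < |q.2.re - (c j q.1).re| ∨
    (ε * (c j q.1).im < ε * q.2.im ∧ η q.1 < ‖q.2 - c j q.1‖)) fun j hj => by
      have h1 := isOpen_lt_on o.prod_open o.cη (g := fun q => |q.2.re - (c j q.1).re|)
        (((Complex.continuous_re.comp continuous_snd).continuousOn).sub (hre j hj)).abs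
      have h2 := isOpen_lt_on o.prod_open (him j hj) (g := fun q => ε * q.2.im)
        (Continuous.continuousOn (by fun_prop))
      have h3 := isOpen_lt_on o.prod_open o.cη (continuousOn_snd.sub (o.cc hj)).norm
      convert h1.union (h2.inter h3) using 1
      ext q
      simp only [Set.mem_ofPred_eq, Set.mem_union, Set.mem_inter_iff]
      tauto
  convert this using 1
  ext q; simp [half]

lemma isOpen_strip (k : ℕ) : IsOpen (strip k n c η V) := by
  have hre : ∀ j < n, ContinuousOn (fun q : ℂ × ℂ => (c j q.1).re) (V ×ˢ (Set.univ : Set ℂ)) :=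
    fun j hj => Complex.continuous_re.comp_continuousOn (o.cc hj)
  have hz : ContinuousOn (fun q : ℂ × ℂ => q.2.re) (V ×ˢ (Set.univ : Set ℂ)) :=
    Continuous.continuousOn (by fun_prop)
  have := isOpen_forall o.prod_open n (S := fun j q => (j < k → (c j q.1).re + η q.1 < q.2.re) ∧
    (k ≤ j → q.2.re < (c j q.1).re - η q.1)) fun j hj => by
      rcases lt_or_ge j k with h | h
      · convert isOpen_lt_on o.prod_open ((hre j hj).add o.cη) hz using 1
        ext q
        simp [h]
      · convert isOpen_lt_on o.prod_open hz ((hre j hj).sub o.cη) using 1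
        ext q
        simp [h]
  convert this using 1
  ext q; simp [strip]

lemma mem_half {ε : ℝ} (hε : ε = 1 ∨ ε = -1) {t z : ℂ} (ht : t ∈ V) (hz : y ≤ ε * z.im) :
    (t, z) ∈ half ε n c η V := by
  refine ⟨ht, fun j hj => Or.inr ?_⟩
  have h1 := o.im t ht j hj
  have h0 := o.nonneg t ht
  have h2 := Complex.abs_im_le_norm (z - c j t)
  rw [Complex.sub_im] at h2
  have h3 := abs_le.1 h2
  have h4 := le_abs_self (c j t).im
  have h5 := neg_abs_le (c j t).im
  dsimp only
  rcases hε with rfl | rfl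
  · exact ⟨by linarith, by linarith⟩
  · exact ⟨by linarith, by linarith⟩

end

/-- `half` contracts to a point high up. -/
def wdrHalf (o : Obst n c η x y V) {ε : ℝ} (hε : ε = 1 ∨ ε = -1) {v : ℂ} (hv : v ∈ V) :
    Wdr {(v, (ε * y : ℝ) * Complex.I)} (half ε n c η V) where
  h s q := ((1 - max 0 (2 * s - 1)) • q.1 + max 0 (2 * s - 1) • v,
    (1 - max 0 (2 * s - 1)) • (q.2 + (ε * (min 1 (2 * s) * max 0 (y - ε * q.2.im)) : ℝ) * Complex.I)
      + max 0 (2 * s - 1) • ((ε * y : ℝ) * Complex.I))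
  sub := by
    rintro _ rfl
    refine o.mem_half hε hv (le_of_eq ?_)
    rcases hε with rfl | rfl <;> simp
  cont := by
    apply Continuous.continuousOn
    unfold Function.uncurry
    fun_prop
  zero := by
    rintro ⟨t, z⟩ -
    norm_num
  mem := by
    rintro s ⟨hs0, hs1⟩ ⟨t, z⟩ hz
    rcases le_total s (1 / 2) with h | h
    · have h1 : max 0 (2 * s - 1) = 0 := max_eq_left (by linarith)
      have h2 : 0 ≤ min 1 (2 * s) * max 0 (y - ε * z.im) :=
        mul_nonneg (le_min zero_le_one (by linarith)) (le_max_left _ _)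
      simp only [h1, sub_zero, one_smul, zero_smul, add_zero]
      exact half_raise hε hz h2
    · have h1 : max 0 (2 * s - 1) = 2 * s - 1 := max_eq_right (by linarith)
      have h2 : min 1 (2 * s) = 1 := min_eq_left (by linarith)
      have h3 : max 0 (y - ε * z.im) ≥ y - ε * z.im := le_max_right _ _
      simp only [h1, h2, one_mul]
      refine o.mem_half hε ?_ ?_
      · exact o.convex hz.1 hv (by linarith) (by linarith) (by ring)
      · generalize max 0 (y - ε * z.im) = M at h3
        simp only [Complex.add_im, Complex.smul_im, Complex.mul_im, Complex.ofReal_re,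
          Complex.ofReal_im, Complex.I_re, Complex.I_im, smul_eq_mul, mul_zero, mul_one, add_zero]
        have hεε : ε * ε = 1 := by rcases hε with rfl | rfl <;> norm_num
        have : ε * ((1 - (2 * s - 1)) * (z.im + ε * M) + (2 * s - 1) * (ε * y)) =
          (2 - 2 * s) * (ε * z.im + (ε * ε) * M) + (2 * s - 1) * (ε * ε) * y := by ring
        rw [this, hεε]
        nlinarith
  one := by
    rintro ⟨t, z⟩ -
    norm_num
  memA := by
    rintro s - _ rfl
    have hεε : ε * ε = 1 := by rcases hε with rfl | rfl <;> norm_num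
    have h : max 0 (y - ε * (((ε * y : ℝ) : ℂ) * Complex.I).im) = 0 := by
      apply max_eq_left
      simp only [Complex.mul_im, Complex.ofReal_re, Complex.ofReal_im, Complex.I_re, Complex.I_im]
      have : ε * (ε * y) = y := by rw [← mul_assoc, hεε, one_mul]
      linarith
    rw [Set.mem_singleton_iff]
    simp only [h, mul_zero, Complex.ofReal_zero, zero_mul, add_zero, ← add_smul, sub_add_cancel,
      one_smul]

/-- Each strip contracts to a point. -/
def wdrStrip (o : Obst n c η x y V) {k : ℕ} (hk : k ≤ n) {v : ℂ} (hv : v ∈ V) :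
    Wdr {(v, (x k : ℂ))} (strip k n c η V) where
  h s q := ((1 - max 0 (2 * s - 1)) • q.1 + max 0 (2 * s - 1) • v,
    (1 - min 1 (2 * s)) • q.2 + min 1 (2 * s) • (x k : ℂ))
  sub := by
    rintro _ rfl
    exact ⟨hv, fun j hj => ⟨fun h => by simpa using o.right v hv j hj k h hk,
      fun h => by simpa using o.left v hv j hj k h⟩⟩
  cont := by
    apply Continuous.continuousOn
    unfold Function.uncurry
    fun_prop
  zero := by
    rintro ⟨t, z⟩ -
    norm_num
  mem := by
    rintro s ⟨hs0, hs1⟩ ⟨t, z⟩ hz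
    rcases le_total s (1 / 2) with h | h
    · have h1 : max 0 (2 * s - 1) = 0 := max_eq_left (by linarith)
      have h2 : min 1 (2 * s) = 2 * s := min_eq_right (by linarith)
      simp only [h1, h2, sub_zero, one_smul, zero_smul, add_zero]
      have ht : t ∈ V := hz.1
      refine ⟨ht, fun j hj => ⟨fun h => ?_, fun h => ?_⟩⟩
      · have h3 := o.right t ht j hj k h hk
        have h4 := (hz.2 j hj).1 h
        simp only [Complex.add_re, Complex.smul_re, Complex.ofReal_re] at h4 ⊢
        exact convex_Ioi ((c j t).re + η t) (Set.mem_Ioi.2 h4) (Set.mem_Ioi.2 h3) (by linarith)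
          (by linarith) (by ring : 1 - 2 * s + 2 * s = 1)
      · have h3 := o.left t ht j hj k h
        have h4 := (hz.2 j hj).2 h
        simp only [Complex.add_re, Complex.smul_re, Complex.ofReal_re] at h4 ⊢
        exact convex_Iio ((c j t).re - η t) (Set.mem_Iio.2 h4) (Set.mem_Iio.2 h3) (by linarith)
          (by linarith) (by ring : 1 - 2 * s + 2 * s = 1)
    · have h1 : max 0 (2 * s - 1) = 2 * s - 1 := max_eq_right (by linarith)
      have h2 : min 1 (2 * s) = 1 := min_eq_left (by linarith)
      simp only [h1, h2, sub_self, zero_smul, one_smul, zero_add]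
      have ht : (1 - (2 * s - 1)) • t + (2 * s - 1) • v ∈ V :=
        o.convex hz.1 hv (by linarith) (by linarith) (by ring)
      exact ⟨ht, fun j hj => ⟨fun h => by simpa using o.right _ ht j hj k h hk,
        fun h => by simpa using o.left _ ht j hj k h⟩⟩
  one := by
    rintro ⟨t, z⟩ -
    norm_num
  memA := by
    rintro s - _ rfl
    rw [Set.mem_singleton_iff]
    simp only [← add_smul, sub_add_cancel, one_smul]

/-- A point off the discs is not blocked in both vertical directions: the disc above it and the disc
below it would have overlapping real projections, hence coincide, and the point would lie in it. -/
lemma half_union (o : Obst n c η x y V) : half 1 n c η V ∪ half (-1) n c η V = compl n c η V := by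
  ext ⟨t, z⟩
  have key : ∀ ε : ℝ, (t, z) ∈ half ε n c η V → (t, z) ∈ compl n c η V := fun ε h =>
    ⟨h.1, fun j hj => (h.2 j hj).elim (fun h => h.trans_le (by
      simpa using Complex.abs_re_le_norm (z - c j t))) fun h => h.2⟩
  constructor
  · rintro (h | h)
    · exact key _ h
    · exact key _ h
  · intro h
    have ht : t ∈ V := h.1
    by_contra hn
    rw [Set.mem_union, not_or] at hn
    have h1 : ∀ ε : ℝ, (t, z) ∉ half ε n c η V → ∃ j < n, |z.re - (c j t).re| ≤ η t ∧
        (ε * z.im ≤ ε * (c j t).im) := by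
      intro ε hε
      by_contra! hcon
      refine hε ⟨ht, fun j hj => ?_⟩
      rcases le_or_gt |z.re - (c j t).re| (η t) with h' | h'
      · exact Or.inr ⟨hcon j hj h', h.2 j hj⟩
      · exact Or.inl h'
    obtain ⟨j, hj, hj1, hj2⟩ := h1 _ hn.1
    obtain ⟨k, hk, hk1, hk2⟩ := h1 _ hn.2
    have hjk : j = k := by
      rw [abs_le] at hj1 hk1
      rcases lt_trichotomy j k with hl | hl | hl
      · have e1 := o.right t ht j hj k hl hk.le
        have e2 := o.left t ht k hk k le_rfl
        linarith [hj1.1, hj1.2, hk1.1, hk1.2]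
      · exact hl
      · have e1 := o.right t ht k hk j hl hj.le
        have e2 := o.left t ht j hj j le_rfl
        linarith [hj1.1, hj1.2, hk1.1, hk1.2]
    subst hjk
    have him : z.im = (c j t).im := by linarith
    have h3 := h.2 j hj
    have h4 : z - c j t = ((z.re - (c j t).re : ℝ) : ℂ) := by
      apply Complex.ext <;> simp [him]
    dsimp only at h3
    rw [h4, Complex.norm_real, Real.norm_eq_abs] at h3
    linarith

/-- A point unblocked in both directions has no disc above or below it. -/
lemma half_inter (o : Obst n c η x y V) : half 1 n c η V ∩ half (-1) n c η V =
    ⋃ k ∈ Finset.range (n + 1), strip k n c η V := by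
  ext ⟨t, z⟩
  simp only [Set.mem_inter_iff, Set.mem_iUnion, Finset.mem_range, exists_prop]
  constructor
  · rintro ⟨h1, h2⟩
    have ht : t ∈ V := h1.1
    have h0 := o.nonneg t ht
    have h3 : ∀ j < n, η t < |z.re - (c j t).re| := fun j hj => by
      rcases h1.2 j hj with h | h
      · exact h
      · rcases h2.2 j hj with h' | h'
        · exact h'
        · have e1 := h.1; have e2 := h'.1
          dsimp only at e1 e2; linarith
    -- the strip number is the number of the first disc lying to the right of `z`
    have hex : ∃ k, ∀ j < n, k ≤ j → z.re < (c j t).re - η t := ⟨n, fun j hj h => by omega⟩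
    classical
    have hk := Nat.find_spec hex
    have hkn : Nat.find hex ≤ n := Nat.find_min' hex fun j hj h => by omega
    refine ⟨Nat.find hex, by omega, ht, fun j hj => ⟨fun hjk => ?_, fun hjk => hk j hj hjk⟩⟩
    have hm := Nat.find_min hex (show Nat.find hex - 1 < Nat.find hex by omega)
    push Not at hm
    obtain ⟨i, hi, hki, hi2⟩ := hm
    have hik : i = Nat.find hex - 1 := by
      by_contra hne
      exact absurd (hk i hi (by omega)) (not_lt.2 hi2)
    have hlt : (c i t).re + η t < z.re := by
      rcases lt_abs.1 (h3 i hi) with h | h <;> linarith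
    rcases Nat.lt_or_ge j i with hji | hji
    · have e1 := o.right t ht j hj i hji hi.le
      have e2 := o.left t ht i hi i le_rfl
      dsimp only
      linarith
    · have : j = i := by omega
      rw [this]; exact hlt
  · rintro ⟨k, hk, ht, h⟩
    have key : ∀ j < n, η t < |z.re - (c j t).re| := fun j hj => by
      rcases lt_or_ge j k with hjk | hjk
      · have := (h j hj).1 hjk
        dsimp only at this
        exact lt_abs.2 (Or.inl (by linarith))
      · have := (h j hj).2 hjk
        dsimp only at this
        exact lt_abs.2 (Or.inr (by linarith))
    exact ⟨⟨ht, fun j hj => Or.inl (key j hj)⟩, ⟨ht, fun j hj => Or.inl (key j hj)⟩⟩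

lemma strip_disj (o : Obst n c η x y V) {i k : ℕ} (hi : i ≤ n) (hk : k ≤ n) (hik : i ≠ k) :
    strip i n c η V ∩ strip k n c η V = ∅ := by
  wlog hlt : i < k generalizing i k
  · rw [Set.inter_comm]
    exact this hk hi (Ne.symm hik) (by omega)
  rw [Set.eq_empty_iff_forall_notMem]
  rintro ⟨t, z⟩ ⟨h1, h2⟩
  have e1 := (h1.2 i (by omega)).2 le_rfl
  have e2 := (h2.2 i (by omega)).1 hlt
  have := o.nonneg t h1.1
  dsimp only at e1 e2
  linarith

end Obst

end

section

/-! ### Coverings of complements of moving discs -/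

section
variable {P : Type} [TopologicalSpace P] {D : Set P} {E : Type} [TopologicalSpace E]
  {Q : Type} [TopologicalSpace Q]

/-- The part of a covering lying over the image of a set in a chart. -/
def tot (p : E → ↥Dᶜ) (j : Q → P) (W : Set Q) : Set E := above p (j '' W)

section
variable {p : E → ↥Dᶜ} {j : Q → P}

lemma tot_mono {W W' : Set Q} (h : W ⊆ W') : tot p j W ⊆ tot p j W' :=
  above_mono (Set.image_mono h)

lemma tot_union (W W' : Set Q) : tot p j (W ∪ W') = tot p j W ∪ tot p j W' := by
  unfold tot; rw [Set.image_union]; rfl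

lemma tot_inter (hj : Function.Injective j) (W W' : Set Q) :
    tot p j (W ∩ W') = tot p j W ∩ tot p j W' := by
  unfold tot; rw [Set.image_inter hj]; rfl

lemma tot_biUnion (s : Finset ℕ) (W : ℕ → Set Q) :
    tot p j (⋃ i ∈ s, W i) = ⋃ i ∈ s, tot p j (W i) := by
  ext e
  simp only [tot, above, Set.mem_ofPred_eq, Set.image_iUnion, Set.mem_iUnion]

lemma tot_iUnion (W : ℕ → Set Q) : tot p j (⋃ i, W i) = ⋃ i, tot p j (W i) := by
  ext e
  simp only [tot, above, Set.mem_ofPred_eq, Set.image_iUnion, Set.mem_iUnion]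

lemma tot_empty : tot p j ∅ = ∅ := by
  unfold tot; rw [Set.image_empty]; rfl

lemma tot_isOpen (hp : IsCoveringMap p) (hj : Topology.IsOpenEmbedding j) {W : Set Q}
    (hW : IsOpen W) : IsOpen (tot p j W) := above_isOpen hp.continuous (hj.isOpenMap _ hW)

end

/-- Two sets contracting to the same point have the same homology. -/
lemma Wdr.relAcyclic₂ {p : E → ↥Dᶜ} (hp : IsCoveringMap p) {j : Q → P}
    (hj : Topology.IsOpenEmbedding j) {A W W' : Set Q} (H : Wdr A W) (H' : Wdr A W')
    (hWW : W ⊆ W') (hW : ∀ w ∈ W', j w ∉ D) :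
    Cplx.RelAcyclic (PlaneCurve.sub (tot p j W)) (PlaneCurve.sub (tot p j W')) :=
  Cplx.RelAcyclic.of_comp (H.relAcyclic hp hj fun w hw => hW w (hWW hw)) (H'.relAcyclic hp hj hW)
    (sub_mono (tot_mono H.sub)) (sub_mono (tot_mono hWW))

end

namespace Obst
variable {P : Type} [TopologicalSpace P] {D : Set P} {E : Type} [TopologicalSpace E]
  {n : ℕ} {c : ℕ → ℂ → ℂ} {η : ℂ → ℝ} {x : ℕ → ℝ} {y : ℝ} {V V' : Set ℂ}
  {p : E → ↥Dᶜ} {j : ℂ × ℂ → P}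

lemma half_sub (o : Obst n c η x y V) {ε : ℝ} (hε : ε = 1 ∨ ε = -1) :
    half ε n c η V ⊆ compl n c η V := by
  rw [← o.half_union]
  rcases hε with rfl | rfl
  · exact Set.subset_union_left
  · exact Set.subset_union_right

lemma strip_sub (o : Obst n c η x y V) {k : ℕ} (hk : k ≤ n) :
    strip k n c η V ⊆ compl n c η V := by
  refine Set.Subset.trans ?_ (o.half_sub (Or.inl rfl))
  refine Set.Subset.trans ?_ (Set.inter_subset_left (t := half (-1) n c η V))
  rw [o.half_inter]
  exact Set.subset_biUnion_of_mem (u := fun k => strip k n c η V)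
    (Finset.mem_coe.2 (Finset.mem_range.2 (Nat.lt_succ_of_le hk)))

/-- The covering over the complement of `n` discs in a plane, moving in a contractible family. -/
theorem hasChi (o : Obst n c η x y V) (hV : V.Nonempty) (hp : IsCoveringMap p) {m : ℕ} (hm : 0 < m)
    (hc : ∀ b, Nat.card (p ⁻¹' {b}) = m) (hj : Topology.IsOpenEmbedding j)
    (hD : ∀ w ∈ compl n c η V, j w ∉ D) :
    Cplx.HasChi (sub (tot p j (compl n c η V))) (m * (1 - n)) := by
  obtain ⟨v, hv⟩ := hV
  have h1 : ∀ ε : ℝ, ε = 1 ∨ ε = -1 → Cplx.HasChi (sub (tot p j (half ε n c η V))) m :=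
    fun ε hε => (o.wdrHalf hε hv).hasChi hp hm hc hj fun w hw => hD w (o.half_sub hε hw)
  have h2 : Cplx.HasChi (sub (tot p j (half 1 n c η V ∩ half (-1) n c η V))) ((n + 1) * m) := by
    rw [o.half_inter, tot_biUnion]
    have := hasChi_biUnion (Finset.range (n + 1)) (U := fun k => tot p j (strip k n c η V))
      (c := fun _ => (m : ℤ)) (fun k _ => tot_isOpen hp hj (o.isOpen_strip k))
      (fun i hi k hk hik => by
        rw [← tot_inter hj.injective, o.strip_disj (Nat.lt_succ_iff.1 (Finset.mem_range.1 hi))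
          (Nat.lt_succ_iff.1 (Finset.mem_range.1 hk)) hik, tot_empty])
      (fun k hk => (o.wdrStrip (Nat.lt_succ_iff.1 (Finset.mem_range.1 hk)) hv).hasChi hp hm hc hj
        fun w hw => hD w (o.strip_sub (Nat.lt_succ_iff.1 (Finset.mem_range.1 hk)) hw))
    simpa using this
  rw [tot_inter hj.injective] at h2
  have h3 := hasChi_union (tot_isOpen hp hj (o.isOpen_half 1)) (tot_isOpen hp hj (o.isOpen_half (-1)))
    (h1 1 (Or.inl rfl)) (h1 (-1) (Or.inr rfl)) h2
  rw [← tot_union, o.half_union] at h3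
  convert h3 using 1
  ring

/-- Shrinking the set of parameters induces isomorphisms in homology. -/
theorem relAcyclic (o : Obst n c η x y V) (o' : Obst n c η x y V') (hV : V'.Nonempty)
    (hVV : V' ⊆ V) (hp : IsCoveringMap p) (hj : Topology.IsOpenEmbedding j)
    (hD : ∀ w ∈ compl n c η V, j w ∉ D) :
    Cplx.RelAcyclic (sub (tot p j (compl n c η V'))) (sub (tot p j (compl n c η V))) := by
  obtain ⟨v, hv⟩ := hV
  have hh : ∀ ε, half ε n c η V' ⊆ half ε n c η V := fun ε q h => ⟨hVV h.1, h.2⟩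
  have hs : ∀ k, strip k n c η V' ⊆ strip k n c η V := fun k q h => ⟨hVV h.1, h.2⟩
  have h1 : ∀ ε : ℝ, ε = 1 ∨ ε = -1 → Cplx.RelAcyclic (sub (tot p j (half ε n c η V')))
      (sub (tot p j (half ε n c η V))) :=
    fun ε hε => (o'.wdrHalf hε hv).relAcyclic₂ hp hj (o.wdrHalf hε (hVV hv)) (hh ε)
      fun w hw => hD w (o.half_sub hε hw)
  rw [← o.half_union, ← o'.half_union, tot_union, tot_union]
  refine relAcyclic_union (tot_isOpen hp hj (o'.isOpen_half _)) (tot_isOpen hp hj (o'.isOpen_half _))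
    (tot_isOpen hp hj (o.isOpen_half _)) (tot_isOpen hp hj (o.isOpen_half _)) (tot_mono (hh _))
    (tot_mono (hh _)) (h1 _ (Or.inl rfl)) (h1 _ (Or.inr rfl)) ?_
  rw [← tot_inter hj.injective, ← tot_inter hj.injective, o.half_inter, o'.half_inter, tot_biUnion,
    tot_biUnion]
  refine relAcyclic_biUnion _ (fun k _ => tot_isOpen hp hj (o'.isOpen_strip k))
    (fun k _ => tot_isOpen hp hj (o.isOpen_strip k)) (fun k _ => tot_mono (hs k)) ?_ ?_
  · intro i hi k hk hik
    rw [← tot_inter hj.injective, o.strip_disj (Nat.lt_succ_iff.1 (Finset.mem_range.1 hi))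
          (Nat.lt_succ_iff.1 (Finset.mem_range.1 hk)) hik, tot_empty]
  · intro k hk
    have hk' := Nat.lt_succ_iff.1 (Finset.mem_range.1 hk)
    exact (o'.wdrStrip hk' hv).relAcyclic₂ hp hj (o.wdrStrip hk' (hVV hv)) (hs k)
      fun w hw => hD w (o.strip_sub hk' hw)

end Obst

end

section

/-! ### Roots of a family of monic polynomials -/

/-- A continuous family of monic polynomials of degree `d > 0`. -/
structure Fam (d : ℕ) (P : ℂ → Polynomial ℂ) : Prop where
  pos : 0 < d
  monic : ∀ t, (P t).Monic
  deg : ∀ t, (P t).natDegree = d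
  cont : ∀ k, Continuous fun t => (P t).coeff k

/-- A bound for the roots of a monic polynomial. -/
def rootBd (d : ℕ) (P : Polynomial ℂ) : ℝ := 1 + ∑ k ∈ Finset.range d, ‖P.coeff k‖

/-- A bound for the distance between the sets of roots of two members of a family. -/
def eta (d : ℕ) (P : ℂ → Polynomial ℂ) (b t : ℂ) : ℝ :=
  (∑ k ∈ Finset.range d, ‖(P t).coeff k - (P b).coeff k‖ *
    (rootBd d (P t) + rootBd d (P b)) ^ k) ^ ((1 : ℝ) / d)

lemma one_le_rootBd (d : ℕ) (P : Polynomial ℂ) : 1 ≤ rootBd d P :=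
  le_add_of_nonneg_right (Finset.sum_nonneg fun _ _ => norm_nonneg _)

lemma pow_card_le_prod {a : ℝ} (ha : 0 ≤ a) (s : Multiset ℝ) (h : ∀ x ∈ s, a ≤ x) :
    a ^ s.card ≤ s.prod := by
  induction s using Multiset.induction_on with
  | empty => simp
  | cons x s ih =>
    rw [Multiset.card_cons, Multiset.prod_cons, pow_succ, mul_comm]
    exact mul_le_mul (h x (Multiset.mem_cons_self _ _))
      (ih fun y hy => h y (Multiset.mem_cons_of_mem hy)) (pow_nonneg ha _)
      (ha.trans (h x (Multiset.mem_cons_self _ _)))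

/-- The number of distinct roots. -/
def nroots (P : Polynomial ℂ) : ℕ := P.roots.toFinset.card

namespace Fam
variable {d : ℕ} {P : ℂ → Polynomial ℂ}

lemma eval_eq (F : Fam d P) (t z : ℂ) :
    (P t).eval z = ∑ k ∈ Finset.range d, (P t).coeff k * z ^ k + z ^ d := by
  rw [Polynomial.eval_eq_sum_range, F.deg, Finset.sum_range_succ]
  have : (P t).coeff d = 1 := by
    have := F.monic t
    rwa [Polynomial.Monic, Polynomial.leadingCoeff, F.deg] at this
  rw [this, one_mul]

/-- The leading power of a large root cannot be balanced by the lower terms. -/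
lemma norm_root_le (F : Fam d P) {t z : ℂ} (h : (P t).IsRoot z) : ‖z‖ ≤ rootBd d (P t) := by
  by_contra! hlt
  have h1 : 1 ≤ ‖z‖ := (one_le_rootBd _ _).trans hlt.le
  have h2 : z ^ d = -∑ k ∈ Finset.range d, (P t).coeff k * z ^ k := by
    have := F.eval_eq t z
    rw [h] at this
    linear_combination -this
  have h3 : ‖z‖ ^ d ≤ (∑ k ∈ Finset.range d, ‖(P t).coeff k‖) * ‖z‖ ^ (d - 1) := by
    rw [← norm_pow, h2, norm_neg, Finset.sum_mul]
    refine (norm_sum_le _ _).trans (Finset.sum_le_sum fun k hk => ?_)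
    rw [norm_mul, norm_pow]
    exact mul_le_mul_of_nonneg_left
      (pow_le_pow_right₀ h1 (Nat.le_sub_one_of_lt (Finset.mem_range.1 hk))) (norm_nonneg _)
  have h4 : ‖z‖ ^ d = ‖z‖ * ‖z‖ ^ (d - 1) := by
    rw [← pow_succ', Nat.sub_add_cancel F.pos]
  rw [h4] at h3
  have h5 := le_of_mul_le_mul_right h3 (by positivity)
  unfold rootBd at hlt
  linarith

lemma eta_nonneg (b t : ℂ) : 0 ≤ eta d P b t := by
  refine Real.rpow_nonneg (Finset.sum_nonneg fun k _ => mul_nonneg (norm_nonneg _) (pow_nonneg ?_ _)) _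
  linarith [one_le_rootBd d (P t), one_le_rootBd d (P b)]

lemma eta_comm (b t : ℂ) : eta d P b t = eta d P t b := by
  unfold eta
  simp only [norm_sub_rev, add_comm]

lemma eta_self (F : Fam d P) (b : ℂ) : eta d P b b = 0 := by
  have : (d : ℝ) ≠ 0 := by exact_mod_cast F.pos.ne'
  simp [eta, this]

lemma continuous_eta (F : Fam d P) (b : ℂ) : Continuous (eta d P b) := by
  unfold eta rootBd
  have := F.cont
  refine Continuous.rpow_const ?_ fun _ => Or.inr (by positivity)
  fun_prop

lemma mem_roots (F : Fam d P) {t z : ℂ} : z ∈ (P t).roots.toFinset ↔ (P t).IsRoot z := by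
  rw [Multiset.mem_toFinset, Polynomial.mem_roots (F.monic t).ne_zero]

lemma card_roots (F : Fam d P) (t : ℂ) : (P t).roots.card = d := by
  rw [← F.deg t]
  exact (IsAlgClosed.splits (P t)).natDegree_eq_card_roots.symm

/-- Roots of nearby members of the family are close: the product of the distances of a root `z` of
`P t` to the roots of `P b` is `‖(P b).eval z‖`, which is small because `(P t).eval z = 0`. -/
lemma near (F : Fam d P) {b t z : ℂ} (h : (P t).IsRoot z) :
    ∃ w, (P b).IsRoot w ∧ ‖z - w‖ ≤ eta d P b t := by
  have hne : (P b).roots.toFinset.Nonempty := by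
    rw [Multiset.toFinset_nonempty, ← Multiset.card_pos, F.card_roots]
    exact F.pos
  obtain ⟨w, hw, hmin⟩ := Finset.exists_min_image _ (fun w => ‖z - w‖) hne
  refine ⟨w, F.mem_roots.1 hw, ?_⟩
  have h1 : ‖z - w‖ ^ d ≤ ‖(P b).eval z‖ := by
    have hs : (P b).eval z = ((P b).roots.map fun a => z - a).prod := by
      conv_lhs => rw [(IsAlgClosed.splits (P b)).eq_prod_roots_of_monic (F.monic b)]
      rw [Polynomial.eval_multiset_prod, Multiset.map_map]
      simp
    have hn : ‖(P b).eval z‖ = ((P b).roots.map fun a => ‖z - a‖).prod := by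
      rw [hs]
      have := map_multiset_prod (normHom : ℂ →*₀ ℝ) ((P b).roots.map fun a => z - a)
      rw [Multiset.map_map] at this
      exact this
    rw [hn]
    have := pow_card_le_prod (norm_nonneg (z - w)) ((P b).roots.map fun a => ‖z - a‖) (by
      intro x hx
      obtain ⟨a, ha, rfl⟩ := Multiset.mem_map.1 hx
      exact hmin a (Multiset.mem_toFinset.2 ha))
    rwa [Multiset.card_map, F.card_roots] at this
  have h2 : ‖(P b).eval z‖ ≤ ∑ k ∈ Finset.range d, ‖(P t).coeff k - (P b).coeff k‖ *
      (rootBd d (P t) + rootBd d (P b)) ^ k := by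
    have : (P b).eval z = -∑ k ∈ Finset.range d, ((P t).coeff k - (P b).coeff k) * z ^ k := by
      have h1 := F.eval_eq t z
      have h2 := F.eval_eq b z
      rw [h] at h1
      simp only [sub_mul, Finset.sum_sub_distrib]
      linear_combination h2 - h1
    rw [this, norm_neg]
    refine (norm_sum_le _ _).trans (Finset.sum_le_sum fun k _ => ?_)
    rw [norm_mul, norm_pow]
    refine mul_le_mul_of_nonneg_left (pow_le_pow_left₀ (norm_nonneg _) ?_ _) (norm_nonneg _)
    linarith [F.norm_root_le h, one_le_rootBd d (P b)]
  have h3 := Real.rpow_le_rpow (by positivity) (h1.trans h2) (by positivity : (0 : ℝ) ≤ 1 / d)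
  rwa [one_div, Real.pow_rpow_inv_natCast (norm_nonneg _) F.pos.ne', ← one_div] at h3

lemma nroots_le (F : Fam d P) (t : ℂ) : nroots (P t) ≤ d := by
  rw [← F.card_roots t]
  exact Multiset.toFinset_card_le _

/-- An enumeration of the distinct roots. -/
def rt (P : Polynomial ℂ) : Fin (nroots P) ≃ P.roots.toFinset := P.roots.toFinset.equivFin.symm

lemma isRoot_rt (F : Fam d P) (t : ℂ) (i) : (P t).IsRoot (rt (P t) i) := F.mem_roots.1 (rt (P t) i).2

lemma exists_rt (F : Fam d P) {t z : ℂ} (h : (P t).IsRoot z) : ∃ i, z = rt (P t) i :=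
  ⟨(rt (P t)).symm ⟨z, F.mem_roots.2 h⟩, by simp⟩

lemma rt_injective (P : Polynomial ℂ) : Function.Injective fun i => (rt P i : ℂ) :=
  Subtype.val_injective.comp (rt P).injective

/-- A separation constant for finitely many points. -/
lemma exists_sep {n : ℕ} {w : Fin n → ℂ} (hw : Function.Injective w) :
    ∃ δ > 0, ∀ i j, i ≠ j → 2 * δ < ‖w i - w j‖ := by
  have h : ∀ q : Fin n × Fin n, ∃ ε > 0, q.1 ≠ q.2 → ε ≤ ‖w q.1 - w q.2‖ := fun q => by
    by_cases hq : q.1 = q.2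
    · exact ⟨1, one_pos, fun h => absurd hq h⟩
    · exact ⟨_, norm_pos_iff.2 (sub_ne_zero.2 (hw.ne hq)), fun _ => le_rfl⟩
  choose ε hε h using h
  obtain ⟨δ, hδ, h'⟩ : ∃ δ > 0, ∀ q, δ ≤ ε q := by
    rcases isEmpty_or_nonempty (Fin n × Fin n) with h | h
    · exact ⟨1, one_pos, fun q => isEmptyElim q⟩
    · obtain ⟨q, hq⟩ := Finite.exists_min ε
      exact ⟨ε q, hε q, hq⟩
  exact ⟨δ / 3, by positivity, fun i j hij => by linarith [h' (i, j), h (i, j) hij]⟩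

/-- Near a member without multiple roots the roots are continuous functions of the parameter. -/
lemma exists_sections (F : Fam d P) {b : ℂ} (hb : nroots (P b) = d) :
    ∃ U, IsOpen U ∧ b ∈ U ∧ ∃ r : Fin d → ℂ → ℂ, (∀ i, ContinuousOn (r i) U) ∧
      (∀ t ∈ U, Function.Injective fun i => r i t) ∧
      ∀ t ∈ U, ∀ z, (P t).IsRoot z ↔ ∃ i, z = r i t := by
  obtain ⟨w, hw, hwr⟩ : ∃ w : Fin d → ℂ, Function.Injective w ∧ ∀ i, (P b).IsRoot (w i) :=
    ⟨fun i => rt (P b) (finCongr hb.symm i),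
      (rt_injective _).comp (finCongr hb.symm).injective, fun i => F.isRoot_rt b _⟩
  obtain ⟨δ, hδ, hsep⟩ := exists_sep hw
  have hr : ∀ (i : Fin d) (t : ℂ), ∃ z, (P t).IsRoot z ∧ ‖w i - z‖ ≤ eta d P b t := fun i t => by
    rw [eta_comm]
    exact F.near (hwr i)
  choose r hr hwr using hr
  have hinj : ∀ t, eta d P b t < δ → Function.Injective fun i => r i t := by
    intro t ht i j hij
    by_contra hne
    have h1 := hsep i j hne
    have h2 := norm_sub_le_norm_sub_add_norm_sub (w i) (r i t) (w j)
    have h3 := hwr j t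
    rw [← show r i t = r j t from hij, norm_sub_rev] at h3
    linarith [hwr i t]
  have hall : ∀ t, eta d P b t < δ → ∀ z, (P t).IsRoot z ↔ ∃ i, z = r i t := by
    intro t ht z
    refine ⟨fun hz => ?_, ?_⟩
    · have h1 : Finset.univ.image (fun i => r i t) = (P t).roots.toFinset := by
        refine Finset.eq_of_subset_of_card_le (fun z hz => ?_) ?_
        · obtain ⟨i, -, rfl⟩ := Finset.mem_image.1 hz
          exact F.mem_roots.2 (hr i t)
        · rw [Finset.card_image_of_injective _ (hinj t ht), Finset.card_univ, Fintype.card_fin]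
          exact F.nroots_le t
      have h2 := F.mem_roots.2 hz
      rw [← h1] at h2
      obtain ⟨i, -, rfl⟩ := Finset.mem_image.1 h2
      exact ⟨i, rfl⟩
    · rintro ⟨i, rfl⟩
      exact hr i t
  refine ⟨{t | eta d P b t < δ}, isOpen_lt (F.continuous_eta b) continuous_const, ?_, r, ?_, hinj,
    hall⟩
  · change eta d P b b < δ
    rwa [F.eta_self]
  · intro i t ht
    have ht' : eta d P b t < δ := ht
    refine ContinuousAt.continuousWithinAt ?_
    have h1 : Filter.Tendsto (fun t' => eta d P t t') (nhds t) (nhds 0) := by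
      have := (F.continuous_eta t).tendsto t
      rwa [F.eta_self] at this
    have h2 : ∀ᶠ t' in nhds t, eta d P b t' + eta d P t t' + eta d P b t < 2 * δ := by
      have h3 : Filter.Tendsto (fun t' => eta d P b t' + eta d P t t' + eta d P b t) (nhds t)
          (nhds (eta d P b t + 0 + eta d P b t)) :=
        (((F.continuous_eta b).tendsto t).add h1).add_const _
      exact h3.eventually_lt_const (by linarith)
    rw [ContinuousAt, tendsto_iff_norm_sub_tendsto_zero]
    refine squeeze_zero' (Filter.Eventually.of_forall fun _ => norm_nonneg _) ?_ h1
    filter_upwards [h2] with t' ht''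
    obtain ⟨z, hz, hle⟩ := F.near (b := t) (hr i t')
    obtain ⟨j, rfl⟩ := (hall t ht z).1 hz
    by_cases hij : i = j
    · rwa [← hij] at hle
    · exfalso
      have h1 := hsep i j hij
      have h2 := norm_sub_le_norm_sub_add_norm_sub (w i) (r i t') (w j)
      have h3 := norm_sub_le_norm_sub_add_norm_sub (r i t') (r j t) (w j)
      have h4 := hwr j t
      rw [norm_sub_rev] at h4
      linarith [hwr i t']

lemma nroots_of_sections (F : Fam d P) {t : ℂ} {r : Fin d → ℂ}
    (hr : Function.Injective r) (h : ∀ i, (P t).IsRoot (r i)) : nroots (P t) = d := by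
  refine le_antisymm (F.nroots_le t) ?_
  have : Finset.univ.image r ⊆ (P t).roots.toFinset := fun z hz => by
    obtain ⟨i, -, rfl⟩ := Finset.mem_image.1 hz
    exact F.mem_roots.2 (h i)
  simpa [nroots, Finset.card_image_of_injective _ hr] using Finset.card_le_card this

end Fam

end

section

/-! ### Complements of discs around finitely many continuous sections -/

/-- The complement of discs of radius `η` around the sections `c i`. -/
def dcompl {n : ℕ} (c : Fin n → ℂ → ℂ) (η : ℂ → ℝ) (V : Set ℂ) : Set (ℂ × ℂ) :=
  {q | q.1 ∈ V ∧ ∀ i, η q.1 < ‖q.2 - c i q.1‖}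

/-- Some linear form `z ↦ re (u z)` takes distinct values at finitely many given points. -/
lemma exists_rotation {n : ℕ} {w : Fin n → ℂ} (hw : Function.Injective w) :
    ∃ u : ℂ, u ≠ 0 ∧ Function.Injective fun i => (u * w i).re := by
  let B : Set ℝ := ⋃ q : Fin n × Fin n, {s | q.1 ≠ q.2 ∧ s * (w q.1 - w q.2).im = (w q.1 - w q.2).re}
  have hB : B.Finite := by
    refine Set.finite_iUnion fun q => Set.Subsingleton.finite ?_
    rintro s ⟨hq, hs⟩ s' ⟨-, hs'⟩
    by_cases h : (w q.1 - w q.2).im = 0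
    · rw [h, mul_zero] at hs
      exact absurd (sub_eq_zero.1 (Complex.ext hs.symm h)) (hw.ne hq)
    · exact mul_right_cancel₀ h (hs.trans hs'.symm)
  obtain ⟨s, hs⟩ := hB.exists_notMem
  refine ⟨1 + s * Complex.I, fun h => ?_, fun i k hik => ?_⟩
  · have := congrArg Complex.re h
    simp at this
  · by_contra hne
    refine hs (Set.mem_iUnion.2 ⟨(i, k), hne, ?_⟩)
    simp only [add_mul, one_mul, Complex.add_re, Complex.mul_re, Complex.ofReal_re, Complex.I_re,
      mul_zero, Complex.ofReal_im, Complex.I_im, mul_one, sub_self, zero_sub, Complex.mul_im,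
      add_zero, zero_mul] at hik
    simp only [Complex.sub_im, Complex.sub_re]
    linarith

/-- After multiplication by a suitable `u` the real parts of the `n` points over `b` are different, so
the discs around them form an obstacle configuration for all parameters close to `b`. -/
lemma exists_obst {n : ℕ} {c : Fin n → ℂ → ℂ} {η : ℂ → ℝ} {U₀ : Set ℂ} {b : ℂ} (hU₀ : IsOpen U₀)
    (hb : b ∈ U₀) (hc : ∀ i, ContinuousOn (c i) U₀) (hη : ContinuousOn η U₀)
    (hη0 : ∀ t ∈ U₀, 0 ≤ η t) (hηb : η b = 0) (hinj : Function.Injective fun i => c i b) :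
    ∃ U, IsOpen U ∧ b ∈ U ∧ U ⊆ U₀ ∧ ∃ u : ℂ, u ≠ 0 ∧ ∃ c' x y,
      (∀ V ⊆ U, IsOpen V → Convex ℝ V → Obst n c' (fun t => ‖u‖ * η t) x y V) ∧
      ∀ V t z, (t, u * z) ∈ Obst.compl n c' (fun t => ‖u‖ * η t) V ↔ (t, z) ∈ dcompl c η V := by
  obtain ⟨u, hu, hinj'⟩ := exists_rotation hinj
  let σ := Tuple.sort fun i => (u * c i b).re
  have hσ : StrictMono fun i => (u * c (σ i) b).re :=
    (Tuple.monotone_sort fun i => (u * c i b).re).strictMono_of_injective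
      (hinj'.comp σ.injective)
  obtain ⟨δ, hδ, hsep⟩ := Fam.exists_sep (w := fun i => (((u * c (σ i) b).re : ℝ) : ℂ))
    (Complex.ofReal_injective.comp hσ.injective)
  have hsep' : ∀ i k, i < k → (u * c (σ i) b).re + 2 * δ < (u * c (σ k) b).re := by
    intro i k hik
    have h1 := hsep i k hik.ne
    have h2 := hσ hik
    rw [← Complex.ofReal_sub, Complex.norm_real, Real.norm_eq_abs, abs_sub_comm, abs_of_pos
      (sub_pos.2 h2)] at h1
    linarith
  let c' : ℕ → ℂ → ℂ := fun k t => if h : k < n then u * c (σ ⟨k, h⟩) t else 0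
  have hc' : ∀ k (h : k < n) t, c' k t = u * c (σ ⟨k, h⟩) t := fun k h t => dif_pos h
  let U : Set ℂ := {t | t ∈ U₀ ∧ ∀ i : Fin n, ‖u * c i t - u * c i b‖ + ‖u‖ * η t < δ}
  obtain ⟨Y, hY⟩ : ∃ Y : ℝ, ∀ i, ‖u * c (σ i) b‖ ≤ Y :=
    ⟨∑ i, ‖u * c (σ i) b‖, fun i =>
      Finset.single_le_sum (f := fun i => ‖u * c (σ i) b‖) (fun _ _ => norm_nonneg _)
        (Finset.mem_univ i)⟩
  refine ⟨U, ?_, ⟨hb, fun i => by simpa [hηb] using hδ⟩, fun t ht => ht.1, u, hu, c',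
    fun k => if h : k < n then (u * c (σ ⟨k, h⟩) b).re - δ else Y + δ, Y + δ, ?_, ?_⟩
  · have : U = U₀ ∩ ⋂ i : Fin n, {t | t ∈ U₀ ∧ ‖u * c i t - u * c i b‖ + ‖u‖ * η t < δ} := by
      ext t
      simp only [U, Set.mem_ofPred_eq, Set.mem_inter_iff, Set.mem_iInter]
      exact ⟨fun h => ⟨h.1, fun j => ⟨h.1, h.2 j⟩⟩, fun h => ⟨h.1, fun j => (h.2 j).2⟩⟩
    rw [this]
    refine hU₀.inter (isOpen_iInter_of_finite fun i => Obst.isOpen_lt_on hU₀ ?_ continuousOn_const)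
    exact (((continuousOn_const.mul (hc i)).sub continuousOn_const).norm).add
      (continuousOn_const.mul hη)
  · intro V hVU hV hVc
    have hV0 : V ⊆ U₀ := fun t ht => (hVU ht).1
    have hre : ∀ t ∈ V, ∀ j (h : j < n), |(c' j t).re - (u * c (σ ⟨j, h⟩) b).re| + ‖u‖ * η t < δ := by
      intro t ht j h
      have := (hVU ht).2 (σ ⟨j, h⟩)
      rw [hc' j h, ← Complex.sub_re]
      linarith [Complex.abs_re_le_norm (u * c (σ ⟨j, h⟩) t - u * c (σ ⟨j, h⟩) b)]
    refine ⟨hV, hVc, fun j hj => ?_, continuousOn_const.mul (hη.mono hV0),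
      fun t ht => mul_nonneg (norm_nonneg _) (hη0 t (hV0 ht)), ?_, ?_, ?_⟩
    · have : c' j = fun t => u * c (σ ⟨j, hj⟩) t := funext (hc' j hj)
      rw [this]
      exact continuousOn_const.mul ((hc _).mono hV0)
    · intro t ht j hj k hk
      have hkn := lt_of_le_of_lt hk hj
      have h1 := abs_lt.1 (lt_sub_iff_add_lt.2 (hre t ht j hj))
      have h2 : (u * c (σ ⟨k, hkn⟩) b).re ≤ (u * c (σ ⟨j, hj⟩) b).re :=
        hσ.monotone (show (⟨k, hkn⟩ : Fin n) ≤ ⟨j, hj⟩ from hk)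
      simp only [dif_pos hkn]
      linarith
    · intro t ht j hj k hjk _
      have h1 := abs_lt.1 (lt_sub_iff_add_lt.2 (hre t ht j hj))
      by_cases hkn : k < n
      · have h2 := hsep' ⟨j, hj⟩ ⟨k, hkn⟩ hjk
        simp only [dif_pos hkn]
        linarith
      · have h2 := (Complex.re_le_norm _).trans (hY ⟨j, hj⟩)
        simp only [dif_neg hkn]
        linarith
    · intro t ht j hj
      have h1 := (hVU ht).2 (σ ⟨j, hj⟩)
      rw [hc' j hj]
      have h2 := Complex.abs_im_le_norm (u * c (σ ⟨j, hj⟩) t)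
      have h3 := norm_le_norm_sub_add (u * c (σ ⟨j, hj⟩) t) (u * c (σ ⟨j, hj⟩) b)
      linarith [hY ⟨j, hj⟩]
  · intro V t z
    have hu' : 0 < ‖u‖ := norm_pos_iff.2 hu
    refine and_congr_right fun _ => ⟨fun h i => ?_, fun h j hj => ?_⟩
    · have := h (σ.symm i) (σ.symm i).2
      simp only [hc' _ (σ.symm i).2, ← mul_sub, norm_mul, Fin.eta, Equiv.apply_symm_apply] at this
      exact lt_of_mul_lt_mul_left this hu'.le
    · simp only [hc' j hj, ← mul_sub, norm_mul]
      exact mul_lt_mul_of_pos_left (h _) hu'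

section
variable {P : Type} [TopologicalSpace P] {D : Set P} {E : Type} [TopologicalSpace E]
  {p : E → ↥Dᶜ} {j : ℂ × ℂ → P}

/-- Local structure of a covering of the complement of discs around distinct sections. -/
theorem exists_local {n : ℕ} {c : Fin n → ℂ → ℂ} {η : ℂ → ℝ} {U₀ : Set ℂ} {b : ℂ}
    (hU₀ : IsOpen U₀) (hb : b ∈ U₀) (hc : ∀ i, ContinuousOn (c i) U₀) (hη : ContinuousOn η U₀)
    (hη0 : ∀ t ∈ U₀, 0 ≤ η t) (hηb : η b = 0) (hinj : Function.Injective fun i => c i b)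
    (hp : IsCoveringMap p) {m : ℕ} (hm : 0 < m) (hcard : ∀ b, Nat.card (p ⁻¹' {b}) = m)
    (hj : Topology.IsOpenEmbedding j) (hD : ∀ w ∈ dcompl c η U₀, j w ∉ D) :
    ∃ U, IsOpen U ∧ b ∈ U ∧ U ⊆ U₀ ∧
      (∀ V ⊆ U, IsOpen V → Convex ℝ V → V.Nonempty →
        Cplx.HasChi (sub (tot p j (dcompl c η V))) (m * (1 - n))) ∧
      ∀ V ⊆ U, ∀ V' ⊆ V, IsOpen V → Convex ℝ V → IsOpen V' → Convex ℝ V' → V'.Nonempty →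
        Cplx.RelAcyclic (sub (tot p j (dcompl c η V'))) (sub (tot p j (dcompl c η V))) := by
  obtain ⟨U, hU, hbU, hUU, u, hu, c', x, y, ho, hiff⟩ := exists_obst hU₀ hb hc hη hη0 hηb hinj
  let rot : ℂ × ℂ ≃ₜ ℂ × ℂ := (Homeomorph.refl ℂ).prodCongr (Homeomorph.mulLeft₀ u hu)
  have hrot : ∀ q, rot q = (q.1, u * q.2) := fun q => rfl
  have hj' : Topology.IsOpenEmbedding (j ∘ rot.symm) := hj.comp rot.symm.isOpenEmbedding
  have him : ∀ V, (rot.symm '' Obst.compl n c' (fun t => ‖u‖ * η t) V) = dcompl c η V := by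
    intro V
    rw [rot.symm.image_eq_preimage_symm]
    ext q
    exact hiff V q.1 q.2
  have ht : ∀ V, tot p (j ∘ rot.symm) (Obst.compl n c' (fun t => ‖u‖ * η t) V) =
      tot p j (dcompl c η V) := by
    intro V
    rw [tot, Set.image_comp, him]
    rfl
  have hD' : ∀ V ⊆ U, ∀ w ∈ Obst.compl n c' (fun t => ‖u‖ * η t) V, (j ∘ rot.symm) w ∉ D := by
    intro V hV w hw
    have h1 : rot.symm w ∈ dcompl c η V := by
      rw [← him]
      exact ⟨w, hw, rfl⟩
    exact hD _ ⟨hUU (hV h1.1), h1.2⟩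
  refine ⟨U, hU, hbU, hUU, fun V hV hVo hVc hVn => ?_, fun V hV V' hV' hVo hVc hVo' hVc' hVn => ?_⟩
  · rw [← ht]
    exact (ho V hV hVo hVc).hasChi hVn hp hm hcard hj' (hD' V hV)
  · rw [← ht, ← ht]
    exact (ho V hV hVo hVc).relAcyclic (ho V' (hV'.trans hV) hVo' hVc') hVn hV' hp hj' (hD' V hV)

end

end

section

/-! ### Local-to-global principle for families parametrised by convex sets -/

section
variable {Y : Type} [TopologicalSpace Y]

/-- A family of open subsets compatible with unions and intersections of the parameter set. -/
structure Cut (T : Set ℂ → Set Y) : Prop where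
  isOpen : ∀ V, IsOpen V → IsOpen (T V)
  union : ∀ V W, T (V ∪ W) = T V ∪ T W
  inter : ∀ V W, T (V ∩ W) = T V ∩ T W
  iUnion : ∀ V : ℕ → Set ℂ, T (⋃ n, V n) = ⋃ n, T (V n)
  empty : T ∅ = ∅

/-- Inclusions of nonempty convex open subsets of `U` induce isomorphisms in homology. -/
def Inv (T : Set ℂ → Set Y) (U : Set ℂ) : Prop :=
  ∀ V ⊆ U, ∀ V' ⊆ V, IsOpen V → Convex ℝ V → IsOpen V' → Convex ℝ V' → V'.Nonempty →
    Cplx.RelAcyclic (sub (T V')) (sub (T V))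

variable {T : Set ℂ → Set Y} {U V V' : Set ℂ}

lemma Cut.mono (hT : Cut T) (h : V ⊆ V') : T V ⊆ T V' := by
  rw [← Set.union_eq_self_of_subset_left h, hT.union]
  exact Set.subset_union_left

lemma Inv.mono (h : Inv T U) {U' : Set ℂ} (hU : U' ⊆ U) : Inv T U' :=
  fun V hV => h V (hV.trans hU)

/-- Excision: enlarging `B` by `A` has the same effect on homology as enlarging `A ∩ B` to `A`. -/
lemma Cut.relAcyclic_right (hT : Cut T) {A B : Set ℂ} (hA : IsOpen A) (hAc : Convex ℝ A)
    (hB : IsOpen B) (hBc : Convex ℝ B) (h : Convex ℝ (A ∪ B)) (hi : Inv T A) (hBn : B.Nonempty) :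
    Cplx.RelAcyclic (sub (T B)) (sub (T (A ∪ B))) := by
  rcases A.eq_empty_or_nonempty with rfl | hAn
  · rw [Set.empty_union]
    exact Cplx.RelAcyclic.refl _
  have hne : (A ∩ B).Nonempty := by
    have h1 := h.isPreconnected A B hA hB le_rfl (hAn.mono fun t ht => ⟨Or.inl ht, ht⟩)
      (hBn.mono fun t ht => ⟨Or.inr ht, ht⟩)
    exact h1.mono fun t ht => ht.2
  have h1 := relAcyclic_union (hT.isOpen _ (hA.inter hB)) (hT.isOpen _ hB) (hT.isOpen _ hA)
    (hT.isOpen _ hB) (hT.mono Set.inter_subset_left) le_rfl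
    (hi A le_rfl _ Set.inter_subset_left hA hAc (hA.inter hB) (hAc.inter hBc) hne)
    (Cplx.RelAcyclic.refl _) (by
      rw [← hT.inter, ← hT.inter, Set.inter_assoc, Set.inter_self]
      exact Cplx.RelAcyclic.refl _)
  rwa [← hT.union, ← hT.union, Set.union_eq_self_of_subset_left Set.inter_subset_right] at h1

lemma Cut.relAcyclic_of_right (hT : Cut T) {A B A' B' : Set ℂ} (hA : IsOpen A) (hAc : Convex ℝ A)
    (hB : IsOpen B) (hBc : Convex ℝ B) (h : Convex ℝ (A ∪ B)) (hA' : IsOpen A')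
    (hAc' : Convex ℝ A') (hB' : IsOpen B') (hBc' : Convex ℝ B') (h' : Convex ℝ (A' ∪ B'))
    (hAA : A' ⊆ A) (hBB : B' ⊆ B) (hi : Inv T A) (hiB : Inv T B) (hBn : B'.Nonempty) :
    Cplx.RelAcyclic (sub (T (A' ∪ B'))) (sub (T (A ∪ B))) := by
  have h1 := hT.relAcyclic_right hA hAc hB hBc h hi (hBn.mono hBB)
  have h2 := hT.relAcyclic_right hA' hAc' hB' hBc' h' (hi.mono hAA) hBn
  have h3 := hiB B le_rfl B' hBB hB hBc hB' hBc' hBn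
  exact Cplx.RelAcyclic.of_comp h2 (h3.trans (sub_mono (hT.mono Set.subset_union_right)) h1
    (sub_mono (hT.mono hBB)))
    (sub_mono (hT.mono Set.subset_union_right)) (sub_mono (hT.mono (Set.union_subset_union hAA hBB)))

/-- Two overlapping half planes: invariance over the parts of `U` in them implies invariance over `U`. -/
lemma Inv.split (hT : Cut T) (φ : ℂ →L[ℝ] ℝ) {α β : ℝ} (hαβ : α < β)
    (h1 : Inv T (U ∩ {t | φ t < β})) (h2 : Inv T (U ∩ {t | α < φ t})) : Inv T U := by
  have o1 : IsOpen {t | φ t < β} := isOpen_lt φ.continuous continuous_const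
  have o2 : IsOpen {t | α < φ t} := isOpen_lt continuous_const φ.continuous
  have c1 : Convex ℝ {t | φ t < β} := convex_halfSpace_lt φ.toLinearMap.isLinear β
  have c2 : Convex ℝ {t | α < φ t} := convex_halfSpace_gt φ.toLinearMap.isLinear α
  have hu : ∀ V : Set ℂ, V ∩ {t | φ t < β} ∪ V ∩ {t | α < φ t} = V := by
    intro V
    rw [← Set.inter_union_distrib_left, Set.inter_eq_left]
    intro t _
    rcases lt_or_ge (φ t) β with h | h
    · exact Or.inl h
    · exact Or.inr (hαβ.trans_le h)
  intro V hV V' hV' ho hc ho' hc' hn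
  have e := hu V'
  rw [← e, Set.union_nonempty] at hn
  rw [← hu V', ← hu V]
  rcases hn with hn | hn
  · rw [Set.union_comm, Set.union_comm (V ∩ _)]
    refine hT.relAcyclic_of_right (ho.inter o2) (hc.inter c2) (ho.inter o1) (hc.inter c1) ?_
      (ho'.inter o2) (hc'.inter c2) (ho'.inter o1) (hc'.inter c1) ?_
      (Set.inter_subset_inter_left _ hV') (Set.inter_subset_inter_left _ hV')
      (h2.mono (Set.inter_subset_inter_left _ hV)) (h1.mono (Set.inter_subset_inter_left _ hV)) hn
    · rwa [Set.union_comm, hu]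
    · rwa [Set.union_comm, hu]
  · refine hT.relAcyclic_of_right (ho.inter o1) (hc.inter c1) (ho.inter o2) (hc.inter c2) ?_
      (ho'.inter o1) (hc'.inter c1) (ho'.inter o2) (hc'.inter c2) ?_
      (Set.inter_subset_inter_left _ hV') (Set.inter_subset_inter_left _ hV')
      (h1.mono (Set.inter_subset_inter_left _ hV)) (h2.mono (Set.inter_subset_inter_left _ hV)) hn
    · rwa [hu]
    · rwa [hu]

/-- Invariance over strips of a fixed width implies invariance over a bounded set, by adding one strip
at a time. -/
lemma Inv.of_strips (hT : Cut T) (φ : ℂ →L[ℝ] ℝ) {δ : ℝ} (hδ : 0 < δ) {M : ℝ}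
    (hM : ∀ t ∈ U, |φ t| < M) (h : ∀ x, Inv T (U ∩ {t | x < φ t ∧ φ t < x + 2 * δ})) :
    Inv T U := by
  have key : ∀ n : ℕ, ∀ x, Inv T (U ∩ {t | x < φ t ∧ φ t < x + (n + 2) * δ}) := by
    intro n
    induction n with
    | zero => simpa using h
    | succ n ih =>
      intro x
      refine Inv.split hT φ (α := x + (n + 1) * δ) (β := x + (n + 2) * δ) (by linarith)
        ((ih x).mono ?_) ((h (x + (n + 1) * δ)).mono ?_)
      · rintro t ⟨⟨ht, h1, -⟩, h2⟩
        exact ⟨ht, h1, h2⟩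
      · rintro t ⟨⟨ht, -, h1⟩, h2⟩
        refine ⟨ht, h2, ?_⟩
        push_cast at h1
        linarith
  obtain ⟨n, hn⟩ := exists_nat_gt (2 * M / δ)
  rw [div_lt_iff₀ hδ] at hn
  refine (key n (-M)).mono fun t ht => ⟨ht, ?_⟩
  have := abs_lt.1 (hM t ht)
  exact ⟨this.1, by linarith⟩

/-- Points of `V` that are uniformly far from the complement. -/
def ero (V : Set ℂ) (n : ℕ) : Set ℂ :=
  {t | ∃ r : ℝ, 1 / ((n : ℝ) + 1) < r ∧ Metric.ball t r ⊆ V} ∩ Metric.ball 0 n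

lemma isOpen_ero (V : Set ℂ) (n : ℕ) : IsOpen (ero V n) := by
  refine IsOpen.inter (Metric.isOpen_iff.2 ?_) Metric.isOpen_ball
  rintro t ⟨r, hr, h⟩
  obtain ⟨s, hs1, hs2⟩ := exists_between hr
  refine ⟨r - s, sub_pos.2 hs2, fun t' ht' => ⟨s, hs1, (Metric.ball_subset_ball' ?_).trans h⟩⟩
  have := Metric.mem_ball.1 ht'
  linarith

lemma convex_ero (hV : Convex ℝ V) (n : ℕ) : Convex ℝ (ero V n) := by
  refine Convex.inter ?_ (convex_ball _ _)
  rintro t ⟨r, hr, h⟩ t' ⟨r', hr', h'⟩ a b ha hb hab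
  refine ⟨min r r', lt_min hr hr', fun s hs => ?_⟩
  have hs' := Metric.mem_ball.1 hs
  rw [lt_min_iff, dist_eq_norm] at hs'
  set w := s - (a • t + b • t')
  have e : s = a • (t + w) + b • (t' + w) := by
    have : w = (a + b) • w := by rw [hab, one_smul]
    have h2 : s = a • t + b • t' + w := by simp [w]
    rw [smul_add, smul_add, h2]
    nth_rewrite 1 [this]
    rw [add_smul]
    abel
  rw [e]
  exact hV (h (by simpa using hs'.1)) (h' (by simpa using hs'.2)) ha hb hab

lemma closure_ero (V : Set ℂ) (n : ℕ) : closure (ero V n) ⊆ V := by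
  intro t ht
  obtain ⟨t', ⟨⟨r, hr, h⟩, -⟩, hd⟩ := Metric.mem_closure_iff.1 ht (1 / ((n : ℝ) + 1)) (by positivity)
  exact h (Metric.mem_ball.2 (hd.trans hr))

lemma ero_mono (V : Set ℂ) : Monotone (ero V) := by
  intro n k hnk
  have hnk' : (n : ℝ) ≤ k := Nat.cast_le.2 hnk
  refine Set.inter_subset_inter (fun t => ?_) (Metric.ball_subset_ball hnk')
  rintro ⟨r, hr, h⟩
  exact ⟨r, (one_div_le_one_div_of_le (by positivity) (by linarith)).trans_lt hr, h⟩

lemma iUnion_ero (hV : IsOpen V) : ⋃ n, ero V n = V := by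
  refine Set.Subset.antisymm (Set.iUnion_subset fun n => subset_closure.trans (closure_ero V n)) ?_
  intro t ht
  obtain ⟨r, hr, h⟩ := Metric.isOpen_iff.1 hV t ht
  obtain ⟨n, hn⟩ := exists_nat_one_div_lt hr
  obtain ⟨k, hk⟩ := exists_nat_gt ‖t‖
  refine Set.mem_iUnion.2 ⟨max n k, ⟨r, lt_of_le_of_lt ?_ hn, h⟩, ?_⟩
  · exact one_div_le_one_div_of_le (by positivity)
      (by have : (n : ℝ) ≤ (max n k : ℕ) := Nat.cast_le.2 (le_max_left _ _); linarith)
  · rw [mem_ball_zero_iff]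
    exact hk.trans_le (Nat.cast_le.2 (le_max_right _ _))

/-- Local invariance implies invariance over relatively compact sets: small rectangles lie in one of
the given neighbourhoods by the Lebesgue number lemma, and they are assembled to strips and then to
the whole set. -/
lemma Inv.of_compact (hT : Cut T) {K : Set ℂ} (hK : IsCompact K)
    (h : ∀ t ∈ K, ∃ W, IsOpen W ∧ t ∈ W ∧ Inv T W) (hU : U ⊆ K) : Inv T U := by
  choose! W hW htW hiW using h
  obtain ⟨ε, hε, hL⟩ := lebesgue_number_lemma_of_metric (c := fun t : K => W t) hK
    (fun t => hW t t.2) fun t ht => Set.mem_iUnion.2 ⟨⟨t, ht⟩, htW t ht⟩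
  obtain ⟨M, hM⟩ := hK.exists_bound_of_continuousOn (f := fun t : ℂ => t) continuousOn_id
  refine Inv.of_strips hT Complex.reCLM (δ := ε / 4) (by positivity) (M := M + 1)
    (fun t ht => ((Complex.abs_re_le_norm t).trans (hM t (hU ht))).trans_lt (lt_add_one M)) fun x => ?_
  refine Inv.of_strips hT Complex.imCLM (δ := ε / 4) (by positivity) (M := M + 1)
    (fun t ht => ((Complex.abs_im_le_norm t).trans (hM t (hU ht.1))).trans_lt (lt_add_one M)) fun y => ?_
  rintro V hV V' hV' ho hc ho' hc' ⟨t, ht⟩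
  have ht' := hV (hV' ht)
  obtain ⟨i, hi⟩ := hL t (hU ht'.1.1)
  refine hiW i i.2 V (Set.Subset.trans (fun s hs => ?_) hi) V' hV' ho hc ho' hc' ⟨t, ht⟩
  obtain ⟨⟨-, h1, h2⟩, h3, h4⟩ := ht'
  obtain ⟨⟨-, h5, h6⟩, h7, h8⟩ := hV hs
  simp only [Complex.reCLM_apply, Complex.imCLM_apply] at h1 h2 h3 h4 h5 h6 h7 h8
  rw [Metric.mem_ball, dist_eq_norm]
  refine (Complex.norm_le_abs_re_add_abs_im _).trans_lt ?_
  have h9 : |(s - t).re| < ε / 2 := by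
    rw [Complex.sub_re, abs_lt]; constructor <;> linarith
  have h10 : |(s - t).im| < ε / 2 := by
    rw [Complex.sub_im, abs_lt]; constructor <;> linarith
  linarith

/-- Local invariance implies that the inclusion of a small ball is an isomorphism in homology:
the convex set is exhausted by relatively compact convex sets, and homology commutes with
increasing unions of open sets. -/
lemma Inv.of_local_aux (hT : Cut T) (h : ∀ t ∈ V, ∃ W, IsOpen W ∧ t ∈ W ∧ Inv T W) (hV : IsOpen V)
    (hVc : Convex ℝ V) {t₀ : ℂ} {ε : ℝ} (hε : 0 < ε) (hb : Metric.ball t₀ (2 * ε) ⊆ V) :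
    Cplx.RelAcyclic (sub (T (Metric.ball t₀ ε))) (sub (T V)) := by
  obtain ⟨n, hn⟩ := exists_nat_one_div_lt hε
  obtain ⟨k, hk⟩ := exists_nat_gt (‖t₀‖ + ε)
  have hsub : ∀ i, Metric.ball t₀ ε ⊆ ero V (i + max n k) := by
    intro i
    refine Set.Subset.trans (fun s hs => ?_) (ero_mono V (Nat.le_add_left _ _))
    refine ⟨⟨ε, lt_of_le_of_lt ?_ hn, (Metric.ball_subset_ball' ?_).trans hb⟩, ?_⟩
    · exact one_div_le_one_div_of_le (by positivity)
        (by have : (n : ℝ) ≤ (max n k : ℕ) := Nat.cast_le.2 (le_max_left _ _); linarith)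
    · linarith [Metric.mem_ball.1 hs]
    · rw [mem_ball_zero_iff]
      have h1 := Metric.mem_ball.1 hs
      rw [dist_eq_norm] at h1
      have h2 := norm_le_norm_add_norm_sub' s t₀
      have h3 : (k : ℝ) ≤ (max n k : ℕ) := Nat.cast_le.2 (le_max_right _ _)
      linarith
  have hU : T V = ⋃ i, T (ero V (i + max n k)) := by
    rw [← hT.iUnion]
    congr 1
    refine Set.Subset.antisymm ?_
      (Set.iUnion_subset fun i => subset_closure.trans (closure_ero V _))
    conv_lhs => rw [← iUnion_ero hV]
    exact Set.iUnion_subset fun i => (ero_mono V (Nat.le_add_right i (max n k))).trans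
      (Set.subset_iUnion (fun i => ero V (i + max n k)) i)
  rw [hU]
  refine relAcyclic_iUnion (fun i => hT.isOpen _ (isOpen_ero V _))
    (fun i k hik => hT.mono (ero_mono V (by omega))) fun i => ?_
  refine Inv.of_compact hT (K := closure (ero V (i + max n k))) ?_
    (fun t ht => h t (closure_ero V _ ht)) subset_closure _ le_rfl _ (hsub i) (isOpen_ero V _)
    (convex_ero hVc _) Metric.isOpen_ball (convex_ball _ _) ⟨t₀, Metric.mem_ball_self hε⟩
  exact (Metric.isBounded_ball.subset Set.inter_subset_right).isCompact_closure

/-- Homology isomorphisms for inclusions of convex parameter sets can be checked locally. -/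
theorem Inv.of_local (hT : Cut T) (h : ∀ t ∈ U, ∃ W, IsOpen W ∧ t ∈ W ∧ Inv T W) : Inv T U := by
  rintro V hV V' hV' ho hc ho' hc' ⟨t₀, ht₀⟩
  obtain ⟨r, hr, hb⟩ := Metric.isOpen_iff.1 ho' t₀ ht₀
  have hb' : Metric.ball t₀ (2 * (r / 2)) ⊆ V' := by rwa [mul_div_cancel₀ _ two_ne_zero]
  exact Cplx.RelAcyclic.of_comp
    (Inv.of_local_aux hT (fun t ht => h t (hV (hV' ht))) ho' hc' (half_pos hr) hb')
    (Inv.of_local_aux hT (fun t ht => h t (hV ht)) ho hc (half_pos hr) (hb'.trans hV'))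
    (sub_mono (hT.mono ((Metric.ball_subset_ball (by linarith)).trans hb)))
    (sub_mono (hT.mono hV'))

/-- A relation between open subsets of `ℂ` and integers satisfying inclusion–exclusion, as the relation of
having a given Euler characteristic does. -/
structure MV (Q : Set ℂ → ℤ → Prop) : Prop where
  empty : Q ∅ 0
  union : ∀ {U V : Set ℂ} {a b c : ℤ}, IsOpen U → IsOpen V → Q U a → Q V b → Q (U ∩ V) c →
    Q (U ∪ V) (a + b - c)

lemma Cut.mv (hT : Cut T) : MV fun V c => Cplx.HasChi (sub (T V)) c where
  empty := by
    rw [hT.empty, sub_empty]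
    exact Cplx.HasChi.bot
  union hU hV ha hb hc := by
    rw [hT.inter] at hc
    rw [hT.union]
    exact hasChi_union (hT.isOpen _ hU) (hT.isOpen _ hV) ha hb hc

/-- The Euler characteristic of a punctured convex set vanishes: cut it by a horizontal and a
vertical line into half discs and quarter discs. -/
theorem MV.punctured {Q : Set ℂ → ℤ → Prop} (hQ : MV Q) {S : Set ℂ} (hS : IsOpen S) (hSc : Convex ℝ S) {b : ℂ}
    (hb : b ∈ S) {c : ℤ} (h : ∀ V ⊆ S \ {b}, IsOpen V → Convex ℝ V → V.Nonempty →
      Q V c) : Q (S \ {b}) 0 := by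
  have oL : ∀ φ : ℂ →L[ℝ] ℝ, IsOpen {t | φ t < φ b} :=
    fun φ => isOpen_lt φ.continuous continuous_const
  have oR : ∀ φ : ℂ →L[ℝ] ℝ, IsOpen {t | φ b < φ t} :=
    fun φ => isOpen_lt continuous_const φ.continuous
  have cL : ∀ φ : ℂ →L[ℝ] ℝ, Convex ℝ {t | φ t < φ b} :=
    fun φ => convex_halfSpace_lt φ.toLinearMap.isLinear _
  have cR : ∀ φ : ℂ →L[ℝ] ℝ, Convex ℝ {t | φ b < φ t} :=
    fun φ => convex_halfSpace_gt φ.toLinearMap.isLinear _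
  obtain ⟨r, hr, hball⟩ := Metric.isOpen_iff.1 hS b hb
  have hpt : ∀ x y : ℝ, |x| < r / 2 → |y| < r / 2 → b + (x + y * Complex.I) ∈ S := by
    intro x y hx hy
    apply hball
    rw [Metric.mem_ball, dist_eq_norm, add_sub_cancel_left]
    refine (norm_add_le _ _).trans_lt ?_
    rw [norm_mul, Complex.norm_I, mul_one, Complex.norm_real, Complex.norm_real]
    simp only [Real.norm_eq_abs]
    linarith
  -- two disjoint pieces, whose parts inside `Z` are convex, open and nonempty
  have hdisj : ∀ (φ : ℂ →L[ℝ] ℝ) (Z : Set ℂ), Z ⊆ S → IsOpen Z → Convex ℝ Z →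
      (Z ∩ {t | φ t < φ b}).Nonempty → (Z ∩ {t | φ b < φ t}).Nonempty →
      Q (Z ∩ {t | φ t < φ b} ∪ Z ∩ {t | φ b < φ t}) (2 * c) := by
    intro φ Z hZ hZo hZc h1 h2
    have hh := hQ.union (hZo.inter (oL φ)) (hZo.inter (oR φ))
      (h _ (fun t ht => ⟨hZ ht.1, fun e => by
        have := ht.2
        rw [Set.mem_singleton_iff.1 e] at this
        exact lt_irrefl (φ b) this⟩) (hZo.inter (oL φ)) (hZc.inter (cL φ)) h1)
      (h _ (fun t ht => ⟨hZ ht.1, fun e => by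
        have := ht.2
        rw [Set.mem_singleton_iff.1 e] at this
        exact lt_irrefl (φ b) this⟩) (hZo.inter (oR φ)) (hZc.inter (cR φ)) h2) (c := 0) (by
        have : (Z ∩ {t | φ t < φ b}) ∩ (Z ∩ {t | φ b < φ t}) = ∅ :=
          Set.eq_empty_of_forall_notMem fun t ht =>
          lt_asymm (show φ t < φ b from ht.1.2) ht.2.2
        rw [this]
        exact hQ.empty)
    convert hh using 1
    ring
  let A := S ∩ {t | Complex.reCLM t < Complex.reCLM b} ∪ S ∩ {t | Complex.reCLM b < Complex.reCLM t}
  let B := S ∩ {t | Complex.imCLM t < Complex.imCLM b} ∪ S ∩ {t | Complex.imCLM b < Complex.imCLM t}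
  have hr4 : |r / 4| < r / 2 := by rw [abs_of_pos (by positivity)]; linarith
  have hr4' : |-(r / 4)| < r / 2 := by rwa [abs_neg]
  have oA : IsOpen A := (hS.inter (oL _)).union (hS.inter (oR _))
  have oB : IsOpen B := (hS.inter (oL _)).union (hS.inter (oR _))
  have hA : Q A (2 * c) :=
    hdisj Complex.reCLM S le_rfl hS hSc ⟨_, hpt (-(r / 4)) 0 hr4' (by simpa using hr), by simpa using hr⟩
      ⟨_, hpt (r / 4) 0 hr4 (by simpa using hr), by simpa using hr⟩
  have hB : Q B (2 * c) :=
    hdisj Complex.imCLM S le_rfl hS hSc ⟨_, hpt 0 (-(r / 4)) (by simpa using hr) hr4', by simpa using hr⟩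
      ⟨_, hpt 0 (r / 4) (by simpa using hr) hr4, by simpa using hr⟩
  have hAB : Q (A ∩ B) (2 * c + 2 * c - 0) := by
    have e : A ∩ B = (A ∩ {t | Complex.imCLM t < Complex.imCLM b}) ∪
        (A ∩ {t | Complex.imCLM b < Complex.imCLM t}) := by
      ext t
      simp only [A, B, Set.mem_inter_iff, Set.mem_union, Set.mem_ofPred_eq]
      tauto
    have e1 : ∀ H : Set ℂ, A ∩ H = (S ∩ H) ∩ {t | Complex.reCLM t < Complex.reCLM b} ∪
        (S ∩ H) ∩ {t | Complex.reCLM b < Complex.reCLM t} := by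
      intro H
      ext t
      simp only [A, Set.mem_inter_iff, Set.mem_union, Set.mem_ofPred_eq]
      tauto
    have h1 := hdisj Complex.reCLM (S ∩ {t | Complex.imCLM t < Complex.imCLM b})
      Set.inter_subset_left (hS.inter (oL _)) (hSc.inter (cL _))
      ⟨_, ⟨hpt (-(r / 4)) (-(r / 4)) hr4' hr4', by simpa using hr⟩, by simpa using hr⟩
      ⟨_, ⟨hpt (r / 4) (-(r / 4)) hr4 hr4', by simpa using hr⟩, by simpa using hr⟩
    have h2 := hdisj Complex.reCLM (S ∩ {t | Complex.imCLM b < Complex.imCLM t})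
      Set.inter_subset_left (hS.inter (oR _)) (hSc.inter (cR _))
      ⟨_, ⟨hpt (-(r / 4)) (r / 4) hr4' hr4, by simpa using hr⟩, by simpa using hr⟩
      ⟨_, ⟨hpt (r / 4) (r / 4) hr4 hr4, by simpa using hr⟩, by simpa using hr⟩
    rw [← e1] at h1 h2
    rw [e]
    refine hQ.union (oA.inter (oL _)) (oA.inter (oR _)) h1 h2 ?_
    have : (A ∩ {t | Complex.imCLM t < Complex.imCLM b}) ∩
        (A ∩ {t | Complex.imCLM b < Complex.imCLM t}) = ∅ :=
      Set.eq_empty_of_forall_notMem fun t ht =>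
        lt_asymm (show Complex.imCLM t < Complex.imCLM b from ht.1.2) ht.2.2
    rw [this]
    exact hQ.empty
  have hfin := hQ.union oA oB hA hB hAB
  have e : A ∪ B = S \ {b} := by
    ext t
    simp only [A, B, Set.mem_inter_iff, Set.mem_union, Set.mem_ofPred_eq, Set.mem_sdiff,
      Set.mem_singleton_iff, Complex.reCLM_apply, Complex.imCLM_apply, Complex.ext_iff, not_and_or,
      ← and_or_left, ← ne_eq, lt_or_lt_iff_ne]
  rw [e] at hfin
  convert hfin using 1
  ring

/-- Euler characteristic above a punctured convex set. -/
theorem Cut.hasChi_punctured (hT : Cut T) {S : Set ℂ} (hS : IsOpen S) (hSc : Convex ℝ S) {b : ℂ}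
    (hb : b ∈ S) {c : ℤ} (h : ∀ V ⊆ S \ {b}, IsOpen V → Convex ℝ V → V.Nonempty →
      Cplx.HasChi (sub (T V)) c) : Cplx.HasChi (sub (T (S \ {b}))) 0 :=
  hT.mv.punctured hS hSc hb h

end

end

section

/-! ### The curve in a chart, away from the branch points -/

section
variable {d : ℕ} {G : ℂ → Polynomial ℂ}

/-- The zeros of the members of a family having `d` distinct zeros. -/
abbrev RootSp (d : ℕ) (G : ℂ → Polynomial ℂ) : Type :=
  {q : ℂ × ℂ // nroots (G q.1) = d ∧ (G q.1).IsRoot q.2}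

/-- The parameters of the members of a family having `d` distinct zeros. -/
abbrev Simp (d : ℕ) (G : ℂ → Polynomial ℂ) : Type := {t : ℂ // nroots (G t) = d}

/-- The projection of the zeros to the parameters. -/
def rootMap (d : ℕ) (G : ℂ → Polynomial ℂ) (e : RootSp d G) : Simp d G := ⟨e.1.1, e.2.1⟩

lemma continuous_rootMap : Continuous (rootMap d G) :=
  (continuous_fst.comp continuous_subtype_val).subtype_mk _

/-- Where the roots are distinct they are the sheets of a covering. -/
theorem Fam.isCoveringMap_rootMap (F : Fam d G) : IsCoveringMap (rootMap d G) := by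
  refine IsFiberBundle.isCoveringMap (F := Fin d) fun b => ?_
  obtain ⟨U, hU, hbU, r, hr, hinj, hroot⟩ := F.exists_sections b.2
  have hUd : ∀ t ∈ U, nroots (G t) = d := fun t ht =>
    F.nroots_of_sections (hinj t ht) fun i => (hroot t ht _).2 ⟨i, rfl⟩
  classical
  let idx : RootSp d G → Fin d := fun e =>
    if h : ∃ i, e.1.2 = r i e.1.1 then h.choose else ⟨0, F.pos⟩
  have hidx : ∀ e : RootSp d G, e.1.1 ∈ U → e.1.2 = r (idx e) e.1.1 := fun e he => by
    have h := (hroot _ he _).1 e.2.2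
    change _ = r (if h : ∃ i, e.1.2 = r i e.1.1 then h.choose else ⟨0, F.pos⟩) e.1.1
    rw [dif_pos h]
    exact h.choose_spec
  have hc1 : Continuous fun e : RootSp d G => e.1.1 := continuous_fst.comp continuous_subtype_val
  have hc2 : Continuous fun e : RootSp d G => e.1.2 := continuous_snd.comp continuous_subtype_val
  have hsrc : IsOpen {e : RootSp d G | e.1.1 ∈ U} := hU.preimage hc1
  have hbase : IsOpen {t : Simp d G | t.1 ∈ U} := hU.preimage continuous_subtype_val
  let inv : Simp d G × Fin d → RootSp d G := fun y => if h : y.1.1 ∈ U then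
    ⟨(y.1.1, r y.2 y.1.1), y.1.2, (hroot _ h _).2 ⟨_, rfl⟩⟩ else
    ⟨(y.1.1, rt (G y.1.1) ⟨0, by rw [y.1.2]; exact F.pos⟩), y.1.2, F.isRoot_rt _ _⟩
  have hinv : ∀ y, y.1.1 ∈ U → (inv y).1 = (y.1.1, r y.2 y.1.1) := fun y hy => by
    change (if h : y.1.1 ∈ U then (⟨(y.1.1, r y.2 y.1.1), _⟩ : RootSp d G) else _).1 = _
    rw [dif_pos hy]
  refine ⟨{ toFun := fun e => (rootMap d G e, idx e)
            invFun := inv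
            source := {e | e.1.1 ∈ U}
            target := {t : Simp d G | t.1 ∈ U} ×ˢ Set.univ
            map_source' := fun e he => ⟨he, trivial⟩
            map_target' := ?_
            left_inv' := ?_
            right_inv' := ?_
            open_source := hsrc
            open_target := hbase.prod isOpen_univ
            continuousOn_toFun := ?_
            continuousOn_invFun := ?_
            baseSet := {t : Simp d G | t.1 ∈ U}
            open_baseSet := hbase
            source_eq := rfl
            target_eq := rfl
            proj_toFun := fun e _ => rfl }, hbU⟩
  · rintro ⟨t, i⟩ ⟨ht, -⟩
    have ht' : t.1 ∈ U := ht
    change (inv (t, i)).1.1 ∈ U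
    rw [hinv _ ht']
    exact ht'
  · intro e he
    have he' : e.1.1 ∈ U := he
    refine Subtype.ext ((hinv _ he').trans ?_)
    exact Prod.ext rfl (hidx e he').symm
  · rintro ⟨t, i⟩ ⟨ht, -⟩
    have ht' : t.1 ∈ U := ht
    have h1 := hinv (t, i) ht'
    have h2 : (inv (t, i)).1.1 = t.1 := congrArg Prod.fst h1
    refine Prod.ext (Subtype.ext h2) ?_
    have h3 := hidx (inv (t, i)) (h2 ▸ ht')
    rw [h2, h1] at h3
    exact (hinj _ ht' h3).symm
  · refine continuous_rootMap.continuousOn.prodMk fun e he => ContinuousAt.continuousWithinAt ?_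
    have he' : e.1.1 ∈ U := he
    refine (continuousAt_const (y := idx e)).congr ?_
    have h1 : ∀ i, i ≠ idx e → ∀ᶠ e' in nhds e, e'.1.2 ≠ r i e'.1.1 := fun i hi => by
      have h2 : ContinuousAt (fun e' : RootSp d G => r i e'.1.1) e :=
        ContinuousAt.comp (g := r i) ((hr i).continuousAt (hU.mem_nhds he')) hc1.continuousAt
      refine (ContinuousAt.ne_iff_eventually_ne hc2.continuousAt h2).1 ?_
      rw [hidx e he']
      exact fun h => hi (hinj _ he' h).symm
    have h2 : ∀ᶠ e' in nhds e, ∀ i, i ≠ idx e → e'.1.2 ≠ r i e'.1.1 :=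
      Filter.eventually_all.2 fun i => by
        by_cases hi : i = idx e
        · exact Filter.Eventually.of_forall fun _ h => absurd hi h
        · exact (h1 i hi).mono fun _ h _ => h
    filter_upwards [h2, hsrc.mem_nhds he] with e' h3 h4
    by_contra hne
    exact h3 (idx e') (fun h => hne h.symm) (hidx e' h4)
  · have : ContinuousOn (fun y : Simp d G × Fin d => r y.2 y.1.1) ({t | t.1 ∈ U} ×ˢ Set.univ) := by
      rintro ⟨t, i⟩ ⟨ht, -⟩
      refine ContinuousAt.continuousWithinAt ?_
      have h2 : ContinuousAt (fun y : Simp d G × Fin d => r i y.1.1) (t, i) :=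
        ContinuousAt.comp (g := r i) (f := fun y : Simp d G × Fin d => y.1.1)
          ((hr i).continuousAt (hU.mem_nhds ht))
          (continuous_subtype_val.comp continuous_fst).continuousAt
      refine h2.congr ?_
      have : ∀ᶠ y : Simp d G × Fin d in nhds (t, i), y.2 = i :=
        continuous_snd.continuousAt.eventually (p := fun k => k = i)
          ((isOpen_discrete {i}).mem_nhds rfl)
      filter_upwards [this] with y hy
      rw [hy]
    refine Topology.IsEmbedding.subtypeVal.continuousOn_iff.2 ?_
    refine ((continuous_subtype_val.comp continuous_fst).continuousOn.prodMk this).congr ?_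
    rintro y ⟨hy, -⟩
    exact hinv y hy

end

section
variable {P : Type} [TopologicalSpace P] {D : Set P} {j : ℂ × ℂ → P} {d : ℕ} {G : ℂ → Polynomial ℂ}

/-- The part of the curve `D` lying over the parameter set `V` in the chart `j`. -/
def cur (D : Set P) (j : ℂ × ℂ → P) (V : Set ℂ) : Set ↥D := {y | ∃ q : ℂ × ℂ, q.1 ∈ V ∧ j q = y}

/-- The curve in a chart, cut up according to the parameter. -/
lemma cut_cur (hj : Topology.IsOpenEmbedding j) : Cut (cur D j) where
  isOpen V hV := by
    have : cur D j V = Subtype.val ⁻¹' (j '' {q | q.1 ∈ V}) := rfl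
    rw [this]
    exact (hj.isOpenMap _ (hV.preimage continuous_fst)).preimage continuous_subtype_val
  union V W := by
    ext y
    constructor
    · rintro ⟨q, h | h, e⟩
      exacts [Or.inl ⟨q, h, e⟩, Or.inr ⟨q, h, e⟩]
    · rintro (⟨q, h, e⟩ | ⟨q, h, e⟩)
      exacts [⟨q, Or.inl h, e⟩, ⟨q, Or.inr h, e⟩]
  inter V W := by
    ext y
    constructor
    · rintro ⟨q, h, e⟩
      exact ⟨⟨q, h.1, e⟩, ⟨q, h.2, e⟩⟩
    · rintro ⟨⟨q, h, e⟩, ⟨q', h', e'⟩⟩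
      obtain rfl := hj.injective (e.trans e'.symm)
      exact ⟨q, ⟨h, h'⟩, e⟩
  iUnion V := by
    ext y
    simp only [cur, Set.mem_iUnion, Set.mem_ofPred_eq]
    constructor
    · rintro ⟨q, ⟨n, h⟩, e⟩
      exact ⟨n, q, h, e⟩
    · rintro ⟨n, q, h, e⟩
      exact ⟨q, ⟨n, h⟩, e⟩
  empty := Set.eq_empty_of_forall_notMem fun _ ⟨_, h, _⟩ => h

/-- Coordinates on a part of the curve. -/
lemma exists_coord (hj : Topology.IsOpenEmbedding j) (V : Set ℂ) :
    ∃ k : C(cur D j V, ℂ × ℂ), ∀ y, (k y).1 ∈ V ∧ j (k y) = y.1 := by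
  choose k hk using fun y : cur D j V => y.2
  refine ⟨⟨k, ?_⟩, hk⟩
  rw [hj.isEmbedding.continuous_iff]
  have : j ∘ k = fun y : cur D j V => (y.1 : P) := funext fun y => (hk y).2
  rw [this]
  exact continuous_subtype_val.comp continuous_subtype_val

/-- The points of the curve over one parameter form a finite discrete set. -/
lemma hasChi_cur_point (F : Fam d G) (hj : Topology.IsOpenEmbedding j)
    (hD : ∀ q : ℂ × ℂ, j q ∈ D ↔ (G q.1).IsRoot q.2) (b : ℂ) :
    Cplx.HasChi (sub (cur D j {b})) (nroots (G b)) := by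
  obtain ⟨k, hk⟩ := exists_coord (D := D) hj {b}
  have hkb : ∀ y, k y = (b, (k y).2) := fun y => Prod.ext (hk y).1 rfl
  let e : cur D j {b} ≃ (G b).roots.toFinset :=
    { toFun := fun y => ⟨(k y).2, by
        rw [F.mem_roots]
        have := (hD (k y)).1 ((hk y).2 ▸ y.1.2)
        rwa [(hk y).1] at this⟩
      invFun := fun w => ⟨⟨j (b, w), (hD _).2 (F.mem_roots.1 w.2)⟩, (b, w), rfl, rfl⟩
      left_inv := fun y => Subtype.ext (Subtype.ext (by
        change j (b, (k y).2) = y.1.1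
        rw [← hkb, (hk y).2]))
      right_inv := fun w => Subtype.ext (by
        have h := (hk ⟨⟨j (b, w), (hD _).2 (F.mem_roots.1 w.2)⟩, (b, w), rfl, rfl⟩).2
        exact congrArg Prod.snd (hj.injective h)) }
  have hfin : Finite (cur D j {b}) := Finite.of_equiv _ e.symm
  have hdisc : DiscreteTopology (cur D j {b}) := by
    refine DiscreteTopology.of_continuous_injective (f := e) ?_ e.injective
    exact (continuous_snd.comp k.continuous).subtype_mk _
  have hn : (cur D j {b}).ncard = nroots (G b) := by
    rw [← Nat.card_coe_set_eq, Nat.card_congr e]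
    rw [Nat.card_eq_fintype_card, Fintype.card_coe]; rfl
  rw [← hn]
  exact hasChi_finite (Set.toFinite _)

/-- Over a convex set without branch points the curve is a union of `d` sheets. -/
theorem hasChi_cur (F : Fam d G) (hj : Topology.IsOpenEmbedding j)
    (hD : ∀ q : ℂ × ℂ, j q ∈ D ↔ (G q.1).IsRoot q.2) {V : Set ℂ} (hV : Convex ℝ V)
    (hVn : V.Nonempty) (h : ∀ t ∈ V, nroots (G t) = d) :
    Cplx.HasChi (sub (cur D j V)) d := by
  obtain ⟨t₀, ht₀⟩ := hVn
  obtain ⟨k, hk⟩ := exists_coord (D := D) hj V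
  have h1 := hasChi_cur_point F hj hD t₀
  rw [h t₀ ht₀] at h1
  have hm : ∀ z : unitInterval × cur D j V,
      (1 - (z.1 : ℝ)) • (k z.2).1 + (z.1 : ℝ) • t₀ ∈ V := fun z =>
    hV (hk z.2).1 ht₀ (sub_nonneg.2 z.1.2.2) z.1.2.1 (by ring)
  let ι : RootSp d G → ↥D := fun e => ⟨j e.1, (hD _).2 e.2.2⟩
  have hι : Continuous ι := (hj.continuous.comp continuous_subtype_val).subtype_mk _
  refine Cplx.RelAcyclic.hasChi (sub_mono (Cut.mono (cut_cur hj) (Set.singleton_subset_iff.2 ht₀)))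
    ?_ h1
  refine relAcyclic_lift F.isCoveringMap_rootMap hι
    ⟨fun z => ⟨(1 - (z.1 : ℝ)) • (k z.2).1 + (z.1 : ℝ) • t₀, h _ (hm z)⟩, ?_⟩
    ⟨fun y => ⟨k y, h _ (hk y).1, (hD _).1 (by rw [(hk y).2]; exact y.1.2)⟩, ?_⟩ ?_ ?_ ?_ ?_ ?_
  · refine Continuous.subtype_mk ?_ _
    fun_prop
  · exact k.continuous.subtype_mk _
  · exact fun y => Subtype.ext (hk y).2
  · intro y
    refine Subtype.ext ?_
    change (1 - ((0 : unitInterval) : ℝ)) • (k y).1 + ((0 : unitInterval) : ℝ) • t₀ = (k y).1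
    simp
  · intro y t e he
    refine ⟨e.1, ?_, rfl⟩
    have := congrArg Subtype.val he
    change e.1.1 = _ at this
    rw [this]
    exact hm (t, y)
  · intro y e he
    refine ⟨e.1, ?_, rfl⟩
    have := congrArg Subtype.val he
    change e.1.1 = (1 - ((1 : unitInterval) : ℝ)) • (k y).1 + ((1 : unitInterval) : ℝ) • t₀ at this
    simpa using this
  · rintro y ⟨q, hq, hqy⟩ t e he
    refine ⟨e.1, ?_, rfl⟩
    have := congrArg Subtype.val he
    change e.1.1 = (1 - (t : ℝ)) • (k y).1 + (t : ℝ) • t₀ at this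
    have h2 : k y = q := hj.injective ((hk y).2.trans hqy.symm)
    rw [h2, Set.mem_singleton_iff.1 hq] at this
    change e.1.1 = t₀
    rw [this, ← add_smul, sub_add_cancel, one_smul]

end

end

section

/-! ### The curve in a chart, near a branch point -/

section
variable {P : Type} [TopologicalSpace P] {D : Set P} {j : ℂ × ℂ → P} {d : ℕ} {G : ℂ → Polynomial ℂ}

/-- Near a branch point `b` the curve retracts onto its points over `b`: the parameter is pushed
radially into `b` while the zero follows along, which is possible continuously up to the end because
the zeros over `t` are within `eta d G b t` of the zeros over `b`. -/
theorem relAcyclic_cur_branch (F : Fam d G) (hj : Topology.IsOpenEmbedding j)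
    (hD : ∀ q : ℂ × ℂ, j q ∈ D ↔ (G q.1).IsRoot q.2) {b : ℂ} {S : Set ℂ} (hS : Convex ℝ S)
    (hbS : b ∈ S) (hnb : ∀ t ∈ S, t ≠ b → nroots (G t) = d) {n : ℕ} {w : Fin n → ℂ}
    (hw : ∀ z, (G b).IsRoot z ↔ ∃ i, z = w i) {δ : ℝ}
    (hsep : ∀ i i', i ≠ i' → 2 * δ < ‖w i - w i'‖) (hδ : ∀ t ∈ S, eta d G b t < δ) :
    Cplx.RelAcyclic (sub (cur D j {b})) (sub (cur D j S)) := by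
  have hu : ∀ z i i', ‖z - w i‖ < δ → ‖z - w i'‖ < δ → i = i' := by
    intro z i i' h h'
    by_contra hne
    have h1 := norm_sub_le (z - w i') (z - w i)
    rw [sub_sub_sub_cancel_left] at h1
    linarith [hsep i i' hne]
  let Q := {q : ℂ × ℂ // q.1 ∈ S ∧ (G q.1).IsRoot q.2}
  have hQ : ∀ q : Q, ∃ i, ‖q.1.2 - w i‖ ≤ eta d G b q.1.1 := fun q => by
    obtain ⟨z, hz, hle⟩ := F.near (b := b) q.2.2
    obtain ⟨i, rfl⟩ := (hw z).1 hz
    exact ⟨i, hle⟩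
  choose ix hix using hQ
  have hixc : Continuous ix := by
    refine continuous_iff_continuousAt.2 fun q => (continuousAt_const (y := ix q)).congr ?_
    have hc : Continuous fun q' : Q => ‖q'.1.2 - w (ix q)‖ := by fun_prop
    have h1 : ‖q.1.2 - w (ix q)‖ < δ := (hix q).trans_lt (hδ _ q.2.1)
    filter_upwards [hc.continuousAt.eventually (gt_mem_nhds h1)] with q' hq'
    exact hu _ _ _ hq' ((hix q').trans_lt (hδ _ q'.2.1))
  obtain ⟨k, hk⟩ := exists_coord (D := D) hj S
  have hkr : ∀ y, (G (k y).1).IsRoot (k y).2 := fun y => (hD _).1 ((hk y).2 ▸ y.1.2)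
  let κ : cur D j S → Q := fun y => ⟨k y, (hk y).1, hkr y⟩
  have hκ : Continuous κ := k.continuous.subtype_mk _
  -- the radial motion of the parameter
  let τ : ℂ → ℝ → ℂ := fun t u => (1 - u) • t + u • b
  have hτS : ∀ t ∈ S, ∀ u : ℝ, 0 ≤ u → u ≤ 1 → τ t u ∈ S := fun t ht u h0 h1 =>
    hS ht hbS (sub_nonneg.2 h1) h0 (by ring)
  have hτb : ∀ t u, τ t u - b = (1 - u) • (t - b) := fun t u => by
    simp only [τ, Complex.real_smul]; push_cast; ring
  have hτne : ∀ t, t ≠ b → ∀ u : ℝ, u < 1 → τ t u ≠ b := fun t ht u h1 h => by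
    have := hτb t u
    rw [h, sub_self, eq_comm, smul_eq_zero] at this
    rcases this with h | h
    · linarith
    · exact ht (sub_eq_zero.1 h)
  let X := {x : cur D j S × unitInterval // (k x.1).1 ≠ b ∧ x.2 ≠ 1}
  have hX : IsOpen {x : cur D j S × unitInterval | (k x.1).1 ≠ b ∧ x.2 ≠ 1} :=
    (isOpen_ne_fun (by fun_prop) continuous_const).inter
      (isOpen_ne_fun continuous_snd continuous_const)
  have hlt : ∀ (x : X) (s : unitInterval), (s : ℝ) * x.1.2 < 1 := fun x s => by
    have h1 : (x.1.2 : ℝ) < 1 := lt_of_le_of_ne x.1.2.2.2 fun h => x.2.2 (Subtype.ext h)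
    exact (mul_le_of_le_one_left x.1.2.2.1 s.2.2).trans_lt h1
  have hXne : ∀ x : X, (k x.1.1).1 ≠ b := fun x => x.2.1
  have hnn : ∀ (x : X) (s : unitInterval), 0 ≤ (s : ℝ) * x.1.2 := fun x s =>
    mul_nonneg s.2.1 x.1.2.2.1
  let g : C(unitInterval × X, Simp d G) :=
    ⟨fun z => ⟨τ (k z.2.1.1).1 ((z.1 : ℝ) * z.2.1.2),
      hnb _ (hτS _ (hk _).1 _ (hnn _ _) (hlt _ _).le) (hτne _ (hXne z.2) _ (hlt _ _))⟩, by
      have h1 : Continuous fun z : unitInterval × X => z.2.1 :=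
        continuous_subtype_val.comp continuous_snd
      have h2 : Continuous fun z : unitInterval × X => k z.2.1.1 :=
        k.continuous.comp (continuous_fst.comp h1)
      have h3 : Continuous fun z : unitInterval × X => (z.2.1.2 : ℝ) :=
        continuous_subtype_val.comp (continuous_snd.comp h1)
      have h4 : Continuous fun z : unitInterval × X => (z.1 : ℝ) :=
        continuous_subtype_val.comp continuous_fst
      refine Continuous.subtype_mk ?_ _
      exact ((continuous_const.sub (h4.mul h3)).smul h2.fst).add
        ((h4.mul h3).smul continuous_const)⟩
  let l : C(X, RootSp d G) := ⟨fun x => ⟨k x.1.1, hnb _ (hk _).1 (hXne x), hkr _⟩, by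
    refine Continuous.subtype_mk ?_ _
    fun_prop⟩
  have hg : ∀ x, g (0, x) = rootMap d G (l x) := fun x => Subtype.ext (by
    change τ (k x.1.1).1 (((0 : unitInterval) : ℝ) * x.1.2) = (k x.1.1).1
    simp [τ])
  have hcov := F.isCoveringMap_rootMap
  let L := hcov.liftHomotopy g l hg
  have hL1 : ∀ z, (L z).1.1 = τ (k z.2.1.1).1 ((z.1 : ℝ) * z.2.1.2) := fun z =>
    congrArg Subtype.val (congrFun (hcov.liftHomotopy_lifts g l hg) z)
  have hL0 : ∀ x, L (0, x) = l x := hcov.liftHomotopy_zero g l hg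
  have hLS : ∀ z, (L z).1.1 ∈ S := fun z => by
    rw [hL1]
    exact hτS _ (hk _).1 _ (hnn _ _) (hlt _ _).le
  have hLix : ∀ x, ix ⟨(L (1, x)).1, hLS _, (L (1, x)).2.2⟩ = ix (κ x.1.1) := fun x => by
    have hc : Continuous fun s : unitInterval =>
        ix ⟨(L (s, x)).1, hLS _, (L (s, x)).2.2⟩ := by
      refine hixc.comp (Continuous.subtype_mk ?_ _)
      fun_prop
    have h1 := PreconnectedSpace.constant inferInstance hc (x := 1) (y := 0)
    refine h1.trans ?_
    congr 1
    exact Subtype.ext (congrArg (fun e : RootSp d G => e.1) (hL0 x))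
  classical
  let ζ : cur D j S × unitInterval → ℂ := fun x =>
    if h : (k x.1).1 ≠ b ∧ x.2 ≠ 1 then (L (1, ⟨x, h⟩)).1.2 else w (ix (κ x.1))
  have hζ : ∀ x : X, ζ x.1 = (L (1, x)).1.2 := fun x => dif_pos x.2
  have hζ' : ∀ x : cur D j S × unitInterval, ¬ ((k x.1).1 ≠ b ∧ x.2 ≠ 1) → ζ x = w (ix (κ x.1)) := fun x h => dif_neg h
  have hτX : ∀ x : cur D j S × unitInterval, ¬ ((k x.1).1 ≠ b ∧ x.2 ≠ 1) → τ (k x.1).1 x.2 = b := fun x h => by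
    rw [← sub_eq_zero, hτb]
    by_cases h1 : (k x.1).1 = b
    · rw [h1, sub_self, smul_zero]
    · have h2 : x.2 = 1 := by
        by_contra h2
        exact h ⟨h1, h2⟩
      rw [h2, Set.Icc.coe_one, sub_self, zero_smul]
  have hL11 : ∀ x : X, (L (1, x)).1.1 = τ (k x.1.1).1 x.1.2 := fun x => by
    rw [hL1]
    simp
  have hroot : ∀ x, (G (τ (k x.1).1 x.2)).IsRoot (ζ x) := fun x => by
    by_cases h : (k x.1).1 ≠ b ∧ x.2 ≠ 1
    · rw [hζ ⟨x, h⟩, ← hL11 ⟨x, h⟩]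
      exact (L (1, ⟨x, h⟩)).2.2
    · rw [hζ' x h, hτX x h]
      exact (hw _).2 ⟨_, rfl⟩
  have hnorm : ∀ x, ‖ζ x - w (ix (κ x.1))‖ ≤ eta d G b (τ (k x.1).1 x.2) := fun x => by
    by_cases h : (k x.1).1 ≠ b ∧ x.2 ≠ 1
    · rw [hζ ⟨x, h⟩, ← hL11 ⟨x, h⟩, ← hLix ⟨x, h⟩]
      exact hix ⟨(L (1, ⟨x, h⟩)).1, hLS _, (L (1, ⟨x, h⟩)).2.2⟩
    · rw [hζ' x h, sub_self, norm_zero]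
      exact Fam.eta_nonneg _ _
  have hτc : Continuous fun x : cur D j S × unitInterval => τ (k x.1).1 x.2 := by
    simp only [τ]; fun_prop
  have hζc : Continuous ζ := by
    refine continuous_iff_continuousAt.2 fun x => ?_
    by_cases h : (k x.1).1 ≠ b ∧ x.2 ≠ 1
    · have h1 : ContinuousOn ζ {x | (k x.1).1 ≠ b ∧ x.2 ≠ 1} := by
        rw [continuousOn_iff_continuous_domRestrict]
        have h2 : Continuous fun x : X => (L (1, x)).1.2 := by fun_prop
        exact h2.congr fun x => (hζ x).symm
      exact h1.continuousAt (hX.mem_nhds h)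
    · have h1 : Continuous fun x : cur D j S × unitInterval => eta d G b (τ (k x.1).1 x.2) :=
        (F.continuous_eta b).comp hτc
      have h2 : Continuous fun x : cur D j S × unitInterval => w (ix (κ x.1)) :=
        (continuous_of_discreteTopology (f := w)).comp (hixc.comp (hκ.comp continuous_fst))
      have h3 : Filter.Tendsto (fun x => ζ x - w (ix (κ x.1))) (nhds x) (nhds 0) := by
        refine squeeze_zero_norm hnorm ?_
        have := h1.tendsto x
        rwa [hτX x h, F.eta_self] at this
      have h4 := h3.add (h2.tendsto x)
      simp only [sub_add_cancel, zero_add] at h4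
      rwa [ContinuousAt, hζ' x h]
  refine relAcyclic_of_homotopy ⟨fun x => ⟨j (τ (k x.1).1 x.2, ζ x), (hD _).2 (hroot x)⟩, ?_⟩
    ?_ ?_ ?_ ?_
  · exact (hj.continuous.comp (hτc.prodMk hζc)).subtype_mk _
  · intro y
    refine Subtype.ext ?_
    change j (τ (k y).1 ((0 : unitInterval) : ℝ), ζ (y, 0)) = (y.1 : P)
    rw [← (hk y).2]
    congr 1
    refine Prod.ext (by simp [τ]) ?_
    change ζ (y, 0) = (k y).2
    by_cases h : (k y).1 = b
    · have h1 := hix (κ y)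
      change ‖(k y).2 - _‖ ≤ eta d G b (k y).1 at h1
      rw [h, F.eta_self, norm_le_zero_iff, sub_eq_zero] at h1
      rw [hζ' _ (fun h' => h'.1 h), h1]
    · have hx : (k y).1 ≠ b ∧ (0 : unitInterval) ≠ 1 := ⟨h, zero_ne_one⟩
      rw [hζ ⟨(y, 0), hx⟩]
      have hconst : L (1, ⟨(y, 0), hx⟩) = L (0, ⟨(y, 0), hx⟩) := by
        refine hcov.const_of_comp (g := fun s => L (s, ⟨(y, 0), hx⟩)) (by fun_prop) ?_ 1 0
        intro s s'
        have e := fun s => congrFun (hcov.liftHomotopy_lifts g l hg) (s, ⟨(y, 0), hx⟩)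
        refine (e s).trans (Eq.trans ?_ (e s').symm)
        refine Subtype.ext ?_
        change τ (k y).1 ((s : ℝ) * ((0 : unitInterval) : ℝ)) =
          τ (k y).1 ((s' : ℝ) * ((0 : unitInterval) : ℝ))
        simp
      rw [hconst, hL0]
      rfl
  · exact fun y t => ⟨_, hτS _ (hk y).1 _ t.2.1 t.2.2, rfl⟩
  · intro y
    refine ⟨_, ?_, rfl⟩
    change τ (k y).1 ((1 : unitInterval) : ℝ) = b
    simp [τ]
  · rintro y ⟨q, hq, hqy⟩ t
    refine ⟨_, ?_, rfl⟩
    have h2 : k y = q := hj.injective ((hk y).2.trans hqy.symm)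
    change τ (k y).1 t = b
    rw [h2, Set.mem_singleton_iff.1 hq, ← sub_eq_zero, hτb, sub_self, smul_zero]

end

end

section

/-! ### Euler characteristics over a chart -/

section
variable {P : Type} [TopologicalSpace P] {D : Set P} {E : Type} [TopologicalSpace E]
  {p : E → ↥Dᶜ} {m : ℕ} {W W' : Set P}

/-- Over the open set `W`, the Euler characteristic of the degree `m` covering of the complement of
`D` and `m` times that of `D` add up to `m * c`: what is to be expected when `χ(W) = c`. -/
def Good (p : E → ↥Dᶜ) (m : ℕ) (W : Set P) (c : ℤ) : Prop :=
  ∃ a b : ℤ, Cplx.HasChi (sub (above p W)) a ∧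
    Cplx.HasChi (sub (Subtype.val ⁻¹' W : Set ↥D)) b ∧ a + m * b = m * c

lemma Good.union (hp : IsCoveringMap p) (hW : IsOpen W) (hW' : IsOpen W') {c c' c'' : ℤ}
    (h : Good p m W c) (h' : Good p m W' c') (h'' : Good p m (W ∩ W') c'') :
    Good p m (W ∪ W') (c + c' - c'') := by
  obtain ⟨a, b, ha, hb, e⟩ := h
  obtain ⟨a', b', ha', hb', e'⟩ := h'
  obtain ⟨a'', b'', ha'', hb'', e''⟩ := h''
  refine ⟨_, _, hasChi_union (above_isOpen hp.continuous hW) (above_isOpen hp.continuous hW')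
    ha ha' ha'', hasChi_union (hW.preimage continuous_subtype_val)
    (hW'.preimage continuous_subtype_val) hb hb' hb'', ?_⟩
  linear_combination e + e' - e''

/-- The part of a covering lying over those points of the open set `O` of a chart whose parameter
is in `V`. -/
def tube {Q : Type} (p : E → ↥Dᶜ) (j : ℂ × Q → P) (O : Set (ℂ × Q)) (V : Set ℂ) : Set E :=
  tot p j {q | q.1 ∈ V ∧ q ∈ O}

variable {j : ℂ × ℂ → P}

/-- A covering over a chart, cut up according to the parameter. -/
lemma cut_tube (hp : IsCoveringMap p) (hj : Topology.IsOpenEmbedding j) {O : Set (ℂ × ℂ)}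
    (hO : IsOpen O) : Cut (tube p j O) where
  isOpen V hV := tot_isOpen hp hj ((hV.preimage continuous_fst).inter hO)
  union V W := by
    rw [tube, tube, tube, ← tot_union]
    congr 1
    ext q
    exact or_and_right
  inter V W := by
    rw [tube, tube, tube, ← tot_inter hj.injective]
    congr 1
    ext q
    exact and_and_right
  iUnion V := by
    simp only [tube]
    rw [← tot_iUnion]
    congr 1
    ext q
    simp only [Set.mem_iUnion, Set.mem_ofPred_eq, exists_and_right]
  empty := by
    have : {q : ℂ × ℂ | q.1 ∈ (∅ : Set ℂ) ∧ q ∈ O} = ∅ :=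
      Set.eq_empty_of_forall_notMem fun q hq => hq.1
    rw [tube, this, tot_empty]

variable {d : ℕ} {G : ℂ → Polynomial ℂ}

/-- Being `Good` over sets of parameters satisfies inclusion–exclusion. -/
lemma mv_good (hp : IsCoveringMap p) (hj : Topology.IsOpenEmbedding j) : MV fun V c => Good p m (j '' {q | q.1 ∈ V}) c where
  empty := by
    have : j '' {q | q.1 ∈ (∅ : Set ℂ)} = ∅ :=
      Set.image_eq_empty.2 (Set.eq_empty_of_forall_notMem fun q hq => hq)
    rw [this]
    refine ⟨0, 0, ?_, ?_, by simp⟩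
    · have : above p (∅ : Set P) = ∅ := rfl
      rw [this, sub_empty]
      exact Cplx.HasChi.bot
    · rw [Set.preimage_empty, sub_empty]
      exact Cplx.HasChi.bot
  union {U V _ _ _} hU hV ha hb hc := by
    have hi : j '' {q | q.1 ∈ U ∩ V} = j '' {q | q.1 ∈ U} ∩ j '' {q | q.1 ∈ V} := by
      rw [← Set.image_inter hj.injective]
      rfl
    have hu : j '' {q | q.1 ∈ U ∪ V} = j '' {q | q.1 ∈ U} ∪ j '' {q | q.1 ∈ V} := by
      rw [← Set.image_union]
      rfl
    rw [hi] at hc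
    rw [hu]
    exact Good.union hp (hj.isOpenMap _ (hU.preimage continuous_fst))
      (hj.isOpenMap _ (hV.preimage continuous_fst)) ha hb hc

section
variable (F : Fam d G) (hp : IsCoveringMap p) (hm : 0 < m)
  (hcard : ∀ b, Nat.card (p ⁻¹' {b}) = m) (hj : Topology.IsOpenEmbedding j)
  (hD : ∀ q : ℂ × ℂ, j q ∈ D ↔ (G q.1).IsRoot q.2)
include F hp hm hcard hj hD

/-- Near a parameter with `d` different zeros these zeros are moving obstacles of radius zero. -/
lemma exists_local_regular {t : ℂ} (ht : nroots (G t) = d) : ∃ U, IsOpen U ∧ t ∈ U ∧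
    Inv (tube p j Set.univ) U ∧ ∀ V ⊆ U, IsOpen V → Convex ℝ V → V.Nonempty →
      Cplx.HasChi (sub (tube p j Set.univ V)) (m * (1 - d)) := by
  obtain ⟨U₀, hU₀, ht₀, r, hr, hinj, hroot⟩ := F.exists_sections ht
  have hex : ∀ q : ℂ × ℂ, q.1 ∈ U₀ → ((∀ i, 0 < ‖q.2 - r i q.1‖) ↔ j q ∉ D) := fun q hq => by
    rw [hD, hroot _ hq]
    push Not
    exact forall_congr' fun i => by rw [norm_pos_iff, sub_ne_zero]
  obtain ⟨U, hU, htU, hUU, h1, h2⟩ := exists_local (D := D) (p := p) (η := fun _ => 0) hU₀ ht₀ hr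
    continuousOn_const (fun _ _ => le_rfl) rfl (hinj t ht₀) hp hm hcard hj
    fun w hw => (hex w hw.1).1 hw.2
  have he : ∀ V ⊆ U, tot p j (dcompl r (fun _ => 0) V) = tube p j Set.univ V := by
    intro V hV
    ext e
    constructor
    · rintro ⟨q, hq, e⟩
      exact ⟨q, ⟨hq.1, trivial⟩, e⟩
    · rintro ⟨q, hq, e'⟩
      exact ⟨q, ⟨hq.1, (hex q (hUU (hV hq.1))).2 (e' ▸ (p e).2)⟩, e'⟩
  refine ⟨U, hU, htU, fun V hV V' hV' => ?_, fun V hV => ?_⟩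
  · rw [← he V hV, ← he V' (hV'.trans hV)]
    exact h2 V hV V' hV'
  · rw [← he V hV]
    exact h1 V hV

lemma hasChi_tube {V : Set ℂ} (hV : ∀ t ∈ V, nroots (G t) = d) (hVo : IsOpen V)
    (hVc : Convex ℝ V) (hVn : V.Nonempty) :
    Cplx.HasChi (sub (tube p j Set.univ V)) (m * (1 - d)) := by
  have hcut : Cut (tube p j Set.univ) := cut_tube hp hj isOpen_univ
  have hinv : Inv (tube p j Set.univ) V := Inv.of_local hcut fun t ht =>
    let ⟨U, h1, h2, h3, _⟩ := exists_local_regular F hp hm hcard hj hD (hV t ht)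
    ⟨U, h1, h2, h3⟩
  obtain ⟨t, ht⟩ := hVn
  obtain ⟨U, hU, htU, -, h⟩ := exists_local_regular F hp hm hcard hj hD (hV t ht)
  obtain ⟨ε, hε, hb⟩ := Metric.isOpen_iff.1 (hU.inter hVo) t ⟨htU, ht⟩
  have hn := Metric.nonempty_ball (x := t).2 hε
  have hb' := hb.trans Set.inter_subset_right
  exact (hinv V le_rfl _ hb' hVo hVc Metric.isOpen_ball (convex_ball _ _) hn).hasChi
    (sub_mono (hcut.mono hb'))
    (h _ (hb.trans Set.inter_subset_left) Metric.isOpen_ball (convex_ball _ _) hn)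

lemma good_regular {V : Set ℂ} (hV : ∀ t ∈ V, nroots (G t) = d) (hVo : IsOpen V)
    (hVc : Convex ℝ V) (hVn : V.Nonempty) : Good p m (j '' {q | q.1 ∈ V}) 1 := by
  have h := hasChi_tube F hp hm hcard hj hD hV hVo hVc hVn
  simp only [tube, Set.mem_univ, and_true] at h
  exact ⟨_, _, h, hasChi_cur F hj hD hVc hVn hV, by ring⟩

lemma good_punctured {V : Set ℂ} {b : ℂ} (hb : b ∈ V)
    (hV : ∀ t ∈ V, t ≠ b → nroots (G t) = d) (hVo : IsOpen V) (hVc : Convex ℝ V) :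
    Good p m (j '' {q | q.1 ∈ V \ {b}}) 0 := by
  have h := (cut_tube hp hj isOpen_univ).hasChi_punctured hVo hVc hb
    fun V' hV' => hasChi_tube F hp hm hcard hj hD fun t ht => hV t (hV' ht).1 (hV' ht).2
  simp only [tube, Set.mem_univ, and_true] at h
  exact ⟨0, 0, h, (cut_cur hj).hasChi_punctured hVo hVc hb fun V' hV' _ hc hn =>
    hasChi_cur F hj hD hc hn fun t ht => hV t (hV' ht).1 (hV' ht).2, by ring⟩

/-- Over a small disc around a branch point. Upstairs, the disc is covered by the part avoiding
small discs around the zeros and the part over the punctured disc; the second set and the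
intersection have vanishing Euler characteristic. -/
lemma good_branch {b : ℂ} {V : Set ℂ} (hVo : IsOpen V) (hbV : b ∈ V)
    (hV : ∀ t ∈ V, t ≠ b → nroots (G t) = d) :
    ∃ S ⊆ V, IsOpen S ∧ b ∈ S ∧ Convex ℝ S ∧ Good p m (j '' {q | q.1 ∈ S}) 1 := by
  set n := nroots (G b) with hn
  let w : Fin n → ℂ := fun i => Fam.rt (G b) i
  have hw : Function.Injective w := Fam.rt_injective (G b)
  have hwr : ∀ z, (G b).IsRoot z ↔ ∃ i, z = w i := fun z =>
    ⟨F.exists_rt, fun ⟨i, hi⟩ => hi ▸ F.isRoot_rt b i⟩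
  obtain ⟨δ, hδ, hsep⟩ := Fam.exists_sep hw
  have hηc := F.continuous_eta b
  let O : Set (ℂ × ℂ) := {q | ∀ i, eta d G b q.1 < ‖q.2 - w i‖}
  have hO : IsOpen O := by
    have : O = ⋂ i, {q | eta d G b q.1 < ‖q.2 - w i‖} := by
      ext q
      simp [O]
    rw [this]
    exact isOpen_iInter_of_finite fun i => isOpen_lt (hηc.comp continuous_fst)
      (continuous_snd.sub continuous_const).norm
  obtain ⟨U, hU, hbU, -, h1, -⟩ := exists_local (D := D) (p := p) (c := fun i _ => w i)
    (η := eta d G b) isOpen_univ (Set.mem_univ b) (fun i => continuousOn_const) hηc.continuousOn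
    (fun t _ => Fam.eta_nonneg b t) (F.eta_self b) hw hp hm hcard hj (by
      rintro q ⟨-, hq⟩ hqD
      obtain ⟨z, hz, hle⟩ := F.near (b := b) ((hD q).1 hqD)
      obtain ⟨i, rfl⟩ := (hwr z).1 hz
      exact (hq i).not_ge hle)
  have hδo : IsOpen {t | eta d G b t < δ} := isOpen_lt hηc continuous_const
  obtain ⟨ε, hε, hball⟩ := Metric.isOpen_iff.1 ((hVo.inter hU).inter hδo) b
    ⟨⟨hbV, hbU⟩, by simpa [F.eta_self] using hδ⟩
  set S := Metric.ball b ε with hS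
  have hSo : IsOpen S := Metric.isOpen_ball
  have hSc : Convex ℝ S := convex_ball _ _
  have hbS : b ∈ S := Metric.mem_ball_self hε
  have hSU : S ⊆ U := fun t ht => (hball ht).1.2
  have hSd : ∀ t ∈ S, t ≠ b → nroots (G t) = d := fun t ht => hV t (hball ht).1.1
  refine ⟨S, fun t ht => (hball ht).1.1, hSo, hbS, hSc, m * (1 - n), n, ?_, ?_, by ring⟩
  · have hcu := cut_tube (D := D) hp hj (isOpen_univ (X := ℂ × ℂ))
    have hcO := cut_tube (D := D) hp hj hO
    have e1 : Cplx.HasChi (sub (tube p j O S)) (m * (1 - n)) := h1 S hSU hSo hSc ⟨b, hbS⟩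
    have e2 : Cplx.HasChi (sub (tube p j Set.univ (S \ {b}))) 0 :=
      hcu.hasChi_punctured hSo hSc hbS fun V' hV' =>
        hasChi_tube F hp hm hcard hj hD fun t ht => hSd t (hV' ht).1 (hV' ht).2
    have e3 : Cplx.HasChi (sub (tube p j O (S \ {b}))) 0 :=
      hcO.hasChi_punctured hSo hSc hbS fun V' hV' ho hc hn =>
        h1 V' (hV'.trans (Set.sdiff_subset.trans hSU)) ho hc hn
    have i1 : tube p j O S ∩ tube p j Set.univ (S \ {b}) = tube p j O (S \ {b}) := by
      rw [tube, tube, ← tot_inter hj.injective, tube]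
      congr 1
      ext q
      exact ⟨fun h => ⟨h.2.1, h.1.2⟩, fun h => ⟨⟨h.1.1, h.2⟩, h.1, trivial⟩⟩
    have i2 : tube p j O S ∪ tube p j Set.univ (S \ {b}) = tube p j Set.univ S := by
      ext e
      constructor
      · rintro (⟨q, hq, e⟩ | ⟨q, hq, e⟩)
        exacts [⟨q, ⟨hq.1, trivial⟩, e⟩, ⟨q, ⟨hq.1.1, trivial⟩, e⟩]
      · rintro ⟨q, hq, e'⟩
        by_cases hqb : q.1 = b
        · refine Or.inl ⟨q, ⟨hq.1, fun i => ?_⟩, e'⟩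
          have hqD : j q ∉ D := e' ▸ (p e).2
          rw [hD, hqb, hwr] at hqD
          rw [hqb, F.eta_self, norm_pos_iff, sub_ne_zero]
          exact fun h => hqD ⟨i, h⟩
        · exact Or.inr ⟨q, ⟨⟨hq.1, hqb⟩, trivial⟩, e'⟩
    have h := hasChi_union (hcO.isOpen _ hSo)
      (hcu.isOpen _ (hSo.sdiff isClosed_singleton)) e1 e2 (i1 ▸ e3)
    rw [i2] at h
    simpa [tube, tot] using h
  · exact (relAcyclic_cur_branch F hj hD hSc hbS hSd hwr hsep fun t ht => (hball ht).2).hasChi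
      (sub_mono (Cut.mono (cut_cur hj) (Set.singleton_subset_iff.2 hbS)))
      (hasChi_cur_point F hj hD b)

/-- Over any convex set of parameters: the branch points are separated by lines. -/
theorem good_convex (hfin : {t | nroots (G t) ≠ d}.Finite) {V : Set ℂ} (hVo : IsOpen V)
    (hVc : Convex ℝ V) (hVn : V.Nonempty) : Good p m (j '' {q | q.1 ∈ V}) 1 := by
  set B := {t | nroots (G t) ≠ d} with hB
  induction hk : (B ∩ V).ncard using Nat.strong_induction_on generalizing V with
  | _ k ih =>
  subst hk
  rcases (B ∩ V).eq_empty_or_nonempty with h0 | ⟨b, hb⟩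
  · refine good_regular F hp hm hcard hj hD (fun t ht => ?_) hVo hVc hVn
    by_contra h
    exact Set.notMem_empty t (h0 ▸ ⟨h, ht⟩)
  by_cases h1 : ∃ b' ∈ B ∩ V, b' ≠ b
  · obtain ⟨b', hb', hne⟩ := h1
    have hsub : ∀ {V' : Set ℂ} {x : ℂ}, V' ⊆ V → x ∈ B ∩ V → x ∉ V' →
        (B ∩ V').ncard < (B ∩ V).ncard := fun hV' hx hx' =>
      Set.ncard_lt_ncard ⟨Set.inter_subset_inter_right _ hV', fun h => hx' (h hx).2⟩
        (hfin.subset Set.inter_subset_left)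
    obtain ⟨φ, x, y, hx, hy, hxy⟩ : ∃ (φ : ℂ →L[ℝ] ℝ) (x y : ℂ), x ∈ B ∩ V ∧ y ∈ B ∩ V ∧
        φ x < φ y := by
      by_cases hre : b.re = b'.re
      · have him : b.im ≠ b'.im := fun h => hne (Complex.ext hre h).symm
        rcases him.lt_or_gt with h | h
        exacts [⟨Complex.imCLM, b, b', hb, hb', h⟩, ⟨Complex.imCLM, b', b, hb', hb, h⟩]
      · rcases (Ne.lt_or_gt hre) with h | h
        exacts [⟨Complex.reCLM, b, b', hb, hb', h⟩, ⟨Complex.reCLM, b', b, hb', hb, h⟩]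
    have o1 : IsOpen {t | φ t < φ y} := isOpen_lt φ.continuous continuous_const
    have o2 : IsOpen {t | φ x < φ t} := isOpen_lt continuous_const φ.continuous
    have c1 : Convex ℝ {t | φ t < φ y} := convex_halfSpace_lt φ.toLinearMap.isLinear _
    have c2 : Convex ℝ {t | φ x < φ t} := convex_halfSpace_gt φ.toLinearMap.isLinear _
    set V₁ := V ∩ {t | φ t < φ y} with hV₁
    set V₂ := V ∩ {t | φ x < φ t} with hV₂
    have e1 := ih _ (hsub (V' := V₁) Set.inter_subset_left hy fun h => lt_irrefl (φ _) h.2)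
      (hVo.inter o1) (hVc.inter c1) ⟨x, hx.2, hxy⟩ rfl
    have e2 := ih _ (hsub (V' := V₂) Set.inter_subset_left hx fun h => lt_irrefl (φ _) h.2)
      (hVo.inter o2) (hVc.inter c2) ⟨y, hy.2, hxy⟩ rfl
    have hmid : (1 / 2 : ℝ) • x + (1 / 2 : ℝ) • y ∈ V₁ ∩ V₂ := by
      have := hVc hx.2 hy.2 (a := 1 / 2) (b := 1 / 2) (by norm_num) (by norm_num) (by norm_num)
      refine ⟨⟨this, ?_⟩, this, ?_⟩
      · change φ _ < φ y
        rw [map_add, map_smul, map_smul, smul_eq_mul, smul_eq_mul]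
        linarith
      · change φ x < φ _
        rw [map_add, map_smul, map_smul, smul_eq_mul, smul_eq_mul]
        linarith
    have e3 := ih _ (hsub (V' := V₁ ∩ V₂) (Set.inter_subset_left.trans Set.inter_subset_left) hy
      fun h => lt_irrefl (φ _) h.1.2) ((hVo.inter o1).inter (hVo.inter o2))
      ((hVc.inter c1).inter (hVc.inter c2)) ⟨_, hmid⟩ rfl
    have hu : V₁ ∪ V₂ = V := by
      rw [hV₁, hV₂, ← Set.inter_union_distrib_left]
      refine Set.inter_eq_left.2 fun t _ => ?_
      rcases lt_or_ge (φ t) (φ y) with h' | h'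
      exacts [Or.inl h', Or.inr (hxy.trans_le h')]
    have := (mv_good hp hj).union (hVo.inter o1) (hVo.inter o2) e1 e2 e3
    rw [hu] at this
    simpa using this
  · push Not at h1
    have hreg : ∀ t ∈ V, t ≠ b → nroots (G t) = d := fun t ht htb => by
      by_contra h
      exact htb (h1 t ⟨h, ht⟩)
    obtain ⟨S, hSV, hSo, hbS, hSc, hS⟩ := good_branch F hp hm hcard hj hD hVo hb.2 hreg
    have e2 := good_punctured F hp hm hcard hj hD hb.2 hreg hVo hVc
    have e3 := good_punctured F hp hm hcard hj hD hbS (fun t ht => hreg t (hSV ht)) hSo hSc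
    have hi : S ∩ (V \ {b}) = S \ {b} := by
      rw [← Set.inter_sdiff_assoc, Set.inter_eq_left.2 hSV]
    have hu : S ∪ V \ {b} = V := by
      ext t
      by_cases htb : t = b
      · simp [htb, hbS, hb.2]
      · simpa [htb] using @hSV t
    rw [← hi] at e3
    have := (mv_good hp hj).union hSo (hVo.sdiff isClosed_singleton) hS e2 e3
    rw [hu] at this
    simpa using this

/-- Over the complement of one parameter. -/
theorem good_compl (hfin : {t | nroots (G t) ≠ d}.Finite) (b : ℂ) :
    Good p m (j '' {q | q.1 ∈ Set.univ \ {b}}) 0 :=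
  (mv_good (m := m) hp hj).punctured isOpen_univ convex_univ (Set.mem_univ b) fun _ _ ho hc hn =>
    good_convex F hp hm hcard hj hD hfin ho hc hn

end
end

end

section

/-! ### Linear changes of coordinates and the discriminant -/

open MvPolynomial

/-- Linear change of variables in a ternary form. -/
def lsub (A : (Fin 3 → ℂ) ≃L[ℂ] (Fin 3 → ℂ)) : MvPolynomial (Fin 3) ℂ →ₐ[ℂ] MvPolynomial (Fin 3) ℂ :=
  aeval fun i => ∑ k, C (A (Pi.single k 1) i) * X k

lemma eval_lsub (A : (Fin 3 → ℂ) ≃L[ℂ] (Fin 3 → ℂ)) (f : MvPolynomial (Fin 3) ℂ) (w : Fin 3 → ℂ) :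
    eval w (lsub A f) = eval (A w) f := by
  suffices h : (aeval w : MvPolynomial (Fin 3) ℂ →ₐ[ℂ] ℂ).comp (lsub A) = aeval (A w) by
    have := DFunLike.congr_fun h f
    simpa [aeval_eq_eval] using this
  ext i
  have h : A w = A (∑ k, w k • Pi.single k 1) := by
    congr 1
    ext l
    simp [Finset.sum_apply, Pi.single_apply]
  rw [h, map_sum]
  simp [lsub, aeval_eq_eval, mul_comm]

lemma lsub_symm (A : (Fin 3 → ℂ) ≃L[ℂ] (Fin 3 → ℂ)) (f : MvPolynomial (Fin 3) ℂ) :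
    lsub A (lsub A.symm f) = f := by
  refine MvPolynomial.funext fun w => ?_
  rw [eval_lsub, eval_lsub, A.symm_apply_apply]

lemma lsub_homogeneous (A : (Fin 3 → ℂ) ≃L[ℂ] (Fin 3 → ℂ)) {f : MvPolynomial (Fin 3) ℂ} {d : ℕ}
    (hf : f.IsHomogeneous d) : (lsub A f).IsHomogeneous d := by
  have := hf.aeval (m := d) (n := 1) (fun i => ∑ k, C (A (Pi.single k 1) i) * X k) fun i =>
    IsHomogeneous.sum _ _ _ fun k _ => by
      simpa using (isHomogeneous_C (Fin 3) (A (Pi.single k 1) i)).mul (isHomogeneous_X ℂ k)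
  simpa [lsub] using this

lemma eval_smul_of_homogeneous {d : ℕ} {f : MvPolynomial (Fin 3) ℂ} (hf : f.IsHomogeneous d) (c : ℂ)
    (w : Fin 3 → ℂ) : eval (c • w) f = c ^ d * eval w f := by
  rw [eval_eq, eval_eq, Finset.mul_sum]
  refine Finset.sum_congr rfl fun s hs => ?_
  have h : ∑ i ∈ s.support, s i = d := by
    simpa [Finsupp.weight_apply, Finsupp.sum] using hf (mem_support_iff.1 hs)
  simp only [Pi.smul_apply, smul_eq_mul, mul_pow, Finset.prod_mul_distrib, Finset.prod_pow_eq_pow_sum, h]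
  ring

lemma squarefree_of_inverse {M N : Type*} [CommMonoid M] [CommMonoid N] (e : M →* N) (e' : N →* M)
    (h : ∀ x, e (e' x) = x) (h' : ∀ x, e' (e x) = x) {x : M} (hx : Squarefree x) :
    Squarefree (e x) := fun y hy => by
  have := (hx (e' y) (by rw [← map_mul]; simpa [h'] using map_dvd e' hy)).map e
  rwa [h] at this

/-- A squarefree monic polynomial and its derivative generate an ideal containing a nonzero
constant. -/
lemma exists_bezout {R : Type} [CommRing R] [IsDomain R] [IsIntegrallyClosed R] [CharZero R]
    (K : Type) [Field K] [Algebra R K] [IsFractionRing R K] {P : Polynomial R} (hm : P.Monic) (hsq : Squarefree P) :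
    ∃ g : R, g ≠ 0 ∧ ∃ a b, a * P + b * Polynomial.derivative P = Polynomial.C g := by
  have : CharZero K := (RingHom.charZero_iff (IsFractionRing.injective R K)).1 inferInstance
  have hs : Squarefree (P.map (algebraMap R K)) := by
    intro h hh
    have hP0 : P.map (algebraMap R K) ≠ 0 := (hm.map _).ne_zero
    have hd : h ∣ P.map (algebraMap R K) := dvd_of_mul_left_dvd hh
    have h0 : h ≠ 0 := ne_zero_of_dvd_ne_zero hP0 hd
    obtain ⟨g, hg⟩ := IsIntegrallyClosed.eq_map_mul_C_of_dvd K hm hd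
    have hu : IsUnit (Polynomial.C h.leadingCoeff) :=
      (IsUnit.mk0 _ (Polynomial.leadingCoeff_ne_zero.2 h0)).map Polynomial.C
    rw [← hg]
    refine IsUnit.mul ?_ hu
    have hgm : (g.map (algebraMap R K)).Monic := by
      have : (g.map (algebraMap R K)) * Polynomial.C h.leadingCoeff = h := hg
      have h3 := congrArg Polynomial.leadingCoeff this
      rw [Polynomial.leadingCoeff_mul, Polynomial.leadingCoeff_C] at h3
      exact mul_right_cancel₀ (Polynomial.leadingCoeff_ne_zero.2 h0) (h3.trans (one_mul _).symm)
    have hgm' : g.Monic := Polynomial.monic_of_injective (IsFractionRing.injective R K) hgm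
    have hgg : (g * g).map (algebraMap R K) ∣ P.map (algebraMap R K) := by
      rw [Polynomial.map_mul]
      refine dvd_trans ?_ hh
      exact mul_dvd_mul (Dvd.intro _ hg) (Dvd.intro _ hg)
    have hgd : g * g ∣ P := hm.dvd_of_fraction_map_dvd_fraction_map (hgm'.mul hgm') hgg
    exact (hsq g hgd).map (Polynomial.mapRingHom (algebraMap R K))
  obtain ⟨a, b, hab⟩ := PerfectField.separable_iff_squarefree.2 hs
  obtain ⟨u, hu0, hu⟩ := IsLocalization.integerNormalization_spec (nonZeroDivisors R) a
  obtain ⟨w, hw0, hw⟩ := IsLocalization.integerNormalization_spec (nonZeroDivisors R) b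
  set a' := IsLocalization.integerNormalization (nonZeroDivisors R) a
  set b' := IsLocalization.integerNormalization (nonZeroDivisors R) b
  have hu' : a'.map (algebraMap R K) = Polynomial.C (algebraMap R K u) * a := by
    rw [hu]
    ext k
    rw [Polynomial.coeff_C_mul, Polynomial.coeff_smul, Algebra.smul_def]
  have hw' : b'.map (algebraMap R K) = Polynomial.C (algebraMap R K w) * b := by
    rw [hw]
    ext k
    rw [Polynomial.coeff_C_mul, Polynomial.coeff_smul, Algebra.smul_def]
  have key : Polynomial.C w * a' * P + Polynomial.C u * b' * Polynomial.derivative P =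
      Polynomial.C (u * w) := by
    apply Polynomial.map_injective (algebraMap R K) (IsFractionRing.injective R K)
    rw [Polynomial.map_add, Polynomial.map_mul, Polynomial.map_mul, Polynomial.map_mul,
      Polynomial.map_mul, Polynomial.map_C, Polynomial.map_C, Polynomial.map_C, hu', hw', map_mul,
      Polynomial.C_mul]
    rw [Polynomial.derivative_map] at hab
    linear_combination (Polynomial.C (algebraMap R K u) * Polynomial.C (algebraMap R K w)) * hab
  exact ⟨u * w, mul_ne_zero (nonZeroDivisors.ne_zero hu0) (nonZeroDivisors.ne_zero hw0),
    _, _, key⟩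

section
variable {d : ℕ} {f : MvPolynomial (Fin 3) ℂ} (hf : f.IsHomogeneous d) (hsq : Squarefree f)
  (A : (Fin 3 → ℂ) ≃L[ℂ] (Fin 3 → ℂ))

/-- The form `f` in the coordinates given by `A`, as a polynomial in the first coordinate; the leading
coefficient is normalized. -/
def zpoly (f : MvPolynomial (Fin 3) ℂ) (A : (Fin 3 → ℂ) ≃L[ℂ] (Fin 3 → ℂ)) :
    Polynomial (MvPolynomial (Fin 2) ℂ) :=
  Polynomial.C (C (eval (A (Fin.cons 1 0)) f)⁻¹) * finSuccEquiv ℂ 2 (lsub A f)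

include hf in
lemma coeff_zpoly_isHomogeneous {k l : ℕ} (h : k + l = d) :
    ((zpoly f A).coeff k).IsHomogeneous l := by
  rw [zpoly, Polynomial.coeff_C_mul]
  simpa using (isHomogeneous_C (Fin 2) _).mul
    ((lsub_homogeneous A hf).finSuccEquiv_coeff_isHomogeneous k l h)

include hf in
lemma natDegree_zpoly_le : (zpoly f A).natDegree ≤ d := by
  refine (Polynomial.natDegree_C_mul_le _ _).trans ?_
  rw [natDegree_finSuccEquiv]
  exact (degreeOf_le_totalDegree _ _).trans (lsub_homogeneous A hf).totalDegree_le

lemma eval_zpoly (s : Fin 2 → ℂ) (z : ℂ) : ((zpoly f A).map (eval s)).eval z =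
    (eval (A (Fin.cons 1 0)) f)⁻¹ * eval (A (Fin.cons z s)) f := by
  rw [zpoly, Polynomial.map_mul, Polynomial.eval_mul, ← eval_eq_eval_mv_eval', eval_lsub]
  simp

variable (hv : eval (A (Fin.cons 1 0)) f ≠ 0)
include hsq hv in
lemma zpoly_squarefree : Squarefree (zpoly f A) := by
  have h1 : Squarefree (lsub A f) := squarefree_of_inverse
    (lsub A : MvPolynomial (Fin 3) ℂ →* MvPolynomial (Fin 3) ℂ)
    (lsub A.symm : MvPolynomial (Fin 3) ℂ →* MvPolynomial (Fin 3) ℂ) (lsub_symm A) (lsub_symm A.symm) hsq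
  have h2 : Squarefree (finSuccEquiv ℂ 2 (lsub A f)) := squarefree_of_inverse
    (finSuccEquiv ℂ 2 : MvPolynomial (Fin 3) ℂ →* Polynomial (MvPolynomial (Fin 2) ℂ))
    ((finSuccEquiv ℂ 2).symm : Polynomial (MvPolynomial (Fin 2) ℂ) →* MvPolynomial (Fin 3) ℂ)
    (fun x => (finSuccEquiv ℂ 2).apply_symm_apply x) (fun x => (finSuccEquiv ℂ 2).symm_apply_apply x) h1
  refine (Associated.squarefree_iff ?_).2 h2
  refine associated_unit_mul_left _ _ ?_
  exact ((IsUnit.mk0 _ (inv_ne_zero hv)).map C).map Polynomial.C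

include hf hv

lemma coeff_zpoly_top : (zpoly f A).coeff d = 1 := by
  have h0 := eval_zpoly (f := f) A 0 1
  rw [inv_mul_cancel₀ hv, Polynomial.eval_eq_sum_range' (n := d + 1)
    (lt_of_le_of_lt Polynomial.natDegree_map_le
      (Nat.lt_succ_of_le (natDegree_zpoly_le hf A)))] at h0
  have hh := coeff_zpoly_isHomogeneous hf A (add_zero d)
  rw [Finset.sum_range_succ, Finset.sum_eq_zero fun k hk => ?_, zero_add, one_pow, mul_one,
    Polynomial.coeff_map] at h0
  · rw [← totalDegree_zero_iff_isHomogeneous, totalDegree_eq_zero_iff_eq_C] at hh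
    rw [hh, eval_C] at h0
    rw [hh, h0, C_1]
  · rw [Finset.mem_range] at hk
    rw [one_pow, mul_one, Polynomial.coeff_map]
    have h := coeff_zpoly_isHomogeneous hf A (k := k) (l := d - k) (by omega)
    have h2 := h.coeff_eq_zero (d := 0) (by simp; omega)
    rw [eval_zero, constantCoeff_eq, h2]

lemma zpoly_monic : (zpoly f A).Monic :=
  Polynomial.monic_of_natDegree_le_of_coeff_eq_one d (natDegree_zpoly_le hf A)
    (coeff_zpoly_top hf A hv)

lemma zpoly_natDegree : (zpoly f A).natDegree = d :=
  le_antisymm (natDegree_zpoly_le hf A) (Polynomial.le_natDegree_of_ne_zero (by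
    rw [coeff_zpoly_top hf A hv]; exact one_ne_zero))

include hsq in
/-- The discriminant, or rather a nonzero polynomial vanishing wherever the discriminant does. -/
lemma exists_disc : ∃ g : MvPolynomial (Fin 2) ℂ, g ≠ 0 ∧ ∀ s z,
    ((zpoly f A).map (eval s)).IsRoot z →
    ((zpoly f A).map (eval s)).derivative.IsRoot z → eval s g = 0 := by
  obtain ⟨g, hg, a, b, key⟩ := exists_bezout
    (FractionRing (MvPolynomial (Fin 2) ℂ)) (zpoly_monic hf A hv) (zpoly_squarefree hsq A hv)
  refine ⟨g, hg, fun s z h1 h2 => ?_⟩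
  have := congrArg (fun q => (q.map (eval s)).eval z) key
  simp only [Polynomial.map_add, Polynomial.map_mul, Polynomial.eval_add, Polynomial.eval_mul,
    Polynomial.map_C, Polynomial.eval_C] at this
  rw [← Polynomial.derivative_map, h1.eq_zero, h2.eq_zero] at this
  simpa using this.symm

/-- The family of polynomials obtained by restricting to the lines `(z : 1 : t)`. -/
def zfam (f : MvPolynomial (Fin 3) ℂ) (A : (Fin 3 → ℂ) ≃L[ℂ] (Fin 3 → ℂ)) (t : ℂ) : Polynomial ℂ :=
  (zpoly f A).map (eval ![1, t])

lemma zfam_fam (hd : 0 < d) : Fam d (zfam f A) where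
  pos := hd
  monic t := (zpoly_monic hf A hv).map _
  deg t := by rw [zfam, (zpoly_monic hf A hv).natDegree_map, zpoly_natDegree hf A hv]
  cont k := by
    simp only [zfam, Polynomial.coeff_map]
    exact ((zpoly f A).coeff k).continuous_eval.comp (by fun_prop)

include hsq in
/-- The discriminant is a nonzero form in two variables, so it does not vanish identically on the
affine line of parameters, and there are only finitely many branch points. -/
lemma zfam_finite : {t | nroots (zfam f A t) ≠ d}.Finite := by
  obtain ⟨g, hg, h⟩ := exists_disc hf hsq A hv
  obtain ⟨s, hs⟩ : ∃ s, eval s (g * X 0) ≠ 0 := by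
    by_contra! hc
    exact mul_ne_zero hg (X_ne_zero 0) (MvPolynomial.funext fun s => by rw [hc s, map_zero])
  rw [map_mul, eval_X] at hs
  have hs0 := right_ne_zero_of_mul hs
  have hsg := left_ne_zero_of_mul hs
  let γ : Polynomial ℂ := aeval ![Polynomial.C (s 0), Polynomial.X] g
  have hγ : ∀ y, γ.eval y = eval ![s 0, y] g := fun y => by
    have : (Polynomial.aeval y : Polynomial ℂ →ₐ[ℂ] ℂ).comp
        (aeval ![Polynomial.C (s 0), Polynomial.X]) = aeval ![s 0, y] := by
      ext i
      fin_cases i <;> simp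
    have := DFunLike.congr_fun this g
    simpa [aeval_eq_eval, γ, Polynomial.aeval_def] using this
  have hγ0 : γ ≠ 0 := fun hc => hsg (by
    have := hγ (s 1)
    rw [hc, Polynomial.eval_zero] at this
    rw [this]
    congr 2
    ext i
    fin_cases i <;> rfl)
  refine Set.Finite.subset ((γ.roots.toFinset.finite_toSet).preimage
    (f := fun t => s 0 * t) fun _ _ _ _ h => mul_left_cancel₀ hs0 h) fun t ht => ?_
  suffices γ.eval (s 0 * t) = 0 by simpa [hγ0] using this
  have F := zfam_fam hf A hv (d := d)
  have hmon : (zfam f A t).Monic := (zpoly_monic hf A hv).map _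
  have hdeg : (zfam f A t).natDegree = d := by
    rw [zfam, (zpoly_monic hf A hv).natDegree_map, zpoly_natDegree hf A hv]
  -- a polynomial with fewer roots than its degree has a double root
  obtain ⟨w, hw1, hw2⟩ : ∃ w, (zfam f A t).IsRoot w ∧ (zfam f A t).derivative.IsRoot w := by
    by_contra! hc
    refine ht ?_
    rw [nroots, Multiset.toFinset_card_of_nodup, IsAlgClosed.card_roots_eq_natDegree, hdeg]
    rw [Multiset.nodup_iff_count_le_one]
    intro w
    rw [Polynomial.count_roots]
    by_contra! h1
    obtain ⟨h2, h3⟩ := (Polynomial.one_lt_rootMultiplicity_iff_isRoot hmon.ne_zero).1 h1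
    exact hc w h2 h3
  rw [hγ]
  have hcomp : ((zpoly f A).map (eval ![s 0, s 0 * t])).comp (Polynomial.C (s 0) * Polynomial.X) =
      Polynomial.C (s 0 ^ d) * zfam f A t := by
    refine Polynomial.funext fun z => ?_
    rw [zfam, Polynomial.eval_comp, Polynomial.eval_mul, eval_zpoly, Polynomial.eval_C, Polynomial.eval_mul,
      eval_zpoly, Polynomial.eval_C, Polynomial.eval_X]
    have : A (Fin.cons (s 0 * z) ![s 0, s 0 * t]) = s 0 • A (Fin.cons z ![1, t]) := by
      rw [← map_smul]
      congr 1
      ext i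
      fin_cases i <;> simp
    rw [this, eval_smul_of_homogeneous hf]
    ring
  refine h _ (s 0 * w) ?_ ?_
  · have := congrArg (Polynomial.eval w) hcomp
    rw [Polynomial.eval_comp, Polynomial.eval_mul, Polynomial.eval_mul, hw1.eq_zero] at this
    simpa using this
  · have := congrArg (fun q => Polynomial.eval w (Polynomial.derivative q)) hcomp
    simp only [Polynomial.derivative_comp, Polynomial.derivative_mul, Polynomial.derivative_C,
      Polynomial.eval_mul, Polynomial.eval_comp, Polynomial.derivative_X, Polynomial.eval_add,
      Polynomial.eval_C, Polynomial.eval_X, hw2.eq_zero] at this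
    simpa [hs0] using this

end

end

section

/-! ### Affine charts of the projective plane -/

/-- A homogeneous coordinate vector gives a point of the projective plane. -/
def pt (v : {v : Fin 3 → ℂ // v ≠ 0}) : ProjPlane := Projectivization.mk ℂ v.1 v.2

lemma pt_eq_iff {v w : {v : Fin 3 → ℂ // v ≠ 0}} : pt v = pt w ↔ ∃ a : ℂˣ, a • w.1 = v.1 :=
  Projectivization.mk_eq_mk_iff ℂ _ _ v.2 w.2

lemma pt_surjective : Function.Surjective pt := fun x =>
  ⟨⟨x.rep, x.rep_nonzero⟩, x.mk_rep⟩

lemma isQuotientMap_pt : Topology.IsQuotientMap pt := isQuotientMap_quot_mk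

lemma continuous_pt : Continuous pt := isQuotientMap_pt.continuous

lemma isOpenMap_pt : IsOpenMap pt := fun W hW => by
  rw [← isQuotientMap_pt.isOpen_preimage]
  have : pt ⁻¹' (pt '' W) = ⋃ a : ℂˣ, (fun v : {v : Fin 3 → ℂ // v ≠ 0} =>
      (⟨a • v.1, smul_ne_zero a.ne_zero v.2⟩ : {v : Fin 3 → ℂ // v ≠ 0})) ⁻¹' W := by
    ext v
    simp only [Set.mem_preimage, Set.mem_image, Set.mem_iUnion]
    refine ⟨fun ⟨w, hw, h⟩ => ?_, fun ⟨a, ha⟩ => ⟨_, ha, pt_eq_iff.2 ⟨a, rfl⟩⟩⟩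
    obtain ⟨a, ha⟩ := pt_eq_iff.1 h
    refine ⟨a, ?_⟩
    rwa [show (⟨a • v.1, smul_ne_zero a.ne_zero v.2⟩ : {v : Fin 3 → ℂ // v ≠ 0}) = w from
      Subtype.ext ha]
  rw [this]
  refine isOpen_iUnion fun a => hW.preimage ?_
  exact Continuous.subtype_mk (continuous_subtype_val.const_smul a) _

section
variable {d : ℕ} {f : MvPolynomial (Fin 3) ℂ} (hf : f.IsHomogeneous d)

include hf in
lemma pt_mem_curveSet {v : {v : Fin 3 → ℂ // v ≠ 0}} :
    pt v ∈ curveSet f ↔ MvPolynomial.eval v.1 f = 0 := by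
  refine ⟨fun h => h v.1 v.2 rfl, fun h w hw e => ?_⟩
  obtain ⟨a, ha⟩ := (pt_eq_iff (v := ⟨w, hw⟩) (w := v)).1 e
  have : w = (a : ℂ) • v.1 := ha.symm
  rw [this, eval_smul_of_homogeneous hf, h, mul_zero]

include hf in
lemma isClosed_curveSet : IsClosed (curveSet f) := by
  rw [← isQuotientMap_pt.isClosed_preimage]
  have : pt ⁻¹' curveSet f = {v | MvPolynomial.eval v.1 f = 0} :=
    Set.ext fun v => pt_mem_curveSet hf
  rw [this]
  exact isClosed_eq (f.continuous_eval.comp continuous_subtype_val) continuous_const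

end

variable (A : (Fin 3 → ℂ) ≃L[ℂ] (Fin 3 → ℂ))

/-- The vector with coordinates `(1, q)`, where the coordinate `1` is in position `i`. -/
def ins (i : Fin 3) (q : ℂ × ℂ) : Fin 3 → ℂ := i.insertNth 1 ![q.1, q.2]

lemma ins_self (i : Fin 3) (q : ℂ × ℂ) : ins i q i = 1 := by simp [ins]

lemma ins_ne (i : Fin 3) (q : ℂ × ℂ) : A (ins i q) ≠ 0 := fun h => by
  have := congrFun (A.map_eq_zero_iff.1 h) i
  rw [ins_self] at this
  exact one_ne_zero this

/-- The affine chart where the `i`-th coordinate with respect to `A` does not vanish. -/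
def chart (i : Fin 3) (q : ℂ × ℂ) : ProjPlane := pt ⟨A (ins i q), ins_ne A i q⟩

lemma continuous_ins (i : Fin 3) : Continuous (ins i) := by
  refine continuous_pi fun k => ?_
  induction k using Fin.succAboveCases i with
  | x => simp only [ins, Fin.insertNth_apply_same]; exact continuous_const
  | p k =>
    simp only [ins, Fin.insertNth_apply_succAbove]
    fin_cases k
    · exact continuous_fst
    · exact continuous_snd

/-- The affine coordinates of a vector. -/
def dehom (i : Fin 3) (v : Fin 3 → ℂ) : ℂ × ℂ :=
  ((A.symm v (i.succAbove 0)) / A.symm v i, (A.symm v (i.succAbove 1)) / A.symm v i)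

lemma dehom_smul_ins (i : Fin 3) (a : ℂˣ) (q : ℂ × ℂ) : dehom A i (a • A (ins i q)) = q := by
  have h : A.symm (a • A (ins i q)) = a • ins i q := by
    have := A.symm.map_smul (a : ℂ) (A (ins i q))
    rwa [A.symm_apply_apply] at this
  rw [dehom, h]
  simp [Units.smul_def, ins]

lemma pt_eq_chart (i : Fin 3) (v : {v : Fin 3 → ℂ // v ≠ 0}) (h : A.symm v.1 i ≠ 0) :
    pt v = chart A i (dehom A i v.1) := by
  refine pt_eq_iff.2 ⟨Units.mk0 _ h, ?_⟩
  change A.symm v.1 i • A (ins i (dehom A i v.1)) = v.1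
  rw [← map_smul]
  apply A.symm.injective
  rw [A.symm_apply_apply]
  ext k
  induction k using Fin.succAboveCases i with
  | x => simp [ins]
  | p k => fin_cases k <;> simp [ins, dehom, mul_div_cancel₀ _ h]

lemma pt_mem_chart (i : Fin 3) (v : {v : Fin 3 → ℂ // v ≠ 0}) (W : Set (ℂ × ℂ)) :
    pt v ∈ chart A i '' W ↔ A.symm v.1 i ≠ 0 ∧ dehom A i v.1 ∈ W := by
  refine ⟨fun ⟨q, hq, h⟩ => ?_, fun ⟨h, hW⟩ => ⟨_, hW, (pt_eq_chart A i v h).symm⟩⟩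
  obtain ⟨a, ha⟩ := pt_eq_iff.1 h.symm
  change a • A (ins i q) = v.1 at ha
  rw [← ha, dehom_smul_ins]
  have : A.symm (a • A (ins i q)) = (a : ℂ) • ins i q := by
    have := A.symm.map_smul (a : ℂ) (A (ins i q))
    rwa [A.symm_apply_apply] at this
  rw [this]
  simpa [ins_self] using hq

/-- Affine charts are open in the projective plane, with inverse given by quotients of coordinates. -/
lemma isOpenEmbedding_chart (i : Fin 3) : Topology.IsOpenEmbedding (chart A i) := by
  refine .of_continuous_injective_isOpenMap (continuous_pt.comp
    (Continuous.subtype_mk (A.continuous.comp (continuous_ins i)) _)) (fun q q' h => ?_)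
    fun W hW => ?_
  · obtain ⟨a, ha⟩ := pt_eq_iff.1 h
    have h1 := dehom_smul_ins A i a q'
    have h2 := dehom_smul_ins A i 1 q
    rw [one_smul] at h2
    rw [← h2, ← h1]
    exact congrArg _ ha.symm
  · rw [← isQuotientMap_pt.isOpen_preimage]
    have : pt ⁻¹' (chart A i '' W) = (fun v : {v : Fin 3 → ℂ // v ≠ 0} => dehom A i v.1) ⁻¹' W ∩
        {v | A.symm v.1 i ≠ 0} := Set.ext fun v => (pt_mem_chart A i v W).trans and_comm
    have hc : ∀ k, Continuous fun v : {v : Fin 3 → ℂ // v ≠ 0} => A.symm v.1 k := fun k =>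
      (continuous_apply k).comp (A.symm.continuous.comp continuous_subtype_val)
    have ho : IsOpen {v : {v : Fin 3 → ℂ // v ≠ 0} | A.symm v.1 i ≠ 0} :=
      isOpen_ne_fun (hc i) continuous_const
    rw [this, Set.inter_comm]
    refine ContinuousOn.isOpen_inter_preimage ?_ ho hW
    exact ((hc _).continuousOn.div (hc _).continuousOn fun v hv => hv).prodMk
      ((hc _).continuousOn.div (hc _).continuousOn fun v hv => hv)

section
variable {P : Type} [TopologicalSpace P] {D : Set P} {E : Type} [TopologicalSpace E]
  {p : E → ↥Dᶜ} {m : ℕ} {j : ℂ × ℂ → P}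

/-- Being `Good` over the preimages of subsets of `ℂ` under a function satisfies inclusion–exclusion. -/
lemma mv_image (hp : IsCoveringMap p) (hj : Topology.IsOpenEmbedding j) {φ : ℂ × ℂ → ℂ}
    (hφ : Continuous φ) {S : Set (ℂ × ℂ)} (hS : IsOpen S) :
    MV fun V c => Good p m (j '' {q | φ q ∈ V ∧ q ∈ S}) c where
  empty := by
    have : j '' {q | φ q ∈ (∅ : Set ℂ) ∧ q ∈ S} = ∅ :=
      Set.image_eq_empty.2 (Set.eq_empty_of_forall_notMem fun q hq => hq.1)
    rw [this]
    refine ⟨0, 0, ?_, ?_, by simp⟩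
    · have : above p (∅ : Set P) = ∅ := rfl
      rw [this, sub_empty]
      exact Cplx.HasChi.bot
    · rw [Set.preimage_empty, sub_empty]
      exact Cplx.HasChi.bot
  union {U V _ _ _} hU hV ha hb hc := by
    have hi : j '' {q | φ q ∈ U ∩ V ∧ q ∈ S} =
        j '' {q | φ q ∈ U ∧ q ∈ S} ∩ j '' {q | φ q ∈ V ∧ q ∈ S} := by
      rw [← Set.image_inter hj.injective]
      congr 1
      ext q
      exact ⟨fun h => ⟨⟨h.1.1, h.2⟩, h.1.2, h.2⟩, fun h => ⟨⟨h.1.1, h.2.1⟩, h.1.2⟩⟩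
    have hu : j '' {q | φ q ∈ U ∪ V ∧ q ∈ S} =
        j '' {q | φ q ∈ U ∧ q ∈ S} ∪ j '' {q | φ q ∈ V ∧ q ∈ S} := by
      rw [← Set.image_union]
      congr 1
      ext q
      exact or_and_right
    rw [hi] at hc
    rw [hu]
    exact Good.union hp (hj.isOpenMap _ ((hU.preimage hφ).inter hS))
      (hj.isOpenMap _ ((hV.preimage hφ).inter hS)) ha hb hc

/-- The straight line contraction of a convex set. -/
def Wdr.ofConvex {K : Set (ℂ × ℂ)} (hK : Convex ℝ K) {a : ℂ × ℂ} (ha : a ∈ K) : Wdr {a} K where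
  h s w := (1 - s) • w + s • a
  sub := Set.singleton_subset_iff.2 ha
  cont := Continuous.continuousOn (by
    change Continuous fun x : ℝ × ℂ × ℂ => (1 - x.1) • x.2 + x.1 • a
    fun_prop)
  zero w _ := by simp
  mem s hs w hw := hK hw ha (sub_nonneg.2 hs.2) hs.1 (sub_add_cancel _ _)
  one w _ := by simp
  memA s _ w hw := by
    rw [Set.mem_singleton_iff.1 hw, ← add_smul, sub_add_cancel, one_smul]
    rfl

lemma good_away (hp : IsCoveringMap p) (hm : 0 < m) (hcard : ∀ b, Nat.card (p ⁻¹' {b}) = m)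
    (hj : Topology.IsOpenEmbedding j) {K : Set (ℂ × ℂ)} (hK : Convex ℝ K) (hn : K.Nonempty)
    (hD : ∀ q ∈ K, j q ∉ D) : Good p m (j '' K) 1 := by
  obtain ⟨a, ha⟩ := hn
  refine ⟨m, 0, (Wdr.ofConvex hK ha).hasChi hp hm hcard hj hD, ?_, by simp⟩
  have : (Subtype.val ⁻¹' (j '' K) : Set ↥D) = ∅ :=
    Set.eq_empty_of_forall_notMem fun x ⟨q, hq, h⟩ => hD q hq (h ▸ x.2)
  rw [this, sub_empty]
  exact Cplx.HasChi.bot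

/-- A punctured bidisc is the union of the parts where the first or the second coordinate is nonzero.
Each of these and their intersection contributes zero, being a product with a punctured disc. -/
lemma good_punctured_ball (hp : IsCoveringMap p) (hm : 0 < m)
    (hcard : ∀ b, Nat.card (p ⁻¹' {b}) = m) (hj : Topology.IsOpenEmbedding j) {ε : ℝ} (hε : 0 < ε)
    (hD : ∀ q ∈ Metric.ball (0 : ℂ × ℂ) ε, j q ∉ D) :
    Good p m (j '' (Metric.ball 0 ε \ {0})) 0 := by
  set B := Metric.ball (0 : ℂ) ε
  have hB : Metric.ball (0 : ℂ × ℂ) ε = B ×ˢ B := (ball_prod_same (0 : ℂ) (0 : ℂ) ε).symm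
  have hBo : IsOpen B := Metric.isOpen_ball
  have hBc : Convex ℝ B := convex_ball 0 ε
  have h0 : (0 : ℂ) ∈ B := Metric.mem_ball_self hε
  have hBo' : IsOpen (B \ {0}) := hBo.sdiff isClosed_singleton
  have away : ∀ U V : Set ℂ, U ⊆ B → V ⊆ B → Convex ℝ U → Convex ℝ V → U.Nonempty → V.Nonempty →
      Good p m (j '' (U ×ˢ V)) 1 := fun U V hU hV cU cV nU nV =>
    good_away hp hm hcard hj (cU.prod cV) (nU.prod nV) fun q hq => hD q (by
      rw [hB]; exact ⟨hU hq.1, hV hq.2⟩)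
  have e1 : ∀ U V : Set ℂ, {q : ℂ × ℂ | q.1 ∈ U ∧ q ∈ Set.univ ×ˢ V} = U ×ˢ V := fun U V => by
    ext q; simp
  have e2 : ∀ U V : Set ℂ, {q : ℂ × ℂ | q.2 ∈ V ∧ q ∈ U ×ˢ Set.univ} = U ×ˢ V := fun U V => by
    ext q; simp [and_comm]
  have s2 : ∀ U ⊆ B, IsOpen U → Convex ℝ U → U.Nonempty →
      Good p m (j '' (U ×ˢ (B \ {0}))) 0 := fun U hU oU cU nU => by
    have := (mv_image (m := m) hp hj continuous_snd (oU.prod isOpen_univ)).punctured hBo hBc h0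
      (c := 1) fun V hV oV cV nV => by
        rw [e2]
        exact away U V hU (hV.trans Set.sdiff_subset) cU cV nU nV
    rwa [e2] at this
  have s1 : Good p m (j '' ((B \ {0}) ×ˢ B)) 0 := by
    have := (mv_image (m := m) hp hj continuous_fst (isOpen_univ.prod hBo)).punctured hBo hBc h0
      (c := 1) fun V hV oV cV nV => by
        rw [e1]
        exact away V B (hV.trans Set.sdiff_subset) le_rfl cV hBc nV ⟨0, h0⟩
    rwa [e1] at this
  have s3 : Good p m (j '' ((B \ {0}) ×ˢ (B \ {0}))) 0 := by
    have := (mv_image (m := m) hp hj continuous_fst (isOpen_univ.prod hBo')).punctured hBo hBc h0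
      (c := 0) fun V hV oV cV nV => by
        rw [e1]
        exact s2 V (hV.trans Set.sdiff_subset) oV cV nV
    rwa [e1] at this
  have hu : Metric.ball 0 ε \ {0} = (B \ {0}) ×ˢ B ∪ B ×ˢ (B \ {0}) := by
    rw [hB]
    ext q
    simp only [Set.mem_sdiff, Set.mem_prod, Set.mem_singleton_iff, Set.mem_union, Prod.ext_iff,
      Prod.fst_zero, Prod.snd_zero]
    tauto
  have hi : (B \ {0}) ×ˢ (B \ {0}) = ((B \ {0}) ×ˢ B) ∩ (B ×ˢ (B \ {0})) := by
    ext q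
    simp only [Set.mem_sdiff, Set.mem_prod, Set.mem_singleton_iff, Set.mem_inter_iff]
    tauto
  rw [hu, Set.image_union]
  rw [hi, Set.image_inter hj.injective] at s3
  simpa using Good.union hp (hj.isOpenMap _ (hBo'.prod hBo)) (hj.isOpenMap _ (hBo.prod hBo')) s1
    (s2 B le_rfl hBo hBc ⟨0, h0⟩) s3

end

/-- The affine chart with coordinates `(t, z) ↦ (z : 1 : t)`. -/
def kap (q : ℂ × ℂ) : ProjPlane := chart A 1 q.swap

lemma isOpenEmbedding_kap : Topology.IsOpenEmbedding (kap A) :=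
  (isOpenEmbedding_chart A 1).comp (Homeomorph.prodComm ℂ ℂ).isOpenEmbedding

lemma pt_mem_kap (v : {v : Fin 3 → ℂ // v ≠ 0}) (W : Set ℂ) :
    pt v ∈ kap A '' {q | q.1 ∈ W} ↔ A.symm v.1 1 ≠ 0 ∧ A.symm v.1 2 / A.symm v.1 1 ∈ W := by
  have : kap A '' {q | q.1 ∈ W} = chart A 1 '' {q | q.2 ∈ W} := by
    ext x
    constructor
    · rintro ⟨q, hq, rfl⟩
      exact ⟨q.swap, hq, rfl⟩
    · rintro ⟨q, hq, rfl⟩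
      exact ⟨q.swap, hq, congrArg _ q.swap_swap⟩
  rw [this, pt_mem_chart]
  rfl

lemma kap_mem_curveSet {d : ℕ} {f : MvPolynomial (Fin 3) ℂ} (hf : f.IsHomogeneous d)
    (hv : MvPolynomial.eval (A (Fin.cons 1 0)) f ≠ 0) (q : ℂ × ℂ) :
    kap A q ∈ curveSet f ↔ (zfam f A q.1).IsRoot q.2 := by
  rw [kap, chart, pt_mem_curveSet hf, zfam, Polynomial.IsRoot.def, eval_zpoly, mul_eq_zero,
    or_iff_right (inv_ne_zero hv)]
  have : ins 1 q.swap = Fin.cons q.2 ![1, q.1] := by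
    ext i
    fin_cases i <;> rfl
  simp only [this]

/-- Interchange of the last two coordinates. -/
def swapCoord : (Fin 3 → ℂ) ≃L[ℂ] (Fin 3 → ℂ) :=
  ContinuousLinearEquiv.piCongrLeft ℂ (fun _ => ℂ) (Equiv.swap 1 2)

lemma swapCoord_symm_apply (v : Fin 3 → ℂ) (i : Fin 3) :
    swapCoord.symm v i = v (Equiv.swap 1 2 i) := rfl

variable {d : ℕ} {f : MvPolynomial (Fin 3) ℂ} {D : Set ProjPlane} {E : Type} [TopologicalSpace E]
  {p : E → ↥Dᶜ} {m : ℕ}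

/-- The Euler characteristics of a curve and of a covering of its complement add up as if the plane
had Euler characteristic three. -/
theorem good_univ (hd : 0 < d) (hf : f.IsHomogeneous d) (hsq : Squarefree f) (hD : D = curveSet f)
    (hp : IsCoveringMap p) (hm : 0 < m) (hcard : ∀ b, Nat.card (p ⁻¹' {b}) = m) :
    Good p m Set.univ 3 := by
  obtain ⟨v, hv⟩ : ∃ v, MvPolynomial.eval v f ≠ 0 := by
    by_contra! hc
    exact hsq.ne_zero (MvPolynomial.funext fun s => by rw [hc s, map_zero])
  have hv0 : v ≠ 0 := by
    rintro rfl
    have := eval_smul_of_homogeneous hf 0 0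
    rw [zero_pow hd.ne', zero_mul, zero_smul] at this
    exact hv this
  have he0 : (Fin.cons 1 0 : Fin 3 → ℂ) ≠ 0 := fun h => one_ne_zero (congrFun h 0)
  obtain ⟨A, hA⟩ := SeparatingDual.exists_continuousLinearEquiv_apply_eq (R := ℂ) he0 hv0
  have hvA : MvPolynomial.eval (A (Fin.cons 1 0)) f ≠ 0 := by rwa [hA]
  set A' := swapCoord.trans A with hA'
  have hvA' : MvPolynomial.eval (A' (Fin.cons 1 0)) f ≠ 0 := by
    have : swapCoord (Fin.cons 1 0) = Fin.cons 1 0 := by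
      apply swapCoord.symm.injective
      rw [ContinuousLinearEquiv.symm_apply_apply]
      ext i
      rw [swapCoord_symm_apply]
      fin_cases i <;> rfl
    rw [hA', ContinuousLinearEquiv.trans_apply, this]
    exact hvA
  have hj := isOpenEmbedding_kap A
  have hj' := isOpenEmbedding_kap A'
  have g1 : Good p m (kap A '' {q | q.1 ∈ Set.univ}) 1 :=
    good_convex (zfam_fam hf A hvA hd) hp hm hcard hj (hD ▸ kap_mem_curveSet A hf hvA)
      (zfam_finite hf hsq A hvA) isOpen_univ convex_univ Set.univ_nonempty
  have g2 : Good p m (kap A' '' {q | q.1 ∈ Set.univ}) 1 :=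
    good_convex (zfam_fam hf A' hvA' hd) hp hm hcard hj' (hD ▸ kap_mem_curveSet A' hf hvA')
      (zfam_finite hf hsq A' hvA') isOpen_univ convex_univ Set.univ_nonempty
  have g3 : Good p m (kap A '' {q | q.1 ∈ Set.univ \ {0}}) 0 :=
    good_compl (zfam_fam hf A hvA hd) hp hm hcard hj (hD ▸ kap_mem_curveSet A hf hvA)
      (zfam_finite hf hsq A hvA) 0
  have hm' : ∀ v : {v : Fin 3 → ℂ // v ≠ 0},
      pt v ∈ kap A' '' {q | q.1 ∈ Set.univ} ↔ A.symm v.1 2 ≠ 0 := fun v => by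
    rw [pt_mem_kap]
    simp [hA', swapCoord_symm_apply]
  have hi : kap A '' {q | q.1 ∈ Set.univ \ {0}} =
      kap A '' {q | q.1 ∈ Set.univ} ∩ kap A' '' {q | q.1 ∈ Set.univ} := by
    ext x
    obtain ⟨v, rfl⟩ := pt_surjective x
    rw [Set.mem_inter_iff, hm', pt_mem_kap, pt_mem_kap]
    simp +contextual [div_eq_zero_iff]
  rw [hi] at g3
  have ho := hj.isOpenMap {q | q.1 ∈ Set.univ} (isOpen_univ.preimage continuous_fst)
  have ho' := hj'.isOpenMap {q | q.1 ∈ Set.univ} (isOpen_univ.preimage continuous_fst)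
  have g4 := Good.union hp ho ho' g1 g2 g3
  -- a neighbourhood of the centre of projection
  have hc := isOpenEmbedding_chart A 0
  have hin : chart A 0 0 ∉ D := by
    rw [hD, chart, pt_mem_curveSet hf]
    have : ins 0 0 = Fin.cons 1 0 := by
      ext i
      fin_cases i <;> rfl
    simp only [this]
    exact hvA
  have hDo : IsOpen Dᶜ := (hD ▸ isClosed_curveSet hf : IsClosed D).isOpen_compl
  obtain ⟨ε, hε, hball⟩ := Metric.isOpen_iff.1 (hDo.preimage hc.continuous) 0 hin
  have g5 : Good p m (chart A 0 '' Metric.ball 0 ε) 1 :=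
    good_away hp hm hcard hc (convex_ball 0 ε) ⟨0, Metric.mem_ball_self hε⟩ hball
  have g6 := good_punctured_ball hp hm hcard hc hε hball
  have hm0 : ∀ v : {v : Fin 3 → ℂ // v ≠ 0},
      pt v ∈ kap A '' {q | q.1 ∈ Set.univ} ∪ kap A' '' {q | q.1 ∈ Set.univ} ↔
      A.symm v.1 1 ≠ 0 ∨ A.symm v.1 2 ≠ 0 := fun v => by
    rw [Set.mem_union, hm', pt_mem_kap]
    simp
  have hi2 : chart A 0 '' (Metric.ball 0 ε \ {0}) =
      (kap A '' {q | q.1 ∈ Set.univ} ∪ kap A' '' {q | q.1 ∈ Set.univ}) ∩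
        chart A 0 '' Metric.ball 0 ε := by
    ext x
    obtain ⟨v, rfl⟩ := pt_surjective x
    rw [Set.mem_inter_iff, hm0, pt_mem_chart, pt_mem_chart, Set.mem_sdiff, Set.mem_singleton_iff]
    have : A.symm v.1 0 ≠ 0 → (dehom A 0 v.1 = 0 ↔ A.symm v.1 1 = 0 ∧ A.symm v.1 2 = 0) :=
      fun h => by
        rw [dehom, Prod.ext_iff]
        simp [div_eq_zero_iff, h]
    tauto
  rw [hi2] at g6
  have g7 := Good.union hp (ho.union ho') (hc.isOpenMap _ Metric.isOpen_ball) g4 g5 g6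
  have hu : kap A '' {q | q.1 ∈ Set.univ} ∪ kap A' '' {q | q.1 ∈ Set.univ} ∪
      chart A 0 '' Metric.ball 0 ε = Set.univ := by
    refine Set.eq_univ_of_forall fun x => ?_
    obtain ⟨v, rfl⟩ := pt_surjective x
    rw [Set.mem_union, hm0, pt_mem_chart]
    by_contra! hcon
    obtain ⟨⟨h1, h2⟩, h3⟩ := hcon
    have h0 : A.symm v.1 0 ≠ 0 := fun h0 => v.2 (by
      apply A.symm.injective
      rw [map_zero]
      ext i
      fin_cases i <;> assumption)
    refine h3 h0 ?_
    have : dehom A 0 v.1 = 0 := by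
      rw [dehom, Prod.ext_iff]
      simp [h1, h2]
    rw [this]
    exact Metric.mem_ball_self hε
  rw [hu] at g7
  simpa using g7

/-- Euler characteristic of a covering of the complement of a plane curve. -/
theorem eulerChar_covering (hd : 0 < d) (hf : f.IsHomogeneous d) (hsq : Squarefree f)
    (hD : D = curveSet f) (hp : IsCoveringMap p) (hm : 0 < m)
    (hcard : ∀ b, Nat.card (p ⁻¹' {b}) = m) : eulerChar E = m * (3 - eulerCharSet D) := by
  obtain ⟨a, b, ha, hb, e⟩ := good_univ hd hf hsq hD hp hm hcard
  have h1 : above p Set.univ = Set.univ := rfl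
  rw [h1] at ha
  rw [Set.preimage_univ] at hb
  rw [eulerChar_eq _ ha, eulerCharSet, eulerChar_eq _ hb]
  linear_combination e

end

section

/-! ### Higher homotopy groups of a covering space -/

section HigherHomotopy

open scoped unitInterval Topology

variable {E X : Type*} [TopologicalSpace E] [TopologicalSpace X] {p : E → X}

/-- The map on generalised loops induced by a continuous map. -/
def genLoopMap {N : Type*} (f : C(E, X)) (e : E) (g : GenLoop N E e) : GenLoop N X (f e) :=
  ⟨f.comp g.1, fun y hy => congrArg f (g.2 y hy)⟩

/-- A generalised loop of dimension at least two lifts to a generalised loop: its lift is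
constant on the boundary of the cube, as this boundary is connected. -/
theorem exists_genLoop_lift (cov : IsCoveringMap p) (e : E) (i : ℕ)
    (g : GenLoop (Fin (i + 2)) X (p e)) :
    ∃ G : GenLoop (Fin (i + 2)) E e, genLoopMap ⟨p, cov.continuous⟩ e G = g := by
  let H : C(I × (Fin (i + 2) → I), X) :=
    ⟨fun ty => g.1 (fun k => ty.1 * ty.2 k), by fun_prop⟩
  have H0 : ∀ y, H (0, y) = p ((ContinuousMap.const _ e : C(Fin (i + 2) → I, E)) y) := by
    intro y
    exact g.2 _ ⟨0, Or.inl (by simp)⟩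
  let F := cov.liftHomotopy H (ContinuousMap.const _ e) H0
  have hFl : ∀ ty, p (F ty) = H ty := fun ty =>
    congrFun (cov.liftHomotopy_lifts H (ContinuousMap.const _ e) H0) ty
  have hF0 : ∀ y, F (0, y) = e := fun y => cov.liftHomotopy_zero H (ContinuousMap.const _ e) H0 y
  have hg : ∀ y, p (F (1, y)) = g.1 y := by
    intro y
    rw [hFl]
    simp [H]
  -- On a face through the origin the homotopy stays over the base point.
  have hface : ∀ (y : Fin (i + 2) → I) (k : Fin (i + 2)), y k = 0 → F (1, y) = e := by
    intro y k hk
    rw [← hF0 y]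
    refine cov.const_of_comp (g := fun t : I => F (t, y)) (by fun_prop) (fun s t => ?_) 1 0
    simp only [hFl]
    have : ∀ t : I, H (t, y) = p e := fun t => g.2 _ ⟨k, Or.inl (by simp [hk])⟩
    rw [this, this]
  refine ⟨⟨⟨fun y => F (1, y), by fun_prop⟩, ?_⟩, ?_⟩
  · rintro y ⟨k, hk | hk⟩
    · exact hface y k hk
    · obtain ⟨j, hj⟩ := exists_ne k
      change F (1, y) = e
      rw [← hface (Function.update y j 0) j (by simp)]
      have := cov.const_of_comp (g := fun t : I => F (1, Function.update y j t)) (by fun_prop)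
        (fun s t => ?_) (y j) 0
      · simpa using this
      · have : ∀ t : I, p (F (1, Function.update y j t)) = p e := fun t => by
          rw [hg]
          exact g.2 _ ⟨k, Or.inr (by simp [Function.update_of_ne hj.symm, hk])⟩
        rw [this, this]
  · ext y
    exact hg y

/-- A covering map induces isomorphisms on the homotopy groups of dimension at least two. -/
theorem nonempty_homotopyGroup_mulEquiv (cov : IsCoveringMap p) (e : E) (i : ℕ) :
    Nonempty (HomotopyGroup (Fin (i + 2)) X (p e) ≃* HomotopyGroup (Fin (i + 2)) E e) := by
  let P : C(E, X) := ⟨p, cov.continuous⟩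
  have hiff : ∀ a b : GenLoop (Fin (i + 2)) E e,
      GenLoop.Homotopic a b ↔ GenLoop.Homotopic (genLoopMap P e a) (genLoopMap P e b) := by
    intro a b
    have h0 : (fun _ => 0 : Fin (i + 2) → I) ∈ Cube.boundary (Fin (i + 2)) := ⟨0, Or.inl rfl⟩
    exact cov.homotopicRel_iff_comp ⟨_, h0, (a.2 _ h0).trans (b.2 _ h0).symm⟩
  let φ : HomotopyGroup (Fin (i + 2)) E e → HomotopyGroup (Fin (i + 2)) X (p e) :=
    Quotient.map (genLoopMap P e) (fun a b h => (hiff a b).1 h)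
  have hφ : Function.Bijective φ := by
    constructor
    · rintro ⟨a⟩ ⟨b⟩ hab
      exact Quotient.sound ((hiff a b).2 (Quotient.exact hab))
    · rintro ⟨g⟩
      obtain ⟨G, hG⟩ := exists_genLoop_lift cov e i g
      exact ⟨Quotient.mk _ G, congrArg (Quotient.mk _) hG⟩
  have hmul : ∀ a b, φ (a * b) = φ a * φ b := by
    rintro ⟨a⟩ ⟨b⟩
    refine (congrArg φ (HomotopyGroup.mul_spec (i := 0) (p := a) (q := b))).trans ?_
    refine Eq.trans ?_ (HomotopyGroup.mul_spec (i := 0) (p := genLoopMap P e a)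
      (q := genLoopMap P e b)).symm
    refine congrArg (Quotient.mk _) ?_
    ext t
    change P (if _ then _ else _) = if _ then _ else _
    split_ifs <;> rfl
  exact ⟨(MulEquiv.ofBijective (MulHom.mk φ hmul) hφ).symm⟩

end HigherHomotopy

end

section

/-! ### The kernel of `𝔽_r * A * B → A × B` -/

section FreeKernel

variable (ρ A B : Type) [Group A] [Group B]

/-- The free product `𝔽_ρ * A * B`. -/
abbrev FreeCoprod : Type := Monoid.Coprod (Monoid.Coprod (FreeGroup ρ) A) B

/-- The index set of the free basis of the kernel: the conjugates of the free generators by a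
transversal, and the commutators of the nontrivial elements of `A` and `B`. -/
abbrev KernelBasis : Type := (ρ × A × B) ⊕ ({a : A // a ≠ 1} × {b : B // b ≠ 1})

/-- The free group which turns out to be the kernel. -/
abbrev KernelGroup : Type := FreeGroup (KernelBasis ρ A B)

/-- The right translation action of `A × B` on functions `A × B → K`. -/
def translate (K : Type) [Group K] : A × B →* MulAut (A × B → K) where
  toFun s :=
    { toFun := fun f u => f (u * s)
      invFun := fun f u => f (u * s⁻¹)
      left_inv := fun f => by funext u; simp
      right_inv := fun f => by funext u; simp
      map_mul' := fun f g => rfl }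
  map_one' := by ext f u; simp
  map_mul' s t := by ext f u; simp [mul_assoc]

/-- The wreath product of `K` by `A × B`. -/
abbrev Wreath (K : Type) [Group K] : Type := SemidirectProduct (A × B → K) (A × B) (translate A B K)

variable {ρ A B}

theorem translate_apply {K : Type} [Group K] (s u : A × B) (f : A × B → K) :
    translate A B K s f u = f (u * s) := rfl

/-- The homomorphism `𝔽_ρ * A * B → A × B`. -/
def toProd : FreeCoprod ρ A B →* A × B :=
  Monoid.Coprod.lift (Monoid.Coprod.lift 1 (MonoidHom.inl A B)) (MonoidHom.inr A B)

/-- The inclusion of the free factor. -/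
def inX (x : ρ) : FreeCoprod ρ A B := Monoid.Coprod.inl (Monoid.Coprod.inl (FreeGroup.of x))

/-- The inclusion of the factor `A`. -/
def inA : A →* FreeCoprod ρ A B := Monoid.Coprod.inl.comp Monoid.Coprod.inr

/-- The inclusion of the factor `B`. -/
def inB : B →* FreeCoprod ρ A B := Monoid.Coprod.inr

@[simp] theorem toProd_inX (x : ρ) : toProd (inX x : FreeCoprod ρ A B) = 1 := by
  simp [toProd, inX]

@[simp] theorem toProd_inA (a : A) : toProd (inA a : FreeCoprod ρ A B) = (a, 1) := by
  simp [toProd, inA]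

@[simp] theorem toProd_inB (b : B) : toProd (inB b : FreeCoprod ρ A B) = (1, b) := by
  simp [toProd, inB]

/-- The transversal of the kernel of `toProd`. -/
def tsv (u : A × B) : FreeCoprod ρ A B := inA u.1 * inB u.2

open scoped Classical in
/-- The generator of `KernelGroup` corresponding to the commutator of `b` and `a`; it is trivial
when `a` or `b` is. -/
def genY (a : A) (b : B) : KernelGroup ρ A B :=
  if h : a ≠ 1 ∧ b ≠ 1 then FreeGroup.of (Sum.inr (⟨a, h.1⟩, ⟨b, h.2⟩)) else 1

/-- The embedding of `KernelGroup` as the kernel of `toProd`. -/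
def kerIncl : KernelGroup ρ A B →* FreeCoprod ρ A B :=
  FreeGroup.lift (Sum.elim (fun s => tsv s.2 * inX s.1 * (tsv s.2)⁻¹)
    (fun s => inB s.2.1 * inA s.1.1 * (inB s.2.1)⁻¹ * (inA s.1.1)⁻¹))

theorem kerIncl_genY (a : A) (b : B) : kerIncl (genY a b : KernelGroup ρ A B) =
    inB b * inA a * (inB b)⁻¹ * (inA a)⁻¹ := by
  unfold genY
  split_ifs with h
  · simp [kerIncl]
  · rw [not_and_or, not_not, not_not] at h
    rcases h with rfl | rfl <;> simp

/-- The value of the cocycle on the factor `A`. -/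
def cocA : A →* Wreath A B (KernelGroup ρ A B) where
  toFun a := ⟨fun u => (genY u.1 u.2)⁻¹ * genY (u.1 * a) u.2, (a, 1)⟩
  map_one' := by
    ext1
    · funext u
      simp
    · rfl
  map_mul' a a' := by
    ext1
    · funext u
      rw [SemidirectProduct.mul_left, Pi.mul_apply, translate_apply]
      simp [mul_assoc]
    · simp

/-- The Reidemeister–Schreier cocycle of the transversal `tsv`, as a homomorphism to the wreath
product. -/
def coc : FreeCoprod ρ A B →* Wreath A B (KernelGroup ρ A B) :=
  Monoid.Coprod.lift
    (Monoid.Coprod.lift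
      (FreeGroup.lift fun x => SemidirectProduct.inl fun u => FreeGroup.of (Sum.inl (x, u)))
      cocA)
    (SemidirectProduct.inr.comp (MonoidHom.inr A B))

theorem coc_inX (x : ρ) : (coc (inX x) : Wreath A B (KernelGroup ρ A B)) =
    SemidirectProduct.inl fun u => FreeGroup.of (Sum.inl (x, u)) := by
  simp [coc, inX]

theorem coc_inA (a : A) : (coc (inA a) : Wreath A B (KernelGroup ρ A B)) = cocA a := by
  simp [coc, inA]

theorem coc_inB (b : B) : (coc (inB b) : Wreath A B (KernelGroup ρ A B)) =
    SemidirectProduct.inr (1, b) := by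
  simp [coc, inB]

/-- The free product is generated by the free generators and the two groups. -/
theorem freeCoprod_induction {P : FreeCoprod ρ A B → Prop} (hX : ∀ x, P (inX x))
    (hA : ∀ a, P (inA a)) (hB : ∀ b, P (inB b)) (hmul : ∀ g h, P g → P h → P (g * h))
    (hinv : ∀ g, P g → P g⁻¹) (g : FreeCoprod ρ A B) : P g := by
  have h1 : P 1 := by simpa using hA 1
  induction g using Monoid.Coprod.induction_on with
  | inl g =>
    induction g using Monoid.Coprod.induction_on with
    | inl g =>
      induction g using FreeGroup.induction_on with
      | C1 => simpa using h1
      | of x => exact hX x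
      | inv_of x hx => simpa using hinv _ hx
      | mul g h hg hh => simpa using hmul _ _ hg hh
    | inr a => exact hA a
    | mul g h hg hh => simpa using hmul _ _ hg hh
  | inr b => exact hB b
  | mul g h hg hh => exact hmul _ _ hg hh

theorem coc_right (g : FreeCoprod ρ A B) : (coc g).right = toProd g := by
  induction g using freeCoprod_induction with
  | hX x => simp [coc_inX]
  | hA a => simp [coc_inA, cocA]
  | hB b => simp [coc_inB]
  | hmul g h hg hh => simp [hg, hh]
  | hinv g hg => simp [hg]

theorem coc_mul (g h : FreeCoprod ρ A B) (u : A × B) :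
    (coc (g * h)).left u = (coc g).left u * (coc h).left (u * toProd g) := by
  rw [map_mul, SemidirectProduct.mul_left, coc_right]
  rfl

/-- The cocycle computes the Schreier rewriting of an element along the transversal. -/
theorem kerIncl_coc (g : FreeCoprod ρ A B) : ∀ u : A × B,
    kerIncl ((coc g).left u) = tsv u * g * (tsv (u * toProd g))⁻¹ := by
  induction g using freeCoprod_induction with
  | hX x => intro u; simp [coc_inX, kerIncl]
  | hA a =>
    intro u
    simp only [coc_inA, cocA, MonoidHom.coe_mk, OneHom.coe_mk, map_mul, map_inv, kerIncl_genY,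
      toProd_inA, tsv, Prod.fst_mul, Prod.snd_mul, mul_one]
    group
  | hB b => intro u; simp [coc_inB, tsv, mul_assoc]
  | hmul g h hg hh =>
    intro u
    rw [coc_mul, map_mul, hg, hh, map_mul, mul_assoc u]
    group
  | hinv g hg =>
    intro u
    have h1 := coc_mul g g⁻¹ (u * (toProd g)⁻¹)
    rw [mul_inv_cancel, map_one, inv_mul_cancel_right] at h1
    have h2 : (coc g⁻¹).left u = ((coc g).left (u * (toProd g)⁻¹))⁻¹ :=
      eq_inv_of_mul_eq_one_right h1.symm
    rw [h2, map_inv, hg, map_inv, inv_mul_cancel_right]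
    group

theorem toProd_kerIncl (k : KernelGroup ρ A B) : toProd (kerIncl k) = 1 := by
  have : (toProd.comp kerIncl : KernelGroup ρ A B →* A × B) = 1 := by
    ext1 s
    rcases s with s | s <;> simp [kerIncl]
  exact DFunLike.congr_fun this k

theorem coc_kerIncl (k : KernelGroup ρ A B) : (coc (kerIncl k)).left 1 = k := by
  have hY1 : ∀ b : B, (genY 1 b : KernelGroup ρ A B) = 1 := fun b => by simp [genY]
  have hY2 : ∀ a : A, (genY a 1 : KernelGroup ρ A B) = 1 := fun b => by simp [genY]
  let ψ : KernelGroup ρ A B →* KernelGroup ρ A B :=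
    { toFun := fun k => (coc (kerIncl k)).left 1
      map_one' := by simp
      map_mul' := fun k l => by
        rw [map_mul, coc_mul, toProd_kerIncl, mul_one] }
  have : ψ = MonoidHom.id _ := by
    ext1 s
    change (coc (kerIncl _)).left 1 = FreeGroup.of s
    rcases s with ⟨x, a, b⟩ | ⟨⟨a, ha⟩, ⟨b, hb⟩⟩
    · simp [kerIncl, coc_inX, coc_inA, coc_inB, cocA, tsv, hY1, hY2, translate_apply]
    · simp [kerIncl, coc_inA, coc_inB, cocA, hY1, hY2, translate_apply]
      simp [genY, ha, hb]
  exact DFunLike.congr_fun this k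

/-- The kernel of `𝔽_ρ * A * B → A × B` is free. -/
def kerEquiv : (toProd : FreeCoprod ρ A B →* A × B).ker ≃* KernelGroup ρ A B where
  toFun g := (coc g.1).left 1
  invFun k := ⟨kerIncl k, toProd_kerIncl k⟩
  left_inv g := by
    apply Subtype.ext
    have := kerIncl_coc g.1 1
    rw [(MonoidHom.mem_ker).1 g.2, mul_one] at this
    simpa [tsv] using this
  right_inv k := coc_kerIncl k
  map_mul' g h := by
    change (coc (g.1 * h.1)).left 1 = _
    rw [coc_mul, (MonoidHom.mem_ker).1 g.2, mul_one]

theorem toProd_surjective :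
    Function.Surjective (toProd : FreeCoprod ρ A B →* A × B) := by
  rintro ⟨a, b⟩
  exact ⟨inA a * inB b, by simp⟩

end FreeKernel

/-- `𝔽_r * ℤ/pℤ * ℤ/qℤ` has a free normal subgroup of rank `pqr + (p-1)(q-1)`, the kernel of the
map to `ℤ/pℤ × ℤ/qℤ`. -/
theorem nonempty_ker_mulEquiv (r p q : ℕ) (hp : 1 ≤ p) (hq : 1 ≤ q) :
    Nonempty ((toProd : FreeProdFreeCyclicCyclic r p q →*
        Multiplicative (ZMod p) × Multiplicative (ZMod q)).ker ≃*
      FreeGroup (Fin (p * q * r + (p - 1) * (q - 1)))) := by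
  have : NeZero p := ⟨by omega⟩
  have : NeZero q := ⟨by omega⟩
  have hcard : Nat.card (KernelBasis (Fin r) (Multiplicative (ZMod p)) (Multiplicative (ZMod q))) =
      p * q * r + (p - 1) * (q - 1) := by
    have hne : ∀ n : ℕ, [NeZero n] →
        Nat.card {a : Multiplicative (ZMod n) // a ≠ 1} = n - 1 := by
      intro n _
      classical
      rw [Nat.card_eq_fintype_card, Fintype.card_subtype_compl]
      simp
    rw [Nat.card_sum, Nat.card_prod, Nat.card_prod, Nat.card_prod, hne, hne]
    simp
    ring
  have e := Finite.equivFinOfCardEq hcard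
  exact ⟨kerEquiv.trans (FreeGroup.freeGroupCongr e)⟩

end

section

/-! ### The covering space of a homomorphism from the fundamental group -/

section CoveringOfHom

open scoped unitInterval Topology

variable {X G : Type} [TopologicalSpace X] [Group G]

/-- A set whose paths are homotopic in the ambient space as soon as they have the same
endpoints. -/
structure Small (U : Set X) : Prop where
  isOpen : IsOpen U
  isPathConnected : IsPathConnected U
  homotopic : ∀ {y z : X} (γ γ' : Path y z), (∀ s, γ s ∈ U) → (∀ s, γ' s ∈ U) → γ.Homotopic γ'

/-- A functor from the fundamental groupoid to a group, written contravariantly as composition of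
loops is in Mathlib. -/
structure PathCocycle (X G : Type) [TopologicalSpace X] [Group G] where
  val : ∀ {x y : X}, Path.Homotopic.Quotient x y → G
  val_trans : ∀ {x y z : X} (α : Path.Homotopic.Quotient x y) (β : Path.Homotopic.Quotient y z),
    val (α.trans β) = val β * val α

theorem simplyConnectedSpace_unitInterval : SimplyConnectedSpace I :=
  have := (convex_Icc (0 : ℝ) 1).contractibleSpace ⟨0, by simp⟩
  SimplyConnectedSpace.ofContractible I

/-- Points of the unit interval are joined to their neighbours inside any neighbourhood. -/
theorem eventually_joinedIn_unitInterval (s₀ : I) (V : Set I) (hV : V ∈ 𝓝 s₀) :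
    ∀ᶠ s in 𝓝 s₀, JoinedIn V s₀ s := by
  obtain ⟨ε, hε, hb⟩ := Metric.mem_nhds_iff.1 hV
  filter_upwards [Metric.ball_mem_nhds s₀ hε] with s hs
  have hcv : Convex ℝ (Set.Icc (0 : ℝ) 1 ∩ Metric.ball (s₀ : ℝ) ε) :=
    (convex_Icc _ _).inter (convex_ball _ _)
  have hmem : ∀ u : I, (1 - (u : ℝ)) * s₀ + u * s ∈ Set.Icc (0 : ℝ) 1 ∩ Metric.ball (s₀ : ℝ) ε :=
    fun u => hcv ⟨s₀.2, Metric.mem_ball_self hε⟩ ⟨s.2, hs⟩ (by linarith [u.2.2]) u.2.1 (by ring)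
  refine ⟨⟨⟨fun u => ⟨(1 - (u : ℝ)) * s₀ + u * s, (hmem u).1⟩, by fun_prop⟩, ?_, ?_⟩, fun u => ?_⟩
  · ext; simp
  · ext; simp
  · exact hb (hmem u).2

namespace PathCocycle

variable (c : PathCocycle X G)

theorem val_refl (x : X) : c.val (.refl x) = 1 := by
  have h := c.val_trans (.refl x) (.refl x)
  rw [Path.Homotopic.Quotient.refl_trans] at h
  simpa using h

/-- The value of a cocycle on a path. -/
abbrev pv {x y : X} (γ : Path x y) : G := c.val (.mk γ)

theorem pv_trans {x y z : X} (γ : Path x y) (δ : Path y z) :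
    c.pv (γ.trans δ) = c.pv δ * c.pv γ := c.val_trans (.mk γ) (.mk δ)

theorem pv_congr {x y : X} {γ δ : Path x y} (h : γ.Homotopic δ) : c.pv γ = c.pv δ :=
  congrArg c.val (Quotient.sound h)

variable {U : X → Set X} (hU : ∀ x, Small (U x)) (hmem : ∀ x, x ∈ U x)

open scoped Classical in
/-- The parallel transport from the centre of a small set to another point of it. -/
def trp (U : X → Set X) (i y : X) : G :=
  if h : JoinedIn (U i) i y then c.pv h.somePath else 1

include hU hmem in
theorem trp_eq {i y z : X} (γ : Path y z) (hγ : ∀ s, γ s ∈ U i) :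
    c.trp U i z = c.pv γ * c.trp U i y := by
  have hy : y ∈ U i := by simpa using hγ 0
  have hz : z ∈ U i := by simpa using hγ 1
  have jy := (hU i).isPathConnected.joinedIn i (hmem i) y hy
  have jz := (hU i).isPathConnected.joinedIn i (hmem i) z hz
  rw [trp, trp, dif_pos jy, dif_pos jz, ← c.pv_trans]
  refine c.pv_congr ((hU i).homotopic _ _ jz.somePath_mem fun s => ?_)
  have : Set.range (jy.somePath.trans γ) ⊆ U i := by
    rw [Path.trans_range]
    rintro _ (⟨s, rfl⟩ | ⟨s, rfl⟩)
    · exact jy.somePath_mem s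
    · exact hγ s
  exact this ⟨s, rfl⟩

include hU hmem in
theorem trp_self (i : X) : c.trp U i i = 1 := by
  have ji := (hU i).isPathConnected.joinedIn i (hmem i) i (hmem i)
  rw [trp, dif_pos ji, ← c.val_refl i]
  exact c.pv_congr ((hU i).homotopic _ (Path.refl i) ji.somePath_mem fun s => hmem i)

variable [TopologicalSpace G] [DiscreteTopology G]

/-- The bundle with fibre `G` in which transport along a path is left multiplication by the value
of the cocycle. -/
def bundleCore (hb : ∀ (x : X) (V : Set X), IsOpen V → x ∈ V → ∃ W ⊆ V, x ∈ W ∧ Small W) :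
    FiberBundleCore X X G where
  baseSet := U
  isOpen_baseSet i := (hU i).isOpen
  indexAt := id
  mem_baseSet_at := hmem
  coordChange i j y g := (c.trp U j y)⁻¹ * c.trp U i y * g
  coordChange_self i x _ g := by simp
  continuousOn_coordChange i j := by
    rintro ⟨y, g⟩ ⟨hy, -⟩
    obtain ⟨W, hWV, hyW, hW⟩ := hb y (U i ∩ U j) ((hU i).isOpen.inter (hU j).isOpen) hy
    refine ContinuousAt.continuousWithinAt ?_
    have h1 : ContinuousAt (fun p : X × G => (c.trp U j y)⁻¹ * c.trp U i y * p.2) (y, g) :=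
      ((continuous_of_discreteTopology
        (f := fun g : G => (c.trp U j y)⁻¹ * c.trp U i y * g)).comp continuous_snd).continuousAt
    refine h1.congr ?_
    have h2 : ∀ᶠ p : X × G in 𝓝 (y, g), p.1 ∈ W :=
      continuous_fst.continuousAt.eventually (hW.isOpen.mem_nhds hyW)
    filter_upwards [h2] with p hp
    have jp := hW.isPathConnected.joinedIn y hyW p.1 hp
    rw [c.trp_eq hU hmem jp.somePath fun s => (hWV (jp.somePath_mem s)).2,
      c.trp_eq hU hmem jp.somePath fun s => (hWV (jp.somePath_mem s)).1]
    group
  coordChange_comp i j k x _ g := by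
    group

section

variable (hb : ∀ (x : X) (V : Set X), IsOpen V → x ∈ V → ∃ W ⊆ V, x ∈ W ∧ Small W)

/-- The total space of the bundle of a cocycle. -/
abbrev Cov : Type := (c.bundleCore hU hmem hb).TotalSpace

/-- The coordinate of a point of the covering space in its fibre. -/
def coord (e : c.Cov hU hmem hb) : G := e.2

theorem isCoveringMap_cov : IsCoveringMap (c.bundleCore hU hmem hb).proj :=
  FiberBundle.isCoveringMap (F := G) (E := (c.bundleCore hU hmem hb).Fiber)

/-- Along a path in the covering space, the fibre coordinate changes by the value of the cocycle
on the projected path. -/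
theorem coord_path {e e' : c.Cov hU hmem hb} (Γ : Path e e') :
    c.coord hU hmem hb e' =
      c.pv (Γ.map (c.isCoveringMap_cov hU hmem hb).continuous) * c.coord hU hmem hb e := by
  obtain ⟨⟨Γ, hΓ⟩, rfl, rfl⟩ := Γ
  have := simplyConnectedSpace_unitInterval
  have hcov := c.isCoveringMap_cov hU hmem hb
  let Z := c.bundleCore hU hmem hb
  let γ : C(I, X) := ⟨fun s => Z.proj (Γ s), hcov.continuous.comp hΓ⟩
  -- The transport along the restriction of the projected path to `[s, t]`.
  let κ : ∀ s t : I, G := fun s t => c.pv ((PathConnectedSpace.somePath s t).map γ.continuous)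
  have hκ : ∀ s t (δ : Path s t), κ s t = c.pv (δ.map γ.continuous) := fun s t δ =>
    c.pv_congr ((SimplyConnectedSpace.paths_homotopic _ δ).map γ)
  have hκt : ∀ s t u, κ s u = κ t u * κ s t := fun s t u => by
    rw [hκ s u ((PathConnectedSpace.somePath s t).trans (PathConnectedSpace.somePath t u)),
      Path.map_trans, c.pv_trans]
  let f : I → G := fun s => (κ 0 s)⁻¹ * c.coord hU hmem hb (Γ s)
  have hf : IsLocallyConstant f := by
    rw [IsLocallyConstant.iff_eventually_eq]
    intro s₀
    let i : X := γ s₀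
    have hsrc : ∀ᶠ s in 𝓝 s₀, Γ s ∈ (Z.localTriv i).source :=
      hΓ.continuousAt.eventually ((Z.localTriv i).open_source.mem_nhds
        ((Z.mem_localTriv_source i _).2 (hmem i)))
    have hcont : ContinuousAt (fun s => ((Z.localTriv i) (Γ s)).2) s₀ :=
      continuousAt_snd.comp (((Z.localTriv i).continuousAt
        ((Z.mem_localTriv_source i _).2 (hmem i))).comp hΓ.continuousAt)
    have hconst := hcont.eventually (isOpen_discrete {((Z.localTriv i) (Γ s₀)).2} |>.mem_nhds rfl)
    have hUi : ∀ᶠ s in 𝓝 s₀, γ s ∈ U i :=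
      γ.continuous.continuousAt.eventually ((hU i).isOpen.mem_nhds (hmem i))
    have hjoin := eventually_joinedIn_unitInterval s₀ _ hUi
    filter_upwards [hsrc, hconst, hjoin] with s hs1 hs2 hs3
    have hs2' : (c.trp U i (γ s))⁻¹ * c.trp U (γ s) (γ s) * c.coord hU hmem hb (Γ s) =
        (c.trp U i i)⁻¹ * c.trp U i i * c.coord hU hmem hb (Γ s₀) := hs2
    rw [c.trp_self hU hmem, c.trp_self hU hmem] at hs2'
    have h1 : c.trp U i (γ s) = κ s₀ s := by
      have := c.trp_eq hU hmem (i := i) (hs3.somePath.map γ.continuous) fun u => hs3.somePath_mem u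
      rw [this, hκ s₀ s hs3.somePath]
      change _ * c.trp U i i = _
      rw [c.trp_self hU hmem, mul_one]
    rw [h1] at hs2'
    have h2 : c.coord hU hmem hb (Γ s) = κ s₀ s * c.coord hU hmem hb (Γ s₀) := by
      rw [mul_one, inv_one, one_mul, one_mul, inv_mul_eq_iff_eq_mul] at hs2'
      exact hs2'
    change (κ 0 s)⁻¹ * _ = (κ 0 s₀)⁻¹ * _
    rw [h2, hκt 0 s₀ s]
    group
  have h01 : f 1 = f 0 := hf.apply_eq_of_preconnectedSpace 1 0
  have h0 : f 0 = c.coord hU hmem hb (Γ 0) := by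
    change (κ 0 0)⁻¹ * _ = _
    rw [hκ 0 0 (Path.refl 0)]
    have : (Path.refl (0 : I)).map γ.continuous = Path.refl (γ 0) := by ext; rfl
    rw [this]
    have := c.val_refl (γ 0)
    change (c.val (.refl (γ 0)))⁻¹ * _ = _
    rw [this, inv_one, one_mul]
  have h1 : f 1 = (κ 0 1)⁻¹ * c.coord hU hmem hb (Γ 1) := rfl
  rw [hκ 0 1 ⟨ContinuousMap.id I, rfl, rfl⟩] at h1
  rw [h1, h0, inv_mul_eq_iff_eq_mul] at h01
  exact h01

end

end PathCocycle

variable [PathConnectedSpace X] {x₀ : X}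

/-- The path used to move the base point. -/
def baseHom (x₀ x : X) : FundamentalGroupoid.mk x₀ ⟶ FundamentalGroupoid.mk x :=
  Path.Homotopic.Quotient.mk (PathConnectedSpace.somePath x₀ x)

/-- The extension of a homomorphism from the fundamental group to the fundamental groupoid. -/
def cocycleOfHom (φ : FundamentalGroup X x₀ →* G) : PathCocycle X G where
  val {x y} α := φ (baseHom x₀ x ≫ (α : FundamentalGroupoid.mk x ⟶ FundamentalGroupoid.mk y) ≫
    Groupoid.inv (baseHom x₀ y) : FundamentalGroupoid.mk x₀ ⟶ FundamentalGroupoid.mk x₀)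
  val_trans {x y z} α β := by
    rw [← map_mul]
    congr 1
    change baseHom x₀ x ≫ ((α : FundamentalGroupoid.mk x ⟶ FundamentalGroupoid.mk y) ≫
        (β : FundamentalGroupoid.mk y ⟶ FundamentalGroupoid.mk z)) ≫ Groupoid.inv (baseHom x₀ z) =
      (baseHom x₀ x ≫ (α : FundamentalGroupoid.mk x ⟶ FundamentalGroupoid.mk y) ≫
        Groupoid.inv (baseHom x₀ y)) ≫
      (baseHom x₀ y ≫ (β : FundamentalGroupoid.mk y ⟶ FundamentalGroupoid.mk z) ≫
        Groupoid.inv (baseHom x₀ z))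
    simp

/-- Every surjection `φ` from the fundamental group of a path connected, locally simply connected
space to a group `G` is the monodromy of a connected covering space with fibre `G`, whose
fundamental group is the kernel of `φ`. -/
theorem exists_covering_of_hom
    (hb : ∀ (x : X) (V : Set X), IsOpen V → x ∈ V → ∃ W ⊆ V, x ∈ W ∧ Small W)
    (φ : FundamentalGroup X x₀ →* G) (hφ : Function.Surjective φ) :
    ∃ (E : Type) (_ : TopologicalSpace E) (proj : E → X),
      IsCoveringMap proj ∧ ConnectedSpace E ∧
      (∀ b, Nat.card (proj ⁻¹' {b}) = Nat.card G) ∧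
      (∀ e : E, Nonempty (FundamentalGroup E e ≃* φ.ker)) := by
  let _ : TopologicalSpace G := ⊥
  have : DiscreteTopology G := ⟨rfl⟩
  choose U _ hmem hU using fun x => hb x Set.univ isOpen_univ trivial
  let c := cocycleOfHom φ
  let Z := c.bundleCore hU hmem hb
  have hcov : IsCoveringMap Z.proj := c.isCoveringMap_cov hU hmem hb
  -- Paths lift to the covering space with any prescribed origin.
  have hlift : ∀ (e : Z.TotalSpace) (y : X) (γ : Path (Z.proj e) y),
      ∃ (e' : Z.TotalSpace) (Γ : Path e e') (h : Z.proj e' = y),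
        Γ.map hcov.continuous = γ.cast rfl h := by
    intro e y γ
    have h0 : γ.toContinuousMap 0 = Z.proj e := γ.source
    let Γ := hcov.liftPath γ.toContinuousMap e h0
    have hΓ : ∀ s, Z.proj (Γ s) = γ s := fun s =>
      congrFun (hcov.liftPath_lifts γ.toContinuousMap e h0) s
    refine ⟨Γ 1, ⟨Γ, hcov.liftPath_zero γ.toContinuousMap e h0, rfl⟩, (hΓ 1).trans γ.target, ?_⟩
    ext s
    exact hΓ s
  have hval : ∀ (e : Z.TotalSpace) (y : X) (γ : Path (Z.proj e) y),
      ∃ (e' : Z.TotalSpace) (Γ : Path e e') (h : Z.proj e' = y),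
        Γ.map hcov.continuous = γ.cast rfl h ∧
        c.coord hU hmem hb e' = c.pv γ * c.coord hU hmem hb e := by
    intro e y γ
    obtain ⟨e', Γ, rfl, hΓ⟩ := hlift e y γ
    refine ⟨e', Γ, rfl, hΓ, ?_⟩
    have := c.coord_path hU hmem hb Γ
    rw [hΓ] at this
    exact this
  have hext : ∀ e e' : Z.TotalSpace, Z.proj e = Z.proj e' →
      c.coord hU hmem hb e = c.coord hU hmem hb e' → e = e' := by
    rintro ⟨x, g⟩ ⟨y, h⟩ rfl hgh
    exact congrArg (Bundle.TotalSpace.mk _) hgh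
  have hpath : PathConnectedSpace Z.TotalSpace := by
    refine ⟨⟨⟨x₀, (1 : G)⟩⟩, fun e e' => ?_⟩
    obtain ⟨l, hl⟩ := hφ (c.coord hU hmem hb e' * (c.coord hU hmem hb e)⁻¹)
    let α : FundamentalGroupoid.mk (Z.proj e) ⟶ FundamentalGroupoid.mk (Z.proj e') :=
      Groupoid.inv (baseHom x₀ _) ≫
        (l : FundamentalGroupoid.mk x₀ ⟶ FundamentalGroupoid.mk x₀) ≫ baseHom x₀ _
    obtain ⟨γ, hγ⟩ := Quotient.exists_rep (α : Path.Homotopic.Quotient _ _)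
    obtain ⟨e'', Γ, h1, -, h2⟩ := hval e _ γ
    have h3 : c.pv γ = c.coord hU hmem hb e' * (c.coord hU hmem hb e)⁻¹ := by
      rw [← hl]
      have : (Path.Homotopic.Quotient.mk γ) = α := hγ
      rw [PathCocycle.pv, this]
      change φ (baseHom x₀ _ ≫ α ≫ Groupoid.inv (baseHom x₀ _)) = φ l
      congr 1
      simp [α]
    rw [h3, inv_mul_cancel_right] at h2
    rw [← hext e'' e' h1 h2]
    exact ⟨Γ⟩
  refine ⟨Z.TotalSpace, inferInstance, Z.proj, hcov, inferInstance, fun b => ?_, fun e => ?_⟩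
  · refine Nat.card_congr ⟨fun e => c.coord hU hmem hb e.1, fun g => ⟨⟨b, g⟩, rfl⟩, ?_, fun g => rfl⟩
    rintro ⟨e, he⟩
    exact Subtype.ext (hext _ _ (Eq.symm he) rfl)
  · let P : C(Z.TotalSpace, X) := ⟨Z.proj, hcov.continuous⟩
    let iso : FundamentalGroupoid.mk (P e) ≅ FundamentalGroupoid.mk x₀ :=
      ⟨Groupoid.inv (baseHom x₀ (P e)), baseHom x₀ (P e), by simp, by simp⟩
    let ψ : FundamentalGroup Z.TotalSpace e →* FundamentalGroup X x₀ :=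
      iso.conj.toMonoidHom.comp (FundamentalGroup.map P e)
    have hψ : ∀ α : Path.Homotopic.Quotient e e,
        φ (ψ α) = c.val (Path.Homotopic.Quotient.map α P) := fun α => rfl
    have hinj : Function.Injective ψ := by
      intro α β h
      exact hcov.injective_path_homotopic_map e e (iso.conj.injective h)
    have hker : ∀ α, ψ α ∈ φ.ker := by
      rintro ⟨Γ⟩
      have h1 := c.coord_path hU hmem hb Γ
      rw [MonoidHom.mem_ker]
      refine (hψ _).trans ?_
      exact right_eq_mul.1 h1
    have hsurj : ∀ β ∈ φ.ker, ∃ α, ψ α = β := by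
      intro β hβ
      let α : FundamentalGroupoid.mk (P e) ⟶ FundamentalGroupoid.mk (P e) := iso.conj.symm β
      obtain ⟨γ, hγ⟩ := Quotient.exists_rep (α : Path.Homotopic.Quotient _ _)
      obtain ⟨e', Γ, h1, h2, h3⟩ := hval e _ γ
      have h4 : c.pv γ = 1 := by
        have h5 : (Path.Homotopic.Quotient.mk γ) = α := hγ
        rw [PathCocycle.pv, h5]
        change φ (iso.conj α) = 1
        rw [MulEquiv.apply_symm_apply]
        exact hβ
      rw [h4, one_mul] at h3
      obtain rfl := hext e' e h1 h3
      refine ⟨Path.Homotopic.Quotient.mk Γ, ?_⟩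
      rw [← iso.conj.apply_symm_apply β]
      change iso.conj _ = _
      congr 1
      exact (congrArg Path.Homotopic.Quotient.mk h2).trans hγ
    exact ⟨MulEquiv.ofBijective (ψ.codRestrict φ.ker hker)
      ⟨fun α β h => hinj (congrArg Subtype.val h),
        fun β => (hsurj β.1 β.2).imp fun α h => Subtype.ext h⟩⟩

end CoveringOfHom

end

section

/-! ### The complement of a plane curve is path connected and locally simply connected -/

/-- A simply connected open piece is small. -/
theorem small_range {X Y : Type} [TopologicalSpace X] [TopologicalSpace Y] [SimplyConnectedSpace Y]
    {k : Y → X} (hk : Topology.IsOpenEmbedding k) : Small (Set.range k) where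
  isOpen := hk.isOpen_range
  isPathConnected := isPathConnected_range hk.continuous
  homotopic := by
    intro y z γ γ' hγ hγ'
    obtain ⟨y, rfl⟩ : y ∈ Set.range k := by simpa using hγ 0
    obtain ⟨z, rfl⟩ : z ∈ Set.range k := by simpa using hγ 1
    have key : ∀ γ : Path (k y) (k z), (∀ s, γ s ∈ Set.range k) →
        ∃ δ : Path y z, δ.map hk.continuous = γ := by
      intro γ hγ
      choose δ hδ using hγ
      refine ⟨⟨⟨δ, ?_⟩, hk.injective (by rw [hδ, γ.source]), hk.injective (by rw [hδ, γ.target])⟩,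
        ?_⟩
      · rw [hk.isEmbedding.continuous_iff]
        exact γ.continuous.congr fun s => (hδ s).symm
      · ext s
        exact hδ s
    obtain ⟨δ, rfl⟩ := key γ hγ
    obtain ⟨δ', rfl⟩ := key γ' hγ'
    exact (SimplyConnectedSpace.paths_homotopic δ δ').map ⟨k, hk.continuous⟩

variable {d : ℕ} {f : MvPolynomial (Fin 3) ℂ} {D : Set ProjPlane}

/-- Balls in affine charts are simply connected. -/
theorem exists_small_subset (hf : f.IsHomogeneous d) (hD : D = curveSet f) (x : ↥Dᶜ)
    (V : Set ↥Dᶜ) (hV : IsOpen V) (hx : x ∈ V) : ∃ W ⊆ V, x ∈ W ∧ Small W := by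
  have hDo : IsOpen Dᶜ := by rw [hD]; exact (isClosed_curveSet hf).isOpen_compl
  obtain ⟨v, hv⟩ := pt_surjective x.1
  obtain ⟨i, hi⟩ : ∃ i, v.1 i ≠ 0 := Function.ne_iff.1 v.2
  let j := chart (ContinuousLinearEquiv.refl ℂ (Fin 3 → ℂ)) i
  have hj : Topology.IsOpenEmbedding j := isOpenEmbedding_chart _ i
  obtain ⟨q, hq⟩ : ∃ q, j q = x.1 := ⟨_, (pt_eq_chart (.refl ℂ _) i v hi).symm.trans hv⟩
  obtain ⟨V', hV', rfl⟩ : ∃ V', IsOpen V' ∧ Subtype.val ⁻¹' V' = V := isOpen_induced_iff.1 hV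
  have hO : IsOpen (j ⁻¹' (V' ∩ Dᶜ)) := (hV'.inter hDo).preimage hj.continuous
  have hqO : q ∈ j ⁻¹' (V' ∩ Dᶜ) := by
    rw [Set.mem_preimage, hq]
    exact ⟨hx, x.2⟩
  obtain ⟨ε, hε, hb⟩ := Metric.isOpen_iff.1 hO q hqO
  let k : Metric.ball q ε → ↥Dᶜ := fun b => ⟨j b, (hb b.2).2⟩
  have hk : Topology.IsOpenEmbedding k :=
    .of_comp k hDo.isOpenEmbedding_subtypeVal
      (hj.comp Metric.isOpen_ball.isOpenEmbedding_subtypeVal)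
  have := (convex_ball q ε).contractibleSpace ⟨q, Metric.mem_ball_self hε⟩
  have := SimplyConnectedSpace.ofContractible (Metric.ball q ε)
  refine ⟨Set.range k, ?_, ⟨⟨q, Metric.mem_ball_self hε⟩, Subtype.ext hq⟩, small_range hk⟩
  rintro _ ⟨b, rfl⟩
  exact (hb b.2).1

/-- The restriction of `f` to a parametrised line is a polynomial in the parameter. -/
theorem exists_line_polynomial (f : MvPolynomial (Fin 3) ℂ) (v w : Fin 3 → ℂ) :
    ∃ P : Polynomial ℂ, ∀ t : ℂ, P.eval t = MvPolynomial.eval (fun i => v i + t * (w i - v i)) f := by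
  refine ⟨MvPolynomial.aeval
    (fun i => Polynomial.C (v i) + Polynomial.X * Polynomial.C (w i - v i)) f, fun t => ?_⟩
  have : (Polynomial.aeval t).comp (MvPolynomial.aeval (R := ℂ)
      (fun i => Polynomial.C (v i) + Polynomial.X * Polynomial.C (w i - v i))) =
      MvPolynomial.aeval (fun i => v i + t * (w i - v i)) := by
    ext i
    simp
  have := DFunLike.congr_fun this f
  simpa [MvPolynomial.aeval_eq_eval] using this

/-- The line through two points of the complement meets the curve in finitely many points, and a complex
line without finitely many points is path connected. -/
theorem pathConnectedSpace_compl (hd : 0 < d) (hf : f.IsHomogeneous d) (hD : D = curveSet f)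
    (x₀ : ↥Dᶜ) : PathConnectedSpace ↥Dᶜ := by
  subst hD
  refine ⟨⟨x₀⟩, fun x y => ?_⟩
  obtain ⟨v, hv⟩ := pt_surjective x.1
  obtain ⟨w, hw⟩ := pt_surjective y.1
  have hfv : MvPolynomial.eval v.1 f ≠ 0 := fun h => x.2 (hv ▸ (pt_mem_curveSet hf).2 h)
  have hfw : MvPolynomial.eval w.1 f ≠ 0 := fun h => y.2 (hw ▸ (pt_mem_curveSet hf).2 h)
  obtain ⟨P, hP'⟩ := exists_line_polynomial f v.1 w.1
  obtain ⟨l, hl⟩ : ∃ l : ℂ → Fin 3 → ℂ, l = fun t i => v.1 i + t * (w.1 i - v.1 i) := ⟨_, rfl⟩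
  have hP : ∀ t, P.eval t = MvPolynomial.eval (l t) f := by rw [hl]; exact hP'
  have l0 : l 0 = v.1 := by ext i; simp [hl]
  have l1 : l 1 = w.1 := by ext i; simp [hl]
  have hP0 : P ≠ 0 := fun h => hfv (by rw [← l0, ← hP, h, Polynomial.eval_zero])
  obtain ⟨S, hS⟩ : ∃ S : Set ℂ, ∀ t, t ∈ S ↔ MvPolynomial.eval (l t) f = 0 :=
    ⟨{t | MvPolynomial.eval (l t) f = 0}, fun _ => Iff.rfl⟩
  have hfin : S.Countable := ((Polynomial.finite_setOfPred_isRoot hP0).subset fun t ht =>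
    (hP t).trans ((hS t).1 ht)).countable
  have hconn := hfin.isPathConnected_compl_of_one_lt_rank (by rw [Complex.rank_real_complex]; simp)
  have hne : ∀ t ∈ Sᶜ, MvPolynomial.eval (l t) f ≠ 0 := fun t ht h => ht ((hS t).2 h)
  have hl0 : ∀ t ∈ Sᶜ, l t ≠ 0 := fun t ht h => hne t ht (by
    have := eval_smul_of_homogeneous hf 0 (l t)
    rw [h, smul_zero, zero_pow hd.ne', zero_mul] at this
    rw [h, this])
  have hF0 : ∀ (t : ℂ) (ht : t ∈ Sᶜ), pt ⟨l t, hl0 t ht⟩ ∈ (curveSet f)ᶜ := fun t ht h => by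
    have := (pt_mem_curveSet (v := ⟨l t, hl0 t ht⟩) hf).1 h
    exact hne t ht this
  let F : ↥Sᶜ → ↥(curveSet f)ᶜ := fun t => ⟨pt ⟨l t, hl0 t t.2⟩, hF0 t t.2⟩
  have hF : Continuous F := by
    refine Continuous.subtype_mk (continuous_pt.comp (Continuous.subtype_mk ?_ _)) _
    rw [hl]
    fun_prop
  have h0 : (0 : ℂ) ∈ Sᶜ := fun h => hfv (by rw [← l0]; exact (hS 0).1 h)
  have h1 : (1 : ℂ) ∈ Sᶜ := fun h => hfw (by rw [← l1]; exact (hS 1).1 h)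
  obtain ⟨γ⟩ := (hconn.joinedIn 0 h0 1 h1).joined_subtype
  have hx : F ⟨0, h0⟩ = x := Subtype.ext ((congrArg pt (Subtype.ext l0)).trans hv)
  have hy : F ⟨1, h1⟩ = y := Subtype.ext ((congrArg pt (Subtype.ext l1)).trans hw)
  rw [← hx, ← hy]
  exact ⟨γ.map hF⟩

/-- A surjection onto a quotient group, precomposed with an isomorphism, has an isomorphic kernel. -/
theorem exists_surjective_ker_equiv {H K : Type*} [Group H] [Group K] {Q : Type*} [Group Q]
    (π : H ≃* K) (τ : K →* Q) (hτ : Function.Surjective τ) :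
    ∃ φ : H →* Q, Function.Surjective φ ∧ Nonempty (φ.ker ≃* τ.ker) := by
  refine ⟨τ.comp π.toMonoidHom, hτ.comp π.surjective, ?_⟩
  have h : (τ.comp π.toMonoidHom).ker.map π.toMonoidHom = τ.ker := by
    rw [← MonoidHom.comap_ker]
    exact Subgroup.map_comap_eq_self_of_surjective π.surjective _
  exact ⟨(π.subgroupMap _).trans (MulEquiv.subgroupCongr h)⟩

end

end PlaneCurve

/-- Let `D ⊂ ℙ²(ℂ)` be a plane projective curve with
`π₁(ℙ²(ℂ) ∖ D) ≅ 𝔽_r * ℤ/pℤ * ℤ/qℤ`, where `r ≥ 0`, `p, q ≥ 1` and `gcd(p,q) = 1`.  Then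
there is a connected covering space `E → ℙ²(ℂ) ∖ D` of degree `pq` such that `π₁(E)` is a
free group of rank `pqr + (p−1)(q−1)` and `χ(E) = pq·(3 − χ(D))`; consequently
`π_i(ℙ²(ℂ) ∖ D) ≅ π_i(E)` for all `i ≥ 2`. -/
theorem exists_coveringSpace_of_pi1_freeProdFreeCyclicCyclic
    (d : ℕ) (hd : 0 < d) (f : MvPolynomial (Fin 3) ℂ)
    (hf : f.IsHomogeneous d) (hsq : Squarefree f)
    (D : Set ProjPlane) (hD : D = curveSet f)
    (r p q : ℕ) (hp : 1 ≤ p) (hq : 1 ≤ q) (hpq : Nat.Coprime p q) (x₀ : ↥Dᶜ)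
    (hπ : Nonempty (FundamentalGroup ↥Dᶜ x₀ ≃* FreeProdFreeCyclicCyclic r p q)) :
    ∃ (E : Type) (_ : TopologicalSpace E) (proj : E → ↥Dᶜ),
      IsCoveringMap proj ∧ ConnectedSpace E ∧
      (∀ b : ↥Dᶜ, Nat.card (proj ⁻¹' {b}) = p * q) ∧
      (∀ e : E, Nonempty
        (FundamentalGroup E e ≃* FreeGroup (Fin (p * q * r + (p - 1) * (q - 1))))) ∧
      eulerChar E = (p * q : ℤ) * (3 - eulerCharSet D) ∧
      (∀ (e : E) (i : ℕ), Nonempty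
        (HomotopyGroup (Fin (i + 2)) ↥Dᶜ (proj e) ≃* HomotopyGroup (Fin (i + 2)) E e)) := by
  open PlaneCurve in
  obtain ⟨π⟩ := hπ
  have := pathConnectedSpace_compl hd hf hD x₀
  obtain ⟨φ, hφ, ⟨κ'⟩⟩ := exists_surjective_ker_equiv π _
    (toProd_surjective (ρ := Fin r) (A := Multiplicative (ZMod p)) (B := Multiplicative (ZMod q)))
  obtain ⟨E, tE, proj, hcov, hconn, hcard, hker⟩ :=
    exists_covering_of_hom (exists_small_subset hf hD) φ hφ
  have hcard' : ∀ b, Nat.card (proj ⁻¹' {b}) = p * q := fun b => by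
    rw [hcard b, Nat.card_prod]
    exact congrArg₂ _ (Nat.card_zmod p) (Nat.card_zmod q)
  refine ⟨E, tE, proj, hcov, hconn, hcard', fun e => ?_, ?_,
    fun e i => nonempty_homotopyGroup_mulEquiv hcov e i⟩
  · obtain ⟨κ⟩ := hker e
    obtain ⟨k⟩ := nonempty_ker_mulEquiv r p q hp hq
    exact ⟨κ.trans (κ'.trans k)⟩
  · have := eulerChar_covering hd hf hsq hD hcov (Nat.mul_pos hp hq) hcard'
    exact_mod_cast this

end
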